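/- arXiv:2506.24058 — 7 statements merged into one kernel-verified Lean document; each statement's English description precedes it below -/
import Mathlib

section
/- Let n ≥ 1. Assume g : [0,∞) → ℝ is C² with g(t) > 0 and g'(t) > 0 for all t, ∫₀^∞ 1/g(τ) dτ < ∞, and, with G(t) = ½∫₀ᵗ g(τ) dτ, there are constants C₁, C₂ > 0 with |g'(t)| ≤ C₁ g(t)²/G(t) and |g''(t)| ≤ C₂ g(t)³/G(t)² for all t > 0. Assume b : [0,∞) → ℝ is C¹ with b(t) > 0, b'(t) < 0, ∫₀^∞ b(τ) dτ < ∞, b(t) ≤ C̃ g(t)/G(t) for all t > 0 (some C̃ > 0), and |b'(t)| ≤ c·b(t)/(1+t) for all t (some c > 0). Then for every real σ ≥ 2 there is a constant C > 0 such that every Fourier solution û with data û₀, û₁ satisfies, for all t ≥ 0 (whenever the data integrals are finite): (∫_{ℝⁿ} |ξ|^{2σ} |û(t,ξ)|² dξ)^{1/2} ≤ C [ (∫ |ξ|^{2σ} |û₀(ξ)|² dξ)^{1/2} + (∫ |ξ|^{2(σ−2)} |û₁(ξ)|² dξ)^{1/2} ] and (∫ |ξ|^{2(σ−2)} |∂ₜû(t,ξ)|²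 dξ)^{1/2} ≤ C g(t) [ (∫ |ξ|^{2σ} |û₀(ξ)|² dξ)^{1/2} + (∫ |ξ|^{2(σ−2)} |û₁(ξ)|² dξ)^{1/2} ]. -/
open MeasureTheory Filter

/-- Regularised norm: derivative. -/
lemma regNorm_hasDerivAt {f : ℝ → ℂ} {f' : ℂ} {t ε : ℝ} (hε : 0 < ε) (hf : HasDerivAt f f' t) :
    HasDerivAt (fun s => Real.sqrt (ε ^ 2 + ‖f s‖ ^ 2))
      (inner ℝ (f t) f' / Real.sqrt (ε ^ 2 + ‖f t‖ ^ 2)) t := by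
  have h := ((hf.norm_sq).const_add (ε ^ 2)).sqrt (by positivity)
  convert h using 1
  rw [mul_div_mul_left _ _ (two_ne_zero)]

/-- Pointwise estimate at a fixed frequency, regularised. -/
lemma pointwise_reg (b g : ℝ → ℝ) (hg_diff : Differentiable ℝ g)
    (hg_pos : ∀ t : ℝ, 0 ≤ t → 0 < g t)
    (hg' : ∀ t : ℝ, 0 ≤ t → 0 < deriv g t)
    (hb : ∀ t : ℝ, 0 ≤ t → 0 < b t)
    (Γ : ℝ → ℝ) (hΓ : ∀ t, 0 ≤ t → HasDerivAt Γ (g t)⁻¹ t) (hΓ0 : Γ 0 = 0)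
    (v : ℝ → ℂ) (hv : ContDiff ℝ 2 v) (r : ℝ)
    (hode : ∀ t, 0 ≤ t → deriv (deriv v) t + ((r ^ 2 : ℝ) : ℂ) * v t +
      ((b t + g t * r ^ 2 : ℝ) : ℂ) * deriv v t = 0) (ε : ℝ) (hε : 0 < ε) (t : ℝ) (ht : 0 ≤ t) :
    (r ^ 2 * Real.sqrt (ε ^ 2 + ‖v t‖ ^ 2) + Real.sqrt (ε ^ 2 + ‖deriv v t‖ ^ 2) / g t)
      * Real.exp (- Γ t) - r ^ 2 * ε * t ≤
    r ^ 2 * Real.sqrt (ε ^ 2 + ‖v 0‖ ^ 2) + Real.sqrt (ε ^ 2 + ‖deriv v 0‖ ^ 2) / g 0 := by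
  have hv1 : ∀ s, HasDerivAt v (deriv v s) s := fun s =>
    (hv.differentiable (by norm_num) s).hasDerivAt
  have hdv : ContDiff ℝ 1 (deriv v) := by
    have : ContDiff ℝ (1 + 1) v := by simpa [one_add_one_eq_two] using hv
    exact (contDiff_succ_iff_deriv.1 this).2.2
  have hv2 : ∀ s, HasDerivAt (deriv v) (deriv (deriv v) s) s := fun s =>
    (hdv.differentiable (by norm_num) s).hasDerivAt
  set F : ℝ → ℝ := fun t =>
    (r ^ 2 * Real.sqrt (ε ^ 2 + ‖v t‖ ^ 2) + Real.sqrt (ε ^ 2 + ‖deriv v t‖ ^ 2) / g t)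
      * Real.exp (- Γ t) - r ^ 2 * ε * t with hF
  have key : ∀ s, 0 ≤ s → ∃ d, HasDerivAt F d s ∧ d ≤ 0 := by
    intro s hs
    have hgs := hg_pos s hs
    have hX := regNorm_hasDerivAt hε (hv1 s)
    have hY := regNorm_hasDerivAt hε (hv2 s)
    have hE := ((hΓ s hs).neg).exp
    have hg1 := (hg_diff s).hasDerivAt
    have hD := ((((hX.const_mul (r ^ 2)).add (hY.div hg1 hgs.ne')).mul hE).sub
      ((hasDerivAt_id s).const_mul (r ^ 2 * ε)))
    refine ⟨_, hD, ?_⟩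
    simp only [Pi.add_apply, Pi.div_apply, Pi.neg_apply]
    set X := Real.sqrt (ε ^ 2 + ‖v s‖ ^ 2) with hXd
    set Y := Real.sqrt (ε ^ 2 + ‖deriv v s‖ ^ 2) with hYd
    have hXv : ‖v s‖ ≤ X := Real.le_sqrt_of_sq_le (by nlinarith)
    have hYv : ‖deriv v s‖ ≤ Y := Real.le_sqrt_of_sq_le (by nlinarith)
    have hXε : ε ≤ X := Real.le_sqrt_of_sq_le (by nlinarith [sq_nonneg ‖v s‖])
    have hYε : ε ≤ Y := Real.le_sqrt_of_sq_le (by nlinarith [sq_nonneg ‖deriv v s‖])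
    have hX0 : 0 < X := lt_of_lt_of_le hε hXε
    have hY0 : 0 < Y := lt_of_lt_of_le hε hYε
    have hYsq : Y ^ 2 = ε ^ 2 + ‖deriv v s‖ ^ 2 := Real.sq_sqrt (by positivity)
    have h1 : inner ℝ (v s) (deriv v s) / X ≤ Y := by
      rw [div_le_iff₀ hX0]
      have := real_inner_le_norm (v s) (deriv v s)
      have h2 : ‖v s‖ * ‖deriv v s‖ ≤ X * Y := by gcongr
      linarith
    have h2 : inner ℝ (deriv v s) (deriv (deriv v) s) / Y ≤ - (g s * r ^ 2) * (Y - ε) + r ^ 2 * X := by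
      rw [div_le_iff₀ hY0]
      have e : deriv (deriv v) s = (-(r ^ 2)) • v s + (-(b s + g s * r ^ 2)) • deriv v s := by
        have := hode s hs
        simp only [Complex.real_smul]
        push_cast at this ⊢
        linear_combination this
      rw [e, inner_add_right, real_inner_smul_right, real_inner_smul_right,
        real_inner_self_eq_norm_sq]
      have h3 := abs_real_inner_le_norm (deriv v s) (v s)
      have h3' := neg_abs_le (inner ℝ (deriv v s) (v s))
      have h4 : ‖deriv v s‖ * ‖v s‖ ≤ Y * X := by gcongr
      have h5 : -(inner ℝ (deriv v s) (v s)) ≤ Y * X := by linarith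
      have h6 := mul_le_mul_of_nonneg_left h5 (sq_nonneg r)
      have h7 : (Y - ε) * Y ≤ ‖deriv v s‖ ^ 2 := by nlinarith
      have h8 : 0 ≤ g s * r ^ 2 := by positivity
      have h9 := mul_le_mul_of_nonneg_left h7 h8
      have h10 : 0 ≤ b s * ‖deriv v s‖ ^ 2 := mul_nonneg (hb s hs).le (sq_nonneg _)
      nlinarith
    set A := inner ℝ (v s) (deriv v s) / X
    set B := inner ℝ (deriv v s) (deriv (deriv v) s) / Y
    have hg's := hg' s hs
    have hΓs : 0 ≤ Γ s := by
      have hm : MonotoneOn Γ (Set.Ici 0) := by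
        apply monotoneOn_of_deriv_nonneg (convex_Ici 0)
        · exact fun x hx => (hΓ x hx).continuousAt.continuousWithinAt
        · intro x hx
          rw [interior_Ici] at hx
          exact (hΓ x (le_of_lt hx)).differentiableAt.differentiableWithinAt
        · intro x hx
          rw [interior_Ici] at hx
          rw [(hΓ x (le_of_lt hx)).deriv]
          exact (inv_pos.2 (hg_pos x (le_of_lt hx))).le
      have := hm (Set.mem_Ici.2 le_rfl) hs hs
      rwa [hΓ0] at this
    have hexp : Real.exp (-Γ s) ≤ 1 := Real.exp_le_one_iff.2 (by linarith)
    have hexp0 := Real.exp_pos (-Γ s)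
    have h11 : r ^ 2 * A + (B * g s - Y * deriv g s) / g s ^ 2 ≤ r ^ 2 * ε + r ^ 2 * X / g s := by
      have : (B * g s - Y * deriv g s) / g s ^ 2 ≤ -(r ^ 2) * (Y - ε) + r ^ 2 * X / g s := by
        rw [div_le_iff₀ (by positivity)]
        have e : (-(r ^ 2) * (Y - ε) + r ^ 2 * X / g s) * g s ^ 2 =
          (- (g s * r ^ 2) * (Y - ε) + r ^ 2 * X) * g s := by field_simp
        rw [e]
        have := mul_le_mul_of_nonneg_right h2 hgs.le
        have := mul_pos hY0 hg's
        linarith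
      have := mul_le_mul_of_nonneg_left h1 (sq_nonneg r)
      linarith
    have h12 : r ^ 2 * X / g s ≤ (r ^ 2 * X + Y / g s) * (g s)⁻¹ := by
      rw [add_mul, div_eq_mul_inv]
      have : 0 ≤ Y / g s * (g s)⁻¹ := by positivity
      linarith
    have h13 : r ^ 2 * ε * Real.exp (-Γ s) ≤ r ^ 2 * ε := mul_le_of_le_one_right (by positivity) hexp
    have h14 := mul_le_mul_of_nonneg_right (h11.trans (add_le_add_right h12 _)) hexp0.le
    nlinarith
  have hanti : AntitoneOn F (Set.Ici 0) := by
    apply antitoneOn_of_deriv_nonpos (convex_Ici 0)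
    · intro x hx
      obtain ⟨d, hd, -⟩ := key x hx
      exact hd.continuousAt.continuousWithinAt
    · intro x hx
      rw [interior_Ici] at hx
      obtain ⟨d, hd, -⟩ := key x (le_of_lt hx)
      exact hd.differentiableAt.differentiableWithinAt
    · intro x hx
      rw [interior_Ici] at hx
      obtain ⟨d, hd, h⟩ := key x (le_of_lt hx)
      rw [hd.deriv]; exact h
  have := hanti (Set.mem_Ici.2 le_rfl) ht ht
  simpa [hF, hΓ0] using this

/-- Pointwise estimate at a fixed frequency. -/
lemma pointwise_est (b g : ℝ → ℝ) (hg_diff : Differentiable ℝ g)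
    (hg_pos : ∀ t : ℝ, 0 ≤ t → 0 < g t)
    (hg' : ∀ t : ℝ, 0 ≤ t → 0 < deriv g t)
    (hb : ∀ t : ℝ, 0 ≤ t → 0 < b t)
    (hg_int : IntegrableOn (fun t => (g t)⁻¹) (Set.Ici (0 : ℝ)))
    (v : ℝ → ℂ) (hv : ContDiff ℝ 2 v) (r : ℝ)
    (hode : ∀ t, 0 ≤ t → deriv (deriv v) t + ((r ^ 2 : ℝ) : ℂ) * v t +
      ((b t + g t * r ^ 2 : ℝ) : ℂ) * deriv v t = 0) (t : ℝ) (ht : 0 ≤ t) :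
    r ^ 2 * ‖v t‖ + ‖deriv v t‖ / g t ≤
      Real.exp (∫ s in Set.Ici (0 : ℝ), (g s)⁻¹) * (r ^ 2 * ‖v 0‖ + ‖deriv v 0‖ / g 0) := by
  set h : ℝ → ℝ := fun s => (g (max s 0))⁻¹ with hh
  have hc : Continuous h :=
    (hg_diff.continuous.comp (continuous_id.max continuous_const)).inv₀
      (fun s => (hg_pos _ (le_max_right _ _)).ne')
  set Γ : ℝ → ℝ := fun t => ∫ s in (0 : ℝ)..t, h s with hΓd
  have hΓ : ∀ t, 0 ≤ t → HasDerivAt Γ (g t)⁻¹ t := by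
    intro t ht
    have := hc.integral_hasStrictDerivAt 0 t
    have e : h t = (g t)⁻¹ := by simp [hh, ht]
    rw [← e]; exact this.hasDerivAt
  have hΓ0 : Γ 0 = 0 := by simp [hΓd]
  have hΓt : Γ t ≤ ∫ s in Set.Ici (0 : ℝ), (g s)⁻¹ := by
    have e : Γ t = ∫ s in Set.Ioc 0 t, (g s)⁻¹ := by
      simp only [hΓd]
      rw [intervalIntegral.integral_of_le ht]
      apply setIntegral_congr_fun measurableSet_Ioc
      intro s hs
      simp [hh, hs.1.le]
    rw [e]
    apply setIntegral_mono_set hg_int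
    · refine (ae_restrict_iff' measurableSet_Ici).2 (Eventually.of_forall fun s hs => ?_)
      exact (inv_pos.2 (hg_pos s hs)).le
    · exact (show Set.Ioc 0 t ⊆ Set.Ici 0 from fun s hs => hs.1.le).eventuallyLE
  have hreg := fun ε hε => pointwise_reg b g hg_diff hg_pos hg' hb Γ hΓ hΓ0 v hv r hode ε hε t ht
  have hlim : (r ^ 2 * Real.sqrt (0 ^ 2 + ‖v t‖ ^ 2) + Real.sqrt (0 ^ 2 + ‖deriv v t‖ ^ 2) / g t)
      * Real.exp (- Γ t) - r ^ 2 * 0 * t ≤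
    r ^ 2 * Real.sqrt (0 ^ 2 + ‖v 0‖ ^ 2) + Real.sqrt (0 ^ 2 + ‖deriv v 0‖ ^ 2) / g 0 := by
    have c1 : Continuous fun ε : ℝ =>
      (r ^ 2 * Real.sqrt (ε ^ 2 + ‖v t‖ ^ 2) + Real.sqrt (ε ^ 2 + ‖deriv v t‖ ^ 2) / g t)
      * Real.exp (- Γ t) - r ^ 2 * ε * t := by fun_prop
    have c2 : Continuous fun ε : ℝ =>
      r ^ 2 * Real.sqrt (ε ^ 2 + ‖v 0‖ ^ 2) + Real.sqrt (ε ^ 2 + ‖deriv v 0‖ ^ 2) / g 0 := by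
      fun_prop
    refine le_of_tendsto_of_tendsto
      ((c1.tendsto 0).mono_left (nhdsWithin_le_nhds (s := Set.Ioi 0)))
      ((c2.tendsto 0).mono_left (nhdsWithin_le_nhds (s := Set.Ioi 0))) ?_
    filter_upwards [self_mem_nhdsWithin] with ε hε using hreg ε hε
  simp only [ne_eq, OfNat.ofNat_ne_zero, not_false_eq_true, zero_pow, zero_add, norm_nonneg,
    Real.sqrt_sq, mul_zero, zero_mul, sub_zero] at hlim
  rw [Real.exp_neg, ← div_eq_mul_inv, div_le_iff₀ (Real.exp_pos _)] at hlim
  have hnn : 0 ≤ r ^ 2 * ‖v 0‖ + ‖deriv v 0‖ / g 0 := by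
    have := hg_pos 0 le_rfl
    positivity
  calc _ ≤ _ := hlim
    _ ≤ (r ^ 2 * ‖v 0‖ + ‖deriv v 0‖ / g 0) * Real.exp (∫ s in Set.Ici (0 : ℝ), (g s)⁻¹) := by
      gcongr
    _ = _ := mul_comm _ _

/-- From a pointwise bound to an `L²` bound. -/
lemma l2_of_pointwise {α : Type*} [MeasurableSpace α] {μ : Measure α} (f p q : α → ℝ) (K : ℝ)
    (hK : 0 ≤ K) (hf : ∀ x, 0 ≤ f x) (hp0 : ∀ x, 0 ≤ p x) (hq0 : ∀ x, 0 ≤ q x)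
    (hp : Integrable p μ) (hq : Integrable q μ)
    (h : ∀ x, f x ≤ 2 * K ^ 2 * (p x + q x)) :
    Real.sqrt (∫ x, f x ∂μ) ≤ 2 * K * (Real.sqrt (∫ x, p x ∂μ) + Real.sqrt (∫ x, q x ∂μ)) := by
  have h1 : ∫ x, f x ∂μ ≤ 2 * K ^ 2 * ((∫ x, p x ∂μ) + ∫ x, q x ∂μ) := by
    rw [← integral_add hp hq, ← integral_const_mul]
    exact integral_mono_of_nonneg (Eventually.of_forall hf) ((hp.add hq).const_mul _)
      (Eventually.of_forall h)
  have hP : 0 ≤ ∫ x, p x ∂μ := integral_nonneg hp0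
  have hQ : 0 ≤ ∫ x, q x ∂μ := integral_nonneg hq0
  apply Real.sqrt_le_iff.2
  refine ⟨by positivity, h1.trans ?_⟩
  have e1 := Real.sq_sqrt hP
  have e2 := Real.sq_sqrt hQ
  set P := Real.sqrt (∫ x, p x ∂μ)
  set Q := Real.sqrt (∫ x, q x ∂μ)
  rw [← e1, ← e2]
  have hP' : 0 ≤ P := Real.sqrt_nonneg _
  have hQ' : 0 ≤ Q := Real.sqrt_nonneg _
  have : P ^ 2 + Q ^ 2 ≤ 2 * (P + Q) ^ 2 := by nlinarith [mul_nonneg hP' hQ']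
  nlinarith [mul_le_mul_of_nonneg_left this (sq_nonneg K)]

/-- Theorem 2.1 of the paper: scattering-producing friction `b(t)uₜ` together with an
increasing viscoelastic coefficient `g = g(t)`.  Higher-order energy estimates for
Fourier solutions of `∂ₜ²uh + |ξ|²uh + (b(t)+g(t)|ξ|²)∂ₜuh = 0`. -/
theorem scattering_increasing_viscoelastic_decay
    (n : ℕ) (hn : 1 ≤ n)
    (b g G : ℝ → ℝ)
    (hg_smooth : ContDiff ℝ 2 g)
    (hg_pos : ∀ t : ℝ, 0 ≤ t → 0 < g t)
    (hg_deriv_pos : ∀ t : ℝ, 0 ≤ t → 0 < deriv g t)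
    (hg_int : IntegrableOn (fun t => (g t)⁻¹) (Set.Ici (0 : ℝ)))
    (hG : ∀ t : ℝ, G t = (1 / 2) * ∫ τ in (0 : ℝ)..t, g τ)
    (C₁ C₂ : ℝ) (hC₁ : 0 < C₁) (hC₂ : 0 < C₂)
    (hg1 : ∀ t : ℝ, 0 < t → |deriv g t| ≤ C₁ * (g t) ^ 2 / G t)
    (hg2 : ∀ t : ℝ, 0 < t → |deriv (deriv g) t| ≤ C₂ * (g t) ^ 3 / (G t) ^ 2)
    (hb_smooth : ContDiff ℝ 1 b)
    (hb_pos : ∀ t : ℝ, 0 ≤ t → 0 < b t)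
    (hb_deriv_neg : ∀ t : ℝ, 0 ≤ t → deriv b t < 0)
    (hb_int : IntegrableOn b (Set.Ici (0 : ℝ)))
    (Ctil : ℝ) (hCtil : 0 < Ctil)
    (hbG : ∀ t : ℝ, 0 < t → b t ≤ Ctil * g t / G t)
    (c : ℝ) (hc : 0 < c)
    (hb1 : ∀ t : ℝ, 0 ≤ t → |deriv b t| ≤ c * b t / (1 + t)) :
    ∀ σ : ℝ, 2 ≤ σ →
      ∃ C : ℝ, 0 < C ∧
        ∀ (uh : ℝ → EuclideanSpace ℝ (Fin n) → ℂ)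
          (u₀ u₁ : EuclideanSpace ℝ (Fin n) → ℂ),
          Measurable (fun p : ℝ × EuclideanSpace ℝ (Fin n) => uh p.1 p.2) →
          (∀ ξ : EuclideanSpace ℝ (Fin n), ContDiff ℝ 2 (fun s => uh s ξ)) →
          (∀ (ξ : EuclideanSpace ℝ (Fin n)) (t : ℝ), 0 ≤ t →
            deriv (deriv (fun s => uh s ξ)) t + ((‖ξ‖ ^ 2 : ℝ) : ℂ) * uh t ξ +
              ((b t + g t * ‖ξ‖ ^ 2 : ℝ) : ℂ) * deriv (fun s => uh s ξ) t = 0) →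
          (∀ ξ : EuclideanSpace ℝ (Fin n), uh 0 ξ = u₀ ξ) →
          (∀ ξ : EuclideanSpace ℝ (Fin n), deriv (fun s => uh s ξ) 0 = u₁ ξ) →
          ∀ t : ℝ, 0 ≤ t →
            Integrable (fun ξ : EuclideanSpace ℝ (Fin n) =>
              ‖ξ‖ ^ (2 * σ) * ‖u₀ ξ‖ ^ 2) →
            Integrable (fun ξ : EuclideanSpace ℝ (Fin n) =>
              ‖ξ‖ ^ (2 * (σ - 2)) * ‖u₁ ξ‖ ^ 2) →
            Real.sqrt (∫ ξ : EuclideanSpace ℝ (Fin n), ‖ξ‖ ^ (2 * σ) * ‖uh t ξ‖ ^ 2) ≤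
                C * (Real.sqrt (∫ ξ : EuclideanSpace ℝ (Fin n), ‖ξ‖ ^ (2 * σ) * ‖u₀ ξ‖ ^ 2) +
                  Real.sqrt (∫ ξ : EuclideanSpace ℝ (Fin n),
                    ‖ξ‖ ^ (2 * (σ - 2)) * ‖u₁ ξ‖ ^ 2)) ∧
              Real.sqrt (∫ ξ : EuclideanSpace ℝ (Fin n),
                  ‖ξ‖ ^ (2 * (σ - 2)) * ‖deriv (fun s => uh s ξ) t‖ ^ 2) ≤
                C * g t *
                  (Real.sqrt (∫ ξ : EuclideanSpace ℝ (Fin n), ‖ξ‖ ^ (2 * σ) * ‖u₀ ξ‖ ^ 2) +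
                    Real.sqrt (∫ ξ : EuclideanSpace ℝ (Fin n),
                      ‖ξ‖ ^ (2 * (σ - 2)) * ‖u₁ ξ‖ ^ 2)) := by
  intro σ hσ
  have hg0 := hg_pos 0 le_rfl
  set K : ℝ := Real.exp (∫ s in Set.Ici (0 : ℝ), (g s)⁻¹) * (1 + (g 0)⁻¹) with hKd
  have hK : 0 < K := by positivity
  refine ⟨2 * K, by positivity, ?_⟩
  intro uh u₀ u₁ _ hsm hode h0 h1 t ht hi0 hi1
  have hgt := hg_pos t ht
  have hpt : ∀ ξ : EuclideanSpace ℝ (Fin n),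
      ‖ξ‖ ^ 2 * ‖uh t ξ‖ + ‖deriv (fun s => uh s ξ) t‖ / g t ≤
        K * (‖ξ‖ ^ 2 * ‖u₀ ξ‖ + ‖u₁ ξ‖) := by
    intro ξ
    have := pointwise_est b g (hg_smooth.differentiable (by norm_num)) hg_pos hg_deriv_pos hb_pos
      hg_int (fun s => uh s ξ) (hsm ξ) ‖ξ‖ (hode ξ) t ht
    rw [h0 ξ, h1 ξ] at this
    refine this.trans ?_
    rw [hKd, mul_assoc]
    gcongr
    have a1 : 0 ≤ (g 0)⁻¹ * (‖ξ‖ ^ 2 * ‖u₀ ξ‖) := by positivity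
    have a2 := norm_nonneg (u₁ ξ)
    rw [div_eq_mul_inv]
    nlinarith
  have hw : ∀ ξ : EuclideanSpace ℝ (Fin n),
      ‖ξ‖ ^ (2 * σ) = ‖ξ‖ ^ (2 * (σ - 2)) * (‖ξ‖ ^ 2) ^ 2 := by
    intro ξ
    rw [show 2 * σ = 2 * (σ - 2) + (4 : ℕ) by push_cast; ring,
      Real.rpow_add_of_nonneg (norm_nonneg _) (by linarith) (by positivity), Real.rpow_natCast]
    ring
  have hsq : ∀ (ξ : EuclideanSpace ℝ (Fin n)) (y L : ℝ), 0 ≤ y →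
      y ≤ L * (‖ξ‖ ^ 2 * ‖u₀ ξ‖ + ‖u₁ ξ‖) →
      ‖ξ‖ ^ (2 * (σ - 2)) * y ^ 2 ≤ 2 * L ^ 2 *
        (‖ξ‖ ^ (2 * σ) * ‖u₀ ξ‖ ^ 2 + ‖ξ‖ ^ (2 * (σ - 2)) * ‖u₁ ξ‖ ^ 2) := by
    intro ξ y L hy hyL
    have hw0 : 0 ≤ ‖ξ‖ ^ (2 * (σ - 2)) := Real.rpow_nonneg (norm_nonneg _) _
    have a1 : y ^ 2 ≤ (L * (‖ξ‖ ^ 2 * ‖u₀ ξ‖ + ‖u₁ ξ‖)) ^ 2 := pow_le_pow_left₀ hy hyL 2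
    have a2 : (L * (‖ξ‖ ^ 2 * ‖u₀ ξ‖ + ‖u₁ ξ‖)) ^ 2 ≤
        2 * L ^ 2 * ((‖ξ‖ ^ 2 * ‖u₀ ξ‖) ^ 2 + ‖u₁ ξ‖ ^ 2) := by
      nlinarith [sq_nonneg (L * (‖ξ‖ ^ 2 * ‖u₀ ξ‖ - ‖u₁ ξ‖))]
    calc _ ≤ ‖ξ‖ ^ (2 * (σ - 2)) * (2 * L ^ 2 * ((‖ξ‖ ^ 2 * ‖u₀ ξ‖) ^ 2 + ‖u₁ ξ‖ ^ 2)) :=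
          mul_le_mul_of_nonneg_left (a1.trans a2) hw0
      _ = _ := by rw [hw]; ring
  have hn0 : ∀ (p : ℝ) (x : EuclideanSpace ℝ (Fin n)) (z : ℂ), 0 ≤ ‖x‖ ^ p * ‖z‖ ^ 2 :=
    fun p x z => mul_nonneg (Real.rpow_nonneg (norm_nonneg _) _) (sq_nonneg _)
  constructor
  · refine l2_of_pointwise _ _ _ K hK.le (fun x => hn0 _ _ _) (fun x => hn0 _ _ _)
      (fun x => hn0 _ _ _) hi0 hi1 (fun ξ => ?_)
    have hd : 0 ≤ ‖deriv (fun s => uh s ξ) t‖ / g t := by positivity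
    have := hsq ξ (‖ξ‖ ^ 2 * ‖uh t ξ‖) K (by positivity) (by linarith [hpt ξ])
    refine le_trans (le_of_eq ?_) this
    rw [hw]; ring
  · rw [mul_assoc 2 K (g t)]
    refine l2_of_pointwise _ _ _ (K * g t) (by positivity) (fun x => hn0 _ _ _)
      (fun x => hn0 _ _ _) (fun x => hn0 _ _ _) hi0 hi1 (fun ξ => ?_)
    refine hsq ξ _ _ (norm_nonneg _) ?_
    have hd : 0 ≤ ‖ξ‖ ^ 2 * ‖uh t ξ‖ := by positivity
    have h2 : ‖deriv (fun s => uh s ξ) t‖ / g t ≤ K * (‖ξ‖ ^ 2 * ‖u₀ ξ‖ + ‖u₁ ξ‖) := by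
      linarith [hpt ξ]
    rw [div_le_iff₀ hgt] at h2
    linarith
end

section
/- Let n ≥ 1. Assume g : [0,∞) → ℝ is C² with g(t) > 0 and g'(t) > 0 for all t, ∫₀^∞ 1/g(τ) dτ < ∞, and, with G(t) = ½∫₀ᵗ g(τ) dτ, there are constants C₁, C₂ > 0 with |g'(t)| ≤ C₁ g(t)²/G(t) and |g''(t)| ≤ C₂ g(t)³/G(t)² for all t > 0. Assume b : [0,∞) → ℝ is C¹ with b(t) > 0, b'(t) < 0, b(t)² ≤ C₀·(−b'(t)) for all t (some C₀ > 0), limsup_{t→∞} t·b(t) < 1, and b(t) ≤ C̃ g(t)/G(t) for all t > 0 (some C̃ > 0). Then for every real σ ≥ 2 there is a constant C > 0 such that every Fourier solution û with data û₀, û₁ satisfies, for all t ≥ 0 (whenever the data integrals are finite): (∫_{ℝⁿ} |ξ|^{2σ} |û(t,ξ)|² dξ)^{1/2} ≤ C [ (∫ |ξ|^{2σ} |û₀(ξ)|² dξ)^{1/2} + (∫ |ξ|^{2(σ−2)} |û₁(ξ)|² dξ)^{1/2} ] and (∫ |ξ|^{2(σ−2)} |∂ₜû(t,ξ)|² dξ)^{1/2}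 ≤ C g(t) [ (∫ |ξ|^{2σ} |û₀(ξ)|² dξ)^{1/2} + (∫ |ξ|^{2(σ−2)} |û₁(ξ)|² dξ)^{1/2} ]. -/
open MeasureTheory Filter

/-- Antitone on an interval from a nonpositive derivative. -/
lemma aux_antitone (f f' : ℝ → ℝ) (s t : ℝ) (hs : 0 ≤ s) (hst : s ≤ t)
    (hd : ∀ u, 0 ≤ u → u ≤ t → HasDerivAt f (f' u) u)
    (hn : ∀ u, 0 ≤ u → u ≤ t → f' u ≤ 0) : f t ≤ f s := by
  have h : AntitoneOn f (Set.Icc s t) := by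
    apply antitoneOn_of_deriv_nonpos (convex_Icc s t)
    · intro u hu
      exact (hd u (hs.trans hu.1) hu.2).continuousAt.continuousWithinAt
    · intro u hu
      rw [interior_Icc] at hu
      exact (hd u (hs.trans hu.1.le) hu.2.le).differentiableAt.differentiableWithinAt
    · intro u hu
      rw [interior_Icc] at hu
      rw [(hd u (hs.trans hu.1.le) hu.2.le).deriv]
      exact hn u (hs.trans hu.1.le) hu.2.le
  exact h ⟨le_rfl, hst⟩ ⟨hst, le_rfl⟩ hst

/-- Energy is decreasing. -/
lemma aux_energy (x y i a : ℝ → ℝ) (r : ℝ)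
    (hx : ∀ u, 0 ≤ u → HasDerivAt x (2 * i u) u)
    (hy : ∀ u, 0 ≤ u → HasDerivAt y (-2 * r ^ 2 * i u - 2 * a u * y u) u)
    (hy0 : ∀ u, 0 ≤ y u) (ha : ∀ u, 0 ≤ u → 0 ≤ a u)
    (s t : ℝ) (hs : 0 ≤ s) (hst : s ≤ t) :
    y t + r ^ 2 * x t ≤ y s + r ^ 2 * x s := by
  apply aux_antitone (fun u => y u + r ^ 2 * x u)
    (fun u => (-2 * r ^ 2 * i u - 2 * a u * y u) + r ^ 2 * (2 * i u)) s t hs hst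
  · intro u hu _
    exact (hy u hu).add ((hx u hu).const_mul _)
  · intro u hu _
    have := mul_nonneg (ha u hu) (hy0 u)
    linarith

/-- Growth bound of the velocity. -/
lemma aux_velocity (x y i a : ℝ → ℝ) (r D : ℝ)
    (hy : ∀ u, 0 ≤ u → HasDerivAt y (-2 * r ^ 2 * i u - 2 * a u * y u) u)
    (hx0 : ∀ u, 0 ≤ x u) (hy0 : ∀ u, 0 ≤ y u) (hi : ∀ u, i u ^ 2 ≤ x u * y u)
    (ha : ∀ u, 0 ≤ u → 0 ≤ a u)
    (hD : ∀ u, 0 ≤ u → r ^ 4 * x u ≤ D)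
    (t : ℝ) (ht : 0 ≤ t) :
    y t ≤ Real.exp 1 * (y 0 + t ^ 2 * D) := by
  have hD0 : 0 ≤ D := (mul_nonneg (by positivity) (hx0 0)).trans (hD 0 le_rfl)
  rcases ht.eq_or_lt with rfl | htp
  · have := Real.one_le_exp (zero_le_one (α := ℝ))
    nlinarith [hy0 0]
  have key := aux_antitone (fun u => (y u + t ^ 2 * D) * Real.exp (-(u / t)))
    (fun u => (-2 * r ^ 2 * i u - 2 * a u * y u) * Real.exp (-(u / t)) +
      (y u + t ^ 2 * D) * (Real.exp (-(u / t)) * (-(1 / t)))) 0 t le_rfl ht ?_ ?_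
  · simp only [div_self htp.ne', zero_div, neg_zero, Real.exp_zero, mul_one] at key
    have h2 : Real.exp (-1) * Real.exp 1 = 1 := by
      rw [← Real.exp_add]; simp
    have h3 := mul_le_mul_of_nonneg_right key (Real.exp_pos 1).le
    rw [mul_assoc, h2] at h3
    nlinarith [sq_nonneg t, mul_nonneg (sq_nonneg t) hD0]
  · intro u hu _
    exact ((hy u hu).add_const _).mul (((hasDerivAt_id u).div_const t).neg.exp)
  · intro u hu _
    have he := Real.exp_pos (-(u / t))
    have h1 : -2 * r ^ 2 * i u ≤ (y u + t ^ 2 * D) * (1 / t) := by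
      have h4 : (r ^ 2 * i u) ^ 2 ≤ D * y u := by
        calc (r ^ 2 * i u) ^ 2 = r ^ 4 * i u ^ 2 := by ring
          _ ≤ r ^ 4 * (x u * y u) := by gcongr; exact hi u
          _ = (r ^ 4 * x u) * y u := by ring
          _ ≤ D * y u := by gcongr; exacts [hy0 u, hD u hu]
      rw [mul_one_div, le_div_iff₀ htp]
      have h5 : (2 * (r ^ 2 * i u) * t) ^ 2 ≤ (y u + t ^ 2 * D) ^ 2 := by
        have := mul_le_mul_of_nonneg_left h4 (sq_nonneg t)
        nlinarith [sq_nonneg (y u - t ^ 2 * D)]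
      have h6 := abs_le_of_sq_le_sq h5 (by have := hy0 u; positivity)
      linarith [(abs_le.1 h6).1]
    have h2 := mul_nonneg (ha u hu) (hy0 u)
    have h3 : (-2 * r ^ 2 * i u - 2 * a u * y u) - (y u + t ^ 2 * D) * (1 / t) ≤ 0 := by
      linarith
    have := mul_nonpos_of_nonpos_of_nonneg h3 he.le
    linarith

/-- Initial layer estimate for large frequencies. -/
lemma aux_layer (x y i a : ℝ → ℝ) (r k : ℝ) (hr : 1 ≤ r) (hk : 0 < k)
    (hx : ∀ u, 0 ≤ u → HasDerivAt x (2 * i u) u)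
    (hy : ∀ u, 0 ≤ u → HasDerivAt y (-2 * r ^ 2 * i u - 2 * a u * y u) u)
    (hx0 : ∀ u, 0 ≤ x u) (hy0 : ∀ u, 0 ≤ y u) (hi : ∀ u, i u ^ 2 ≤ x u * y u)
    (ha : ∀ u, 0 ≤ u → k * r ^ 2 ≤ a u)
    (t : ℝ) (ht : 0 ≤ t) (htT : Real.exp (k * r ^ 2 * t) ≤ r ^ 2) :
    x t + Real.exp (k * r ^ 2 * t) / r ^ 4 * y t ≤
      Real.exp (1 / k ^ 2) * (x 0 + y 0 / r ^ 4) := by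
  have hr0 : 0 < r := by linarith
  have key := aux_antitone
    (fun u => (x u + Real.exp (k * r ^ 2 * u) / r ^ 4 * y u) *
      Real.exp (Real.exp (-(k * r ^ 2 * u)) / k ^ 2))
    (fun u => (2 * i u + (Real.exp (k * r ^ 2 * u) * (k * r ^ 2 * 1) / r ^ 4 * y u +
        Real.exp (k * r ^ 2 * u) / r ^ 4 * (-2 * r ^ 2 * i u - 2 * a u * y u))) *
        Real.exp (Real.exp (-(k * r ^ 2 * u)) / k ^ 2) +
      (x u + Real.exp (k * r ^ 2 * u) / r ^ 4 * y u) *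
        (Real.exp (Real.exp (-(k * r ^ 2 * u)) / k ^ 2) *
          (Real.exp (-(k * r ^ 2 * u)) * (-(k * r ^ 2 * 1)) / k ^ 2))) 0 t le_rfl ht ?_ ?_
  · simp only [mul_zero, neg_zero, Real.exp_zero] at key
    have h1 : (1 : ℝ) ≤ Real.exp (Real.exp (-(k * r ^ 2 * t)) / k ^ 2) :=
      Real.one_le_exp (by positivity)
    have h2 : 0 ≤ x t + Real.exp (k * r ^ 2 * t) / r ^ 4 * y t := by
      have := hx0 t; have := hy0 t; positivity
    calc _ ≤ _ := le_mul_of_one_le_right h2 h1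
      _ ≤ _ := key
      _ = _ := by ring
  · intro u hu _
    have e1 : HasDerivAt (fun u => Real.exp (k * r ^ 2 * u))
        (Real.exp (k * r ^ 2 * u) * (k * r ^ 2 * 1)) u :=
      ((hasDerivAt_id u).const_mul (k * r ^ 2)).exp
    have e2 : HasDerivAt (fun u => Real.exp (-(k * r ^ 2 * u)))
        (Real.exp (-(k * r ^ 2 * u)) * (-(k * r ^ 2 * 1))) u :=
      ((hasDerivAt_id u).const_mul (k * r ^ 2)).neg.exp
    exact ((hx u hu).add ((e1.div_const _).mul (hy u hu))).mul ((e2.div_const _).exp)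
  · intro u hu hut
    have hE : Real.exp (-(k * r ^ 2 * u)) = (Real.exp (k * r ^ 2 * u))⁻¹ := Real.exp_neg _
    have hpos := Real.exp_pos (k * r ^ 2 * u)
    have hle : Real.exp (k * r ^ 2 * u) ≤ r ^ 2 :=
      (Real.exp_le_exp.2 (by gcongr)).trans htT
    have hbig := Real.exp_pos (Real.exp (-(k * r ^ 2 * u)) / k ^ 2)
    set B := Real.exp (Real.exp (-(k * r ^ 2 * u)) / k ^ 2)
    rw [hE]
    set e := Real.exp (k * r ^ 2 * u)
    have hX := hx0 u
    have hY := hy0 u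
    have hI := hi u
    have hA := ha u hu
    generalize x u = X at *
    generalize y u = Y at *
    generalize i u = I at *
    generalize a u = A at *
    have h1 : 2 * I * (1 - e / r ^ 2) ≤ k * e / r ^ 2 * Y + r ^ 2 / (k * e) * X := by
      have hθ0 : 0 ≤ 1 - e / r ^ 2 := by
        rw [sub_nonneg, div_le_one (by positivity)]; exact hle
      have hθ1 : 1 - e / r ^ 2 ≤ 1 := by
        have : 0 ≤ e / r ^ 2 := by positivity
        linarith
      have hz : 2 * |I| ≤ k * e / r ^ 2 * Y + r ^ 2 / (k * e) * X := by
        apply abs_le_of_sq_le_sq' _ (by positivity) |>.2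
        have hm : (k * e / r ^ 2 * Y) * (r ^ 2 / (k * e) * X) = X * Y := by
          field_simp
        rw [mul_pow, sq_abs]
        nlinarith [sq_nonneg (k * e / r ^ 2 * Y - r ^ 2 / (k * e) * X)]
      calc 2 * I * (1 - e / r ^ 2) ≤ 2 * |I| * (1 - e / r ^ 2) := by
            gcongr; exact le_abs_self I
        _ ≤ 2 * |I| := mul_le_of_le_one_right (by positivity) hθ1
        _ ≤ _ := hz
    have h2 : e / r ^ 4 * Y * (k * r ^ 2) ≤ e / r ^ 4 * Y * A := by gcongr
    have h3 : 2 * I + (e * (k * r ^ 2 * 1) / r ^ 4 * Y +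
        e / r ^ 4 * (-2 * r ^ 2 * I - 2 * A * Y)) ≤ r ^ 2 / (k * e) * X := by
      have e1 : 2 * I * (1 - e / r ^ 2) = 2 * I + e / r ^ 4 * (-2 * r ^ 2 * I) := by
        field_simp
        ring
      have e2 : e / r ^ 4 * Y * (k * r ^ 2) = k * e / r ^ 2 * Y := by field_simp
      have e3 : e * (k * r ^ 2 * 1) / r ^ 4 * Y = e / r ^ 4 * Y * (k * r ^ 2) := by ring
      have e4 : e / r ^ 4 * (-2 * r ^ 2 * I - 2 * A * Y) =
        e / r ^ 4 * (-2 * r ^ 2 * I) - 2 * (e / r ^ 4 * Y * A) := by ring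
      linarith
    have h4 : r ^ 2 / (k * e) * X ≤ (X + e / r ^ 4 * Y) * (r ^ 2 / (k * e)) := by
      have : 0 ≤ e / r ^ 4 * Y * (r ^ 2 / (k * e)) := by positivity
      linarith
    have h5 : e⁻¹ * -(k * r ^ 2 * 1) / k ^ 2 = -(r ^ 2 / (k * e)) := by
      field_simp
    rw [h5]
    have h6 := mul_nonpos_of_nonpos_of_nonneg (sub_nonpos.2 (h3.trans h4)) hbig.le
    linarith

/-- Uniform bound of the solution. -/
lemma aux_solution (x y i a : ℝ → ℝ) (r k : ℝ) (hr : 0 ≤ r) (hk : 0 < k)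
    (hx : ∀ u, 0 ≤ u → HasDerivAt x (2 * i u) u)
    (hy : ∀ u, 0 ≤ u → HasDerivAt y (-2 * r ^ 2 * i u - 2 * a u * y u) u)
    (hx0 : ∀ u, 0 ≤ x u) (hy0 : ∀ u, 0 ≤ y u) (hi : ∀ u, i u ^ 2 ≤ x u * y u)
    (ha : ∀ u, 0 ≤ u → k * r ^ 2 ≤ a u)
    (t : ℝ) (ht : 0 ≤ t) :
    r ^ 4 * x t ≤ Real.exp (1 / k ^ 2) * (r ^ 4 * x 0 + y 0) := by
  have hK : (1 : ℝ) ≤ Real.exp (1 / k ^ 2) := Real.one_le_exp (by positivity)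
  have ha0 : ∀ u, 0 ≤ u → 0 ≤ a u := fun u hu => le_trans (by positivity) (ha u hu)
  have hX0 := hx0 0
  have hY0 := hy0 0
  rcases le_total r 1 with h1 | h1
  · have hE := aux_energy x y i a r hx hy hy0 ha0 0 t le_rfl ht
    have h2 : r ^ 4 * x t ≤ r ^ 4 * x 0 + y 0 := by
      have h3 : r ^ 2 * x t ≤ y 0 + r ^ 2 * x 0 := by linarith [hy0 t]
      have h4 := mul_le_mul_of_nonneg_left h3 (sq_nonneg r)
      have h5 : r ^ 2 * y 0 ≤ y 0 := mul_le_of_le_one_left hY0 (pow_le_one₀ hr h1)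
      nlinarith
    exact h2.trans (le_mul_of_one_le_left (by positivity) hK)
  · have hr0 : 0 < r := by linarith
    have hmain : ∀ s, 0 ≤ s → x s ≤ Real.exp (1 / k ^ 2) * (x 0 + y 0 / r ^ 4) := by
      intro s hs
      rcases le_total (Real.exp (k * r ^ 2 * s)) (r ^ 2) with h2 | h2
      · have := aux_layer x y i a r k h1 hk hx hy hx0 hy0 hi ha s hs h2
        have h3 : 0 ≤ Real.exp (k * r ^ 2 * s) / r ^ 4 * y s := by
          have := hy0 s; positivity
        linarith
      · set T := Real.log (r ^ 2) / (k * r ^ 2) with hT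
        have hkr : 0 < k * r ^ 2 := by positivity
        have hT0 : 0 ≤ T := div_nonneg (Real.log_nonneg (one_le_pow₀ h1)) hkr.le
        have hTe : Real.exp (k * r ^ 2 * T) = r ^ 2 := by
          rw [hT, mul_div_cancel₀ _ hkr.ne', Real.exp_log (by positivity)]
        have hTs : T ≤ s := by
          have h2' := hTe.le.trans h2
          rw [Real.exp_le_exp] at h2'
          exact le_of_mul_le_mul_left h2' hkr
        have h3 := aux_layer x y i a r k h1 hk hx hy hx0 hy0 hi ha T hT0 hTe.le
        have h4 := aux_energy x y i a r hx hy hy0 ha0 T s hT0 hTs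
        rw [hTe] at h3
        have h5 : r ^ 2 * x s ≤ r ^ 2 * (x T + r ^ 2 / r ^ 4 * y T) := by
          have : r ^ 2 * (x T + r ^ 2 / r ^ 4 * y T) = y T + r ^ 2 * x T := by
            field_simp
            ring
          rw [this]
          linarith [hy0 s]
        exact (le_of_mul_le_mul_left h5 (by positivity)).trans h3
    calc r ^ 4 * x t ≤ r ^ 4 * (Real.exp (1 / k ^ 2) * (x 0 + y 0 / r ^ 4)) := by
          gcongr; exact hmain t ht
      _ = _ := by field_simp

/-- Growth bound for the velocity in terms of `g`. -/
lemma aux_velocity' (x y i a : ℝ → ℝ) (r k S γ : ℝ) (hr : 0 ≤ r) (hk : 0 < k)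
    (hx : ∀ u, 0 ≤ u → HasDerivAt x (2 * i u) u)
    (hy : ∀ u, 0 ≤ u → HasDerivAt y (-2 * r ^ 2 * i u - 2 * a u * y u) u)
    (hx0 : ∀ u, 0 ≤ x u) (hy0 : ∀ u, 0 ≤ y u) (hi : ∀ u, i u ^ 2 ≤ x u * y u)
    (ha : ∀ u, 0 ≤ u → 0 ≤ a u)
    (t : ℝ) (ht : 0 ≤ t) (hkγ : k ≤ γ) (hS : t ≤ S * γ) :
    y t ≤ Real.exp 1 * (1 / k ^ 2 + S ^ 2) * γ ^ 2 * (r ^ 4 * x 0 + y 0) := by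
  have hX0 := hx0 0
  have hY0 := hy0 0
  have hg1 : 1 ≤ 1 / k ^ 2 * γ ^ 2 := by
    rw [one_div, inv_mul_eq_div, one_le_div (by positivity)]
    gcongr
  have hg2 : t ^ 2 ≤ S ^ 2 * γ ^ 2 := by
    rw [← mul_pow]; gcongr
  have he : (1 : ℝ) ≤ Real.exp 1 := Real.one_le_exp zero_le_one
  have hZ : 0 ≤ r ^ 4 * x 0 + y 0 := by positivity
  have goal1 : y t ≤ Real.exp 1 * ((1 + t ^ 2) * (r ^ 4 * x 0 + y 0)) := by
    rcases le_total r 1 with h1 | h1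
    · have hD : ∀ u, 0 ≤ u → r ^ 4 * x u ≤ r ^ 4 * x 0 + y 0 := by
        intro u hu
        have hE := aux_energy x y i a r hx hy hy0 ha 0 u le_rfl hu
        have h3 : r ^ 2 * x u ≤ y 0 + r ^ 2 * x 0 := by linarith [hy0 u]
        have h4 := mul_le_mul_of_nonneg_left h3 (sq_nonneg r)
        have h5 : r ^ 2 * y 0 ≤ y 0 := mul_le_of_le_one_left hY0 (pow_le_one₀ hr h1)
        nlinarith
      refine (aux_velocity x y i a r _ hy hx0 hy0 hi ha hD t ht).trans ?_
      gcongr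
      have : 0 ≤ r ^ 4 * x 0 := by positivity
      linarith
    · have hE := aux_energy x y i a r hx hy hy0 ha 0 t le_rfl ht
      have h2 : y t ≤ r ^ 4 * x 0 + y 0 := by
        have h3 : 0 ≤ r ^ 2 * x t := mul_nonneg (sq_nonneg r) (hx0 t)
        have h4 : r ^ 2 * x 0 ≤ r ^ 4 * x 0 := by gcongr; norm_num
        linarith
      refine h2.trans ?_
      have h5 : r ^ 4 * x 0 + y 0 ≤ (1 + t ^ 2) * (r ^ 4 * x 0 + y 0) :=
        le_mul_of_one_le_left hZ (by nlinarith)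
      exact h5.trans (le_mul_of_one_le_left (by positivity) he)
  refine goal1.trans ?_
  have : Real.exp 1 * ((1 + t ^ 2) * (r ^ 4 * x 0 + y 0)) ≤
      Real.exp 1 * ((1 / k ^ 2 * γ ^ 2 + S ^ 2 * γ ^ 2) * (r ^ 4 * x 0 + y 0)) := by gcongr
  refine this.trans (le_of_eq (by ring))

/-- Bridge from the complex ODE to the real system. -/
lemma aux_bridge (v : ℝ → ℂ) (a : ℝ → ℝ) (r : ℝ) (hv : ContDiff ℝ 2 v)
    (hode : ∀ t, 0 ≤ t → deriv (deriv v) t + ((r ^ 2 : ℝ) : ℂ) * v t +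
      ((a t : ℝ) : ℂ) * deriv v t = 0) :
    (∀ u, 0 ≤ u → HasDerivAt (fun s => ‖v s‖ ^ 2) (2 * inner ℝ (v u) (deriv v u)) u) ∧
    (∀ u, 0 ≤ u → HasDerivAt (fun s => ‖deriv v s‖ ^ 2)
      (-2 * r ^ 2 * inner ℝ (v u) (deriv v u) - 2 * a u * ‖deriv v u‖ ^ 2) u) ∧
    (∀ u, (inner ℝ (v u) (deriv v u)) ^ 2 ≤ ‖v u‖ ^ 2 * ‖deriv v u‖ ^ 2) := by
  have hd1 : Differentiable ℝ v := hv.differentiable (by norm_num)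
  have hd2 : Differentiable ℝ (deriv v) := by
    have h : ContDiff ℝ (1 + 1) v := by simpa [one_add_one_eq_two] using hv
    exact (contDiff_succ_iff_deriv.1 h).2.2.differentiable (by norm_num)
  refine ⟨fun u hu => (hd1 u).hasDerivAt.norm_sq, fun u hu => ?_, fun u => ?_⟩
  · have h := (hd2 u).hasDerivAt.norm_sq
    convert h using 1
    have h2 : deriv (deriv v) u = -(r ^ 2 • v u) - a u • deriv v u := by
      have := hode u hu
      simp only [Complex.real_smul]
      linear_combination this
    rw [h2, inner_sub_right, inner_neg_right, real_inner_smul_right, real_inner_smul_right,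
      real_inner_self_eq_norm_sq, real_inner_comm]
    ring
  · rw [← mul_pow, ← sq_abs]
    gcongr
    exact abs_real_inner_le_norm _ _

/-- Integration of a pointwise estimate. -/
lemma aux_integral {E : Type*} [MeasurableSpace E] (μ : Measure E) (p q w : E → ℝ) (K : ℝ)
    (hw : ∀ ξ, 0 ≤ w ξ) (hp0 : ∀ ξ, 0 ≤ p ξ) (hq0 : ∀ ξ, 0 ≤ q ξ)
    (hp : Integrable p μ) (hq : Integrable q μ) (hK : 0 ≤ K)
    (h : ∀ ξ, w ξ ≤ K ^ 2 * (p ξ + q ξ)) :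
    Real.sqrt (∫ ξ, w ξ ∂μ) ≤ K * (Real.sqrt (∫ ξ, p ξ ∂μ) + Real.sqrt (∫ ξ, q ξ ∂μ)) := by
  have h1 : ∫ ξ, w ξ ∂μ ≤ K ^ 2 * (∫ ξ, p ξ ∂μ + ∫ ξ, q ξ ∂μ) := by
    rw [← integral_add hp hq, ← integral_const_mul]
    exact integral_mono_of_nonneg (Eventually.of_forall hw) ((hp.add hq).const_mul _)
      (Eventually.of_forall h)
  have hP : 0 ≤ ∫ ξ, p ξ ∂μ := integral_nonneg hp0
  have hQ : 0 ≤ ∫ ξ, q ξ ∂μ := integral_nonneg hq0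
  apply Real.sqrt_le_iff.2 ⟨by positivity, ?_⟩
  refine h1.trans ?_
  rw [mul_pow]
  gcongr
  have := Real.sq_sqrt hP
  have := Real.sq_sqrt hQ
  nlinarith [mul_nonneg (Real.sqrt_nonneg (∫ ξ, p ξ ∂μ)) (Real.sqrt_nonneg (∫ ξ, q ξ ∂μ))]

/-- Splitting of the weight. -/
lemma aux_weight (r σ : ℝ) (hr : 0 ≤ r) (hσ : 2 ≤ σ) :
    r ^ (2 * σ) = r ^ (2 * (σ - 2)) * r ^ 4 := by
  rw [← Real.rpow_natCast r 4, ← Real.rpow_add_of_nonneg hr (by linarith) (by norm_num)]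
  congr 1
  push_cast
  ring

/-- The time is controlled by `g`. -/
lemma aux_time (g : ℝ → ℝ) (hmono : MonotoneOn g (Set.Ici 0))
    (hg_pos : ∀ t : ℝ, 0 ≤ t → 0 < g t)
    (hg_int : IntegrableOn (fun t => (g t)⁻¹) (Set.Ici (0 : ℝ))) (t : ℝ) (ht : 0 ≤ t) :
    t ≤ (∫ s in Set.Ici (0 : ℝ), (g s)⁻¹) * g t := by
  have h1 : t * (g t)⁻¹ ≤ ∫ s in Set.Ici (0 : ℝ), (g s)⁻¹ := by
    calc t * (g t)⁻¹ = ∫ s in Set.Icc 0 t, (g t)⁻¹ := by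
          simp [ht]
      _ ≤ ∫ s in Set.Icc 0 t, (g s)⁻¹ := by
          apply setIntegral_mono_on
          · exact integrableOn_const (by simp)
          · exact hg_int.mono_set Set.Icc_subset_Ici_self
          · exact measurableSet_Icc
          · intro s hs
            exact inv_anti₀ (hg_pos s hs.1) (hmono hs.1 ht hs.2)
      _ ≤ _ := by
          apply setIntegral_mono_set hg_int
          · filter_upwards [ae_restrict_mem measurableSet_Ici] with s hs
            exact (inv_pos.2 (hg_pos s hs)).le
          · exact Set.Icc_subset_Ici_self.eventuallyLE
  have := mul_le_mul_of_nonneg_right h1 (hg_pos t ht).le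
  rwa [mul_assoc, inv_mul_cancel₀ (hg_pos t ht).ne', mul_one] at this

/-- Theorem 3.1 of the paper: non-effective friction together with an increasing
viscoelastic coefficient `g = g(t)`. -/
theorem noneffective_increasing_viscoelastic_decay
    (n : ℕ) (hn : 1 ≤ n)
    (b g G : ℝ → ℝ)
    (hg_smooth : ContDiff ℝ 2 g)
    (hg_pos : ∀ t : ℝ, 0 ≤ t → 0 < g t)
    (hg_deriv_pos : ∀ t : ℝ, 0 ≤ t → 0 < deriv g t)
    (hg_int : IntegrableOn (fun t => (g t)⁻¹) (Set.Ici (0 : ℝ)))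
    (hG : ∀ t : ℝ, G t = (1 / 2) * ∫ τ in (0 : ℝ)..t, g τ)
    (C₁ C₂ : ℝ) (hC₁ : 0 < C₁) (hC₂ : 0 < C₂)
    (hg1 : ∀ t : ℝ, 0 < t → |deriv g t| ≤ C₁ * (g t) ^ 2 / G t)
    (hg2 : ∀ t : ℝ, 0 < t → |deriv (deriv g) t| ≤ C₂ * (g t) ^ 3 / (G t) ^ 2)
    (hb_smooth : ContDiff ℝ 1 b)
    (hb_pos : ∀ t : ℝ, 0 ≤ t → 0 < b t)
    (hb_deriv_neg : ∀ t : ℝ, 0 ≤ t → deriv b t < 0)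
    (C₀ : ℝ) (hC₀ : 0 < C₀)
    (hb2 : ∀ t : ℝ, 0 ≤ t → (b t) ^ 2 ≤ C₀ * (-(deriv b t)))
    (hb_limsup : Filter.limsup (fun t => t * b t) atTop < 1)
    (Ctil : ℝ) (hCtil : 0 < Ctil)
    (hbG : ∀ t : ℝ, 0 < t → b t ≤ Ctil * g t / G t) :
    ∀ σ : ℝ, 2 ≤ σ →
      ∃ C : ℝ, 0 < C ∧
        ∀ (uh : ℝ → EuclideanSpace ℝ (Fin n) → ℂ) (u₀ u₁ : EuclideanSpace ℝ (Fin n) → ℂ),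
          Measurable (fun p : ℝ × EuclideanSpace ℝ (Fin n) => uh p.1 p.2) →
          (∀ ξ : EuclideanSpace ℝ (Fin n), ContDiff ℝ 2 (fun s => uh s ξ)) →
          (∀ (ξ : EuclideanSpace ℝ (Fin n)) (t : ℝ), 0 ≤ t →
            deriv (deriv (fun s => uh s ξ)) t + ((‖ξ‖ ^ 2 : ℝ) : ℂ) * uh t ξ +
              ((b t + g t * ‖ξ‖ ^ 2 : ℝ) : ℂ) * deriv (fun s => uh s ξ) t = 0) →
          (∀ ξ : EuclideanSpace ℝ (Fin n), uh 0 ξ = u₀ ξ) →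
          (∀ ξ : EuclideanSpace ℝ (Fin n), deriv (fun s => uh s ξ) 0 = u₁ ξ) →
          ∀ t : ℝ, 0 ≤ t →
            Integrable (fun ξ : EuclideanSpace ℝ (Fin n) => ‖ξ‖ ^ (2 * σ) * ‖u₀ ξ‖ ^ 2) →
            Integrable (fun ξ : EuclideanSpace ℝ (Fin n) => ‖ξ‖ ^ (2 * (σ - 2)) * ‖u₁ ξ‖ ^ 2) →
            Real.sqrt (∫ ξ : EuclideanSpace ℝ (Fin n), ‖ξ‖ ^ (2 * σ) * ‖uh t ξ‖ ^ 2) ≤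
                C * (Real.sqrt (∫ ξ : EuclideanSpace ℝ (Fin n), ‖ξ‖ ^ (2 * σ) * ‖u₀ ξ‖ ^ 2) +
                  Real.sqrt (∫ ξ : EuclideanSpace ℝ (Fin n), ‖ξ‖ ^ (2 * (σ - 2)) * ‖u₁ ξ‖ ^ 2)) ∧
              Real.sqrt (∫ ξ : EuclideanSpace ℝ (Fin n), ‖ξ‖ ^ (2 * (σ - 2)) * ‖deriv (fun s => uh s ξ) t‖ ^ 2) ≤
                C * g t * (Real.sqrt (∫ ξ : EuclideanSpace ℝ (Fin n), ‖ξ‖ ^ (2 * σ) * ‖u₀ ξ‖ ^ 2) +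
                  Real.sqrt (∫ ξ : EuclideanSpace ℝ (Fin n), ‖ξ‖ ^ (2 * (σ - 2)) * ‖u₁ ξ‖ ^ 2)) := by
  intro σ hσ
  have hmono : MonotoneOn g (Set.Ici 0) := by
    apply monotoneOn_of_deriv_nonneg (convex_Ici 0) hg_smooth.continuous.continuousOn
    · exact (hg_smooth.differentiable (by norm_num)).differentiableOn
    · intro u hu
      rw [interior_Ici] at hu
      exact (hg_deriv_pos u (le_of_lt hu)).le
  have hk : 0 < g 0 := hg_pos 0 le_rfl
  set k := g 0 with hkdef
  set S := ∫ s in Set.Ici (0 : ℝ), (g s)⁻¹ with hSdef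
  have hS : ∀ t, 0 ≤ t → t ≤ S * g t := aux_time g hmono hg_pos hg_int
  have hkg : ∀ t, 0 ≤ t → k ≤ g t := fun t ht =>
    hmono (Set.mem_Ici.2 le_rfl) (Set.mem_Ici.2 ht) ht
  set K₁ := Real.exp (1 / k ^ 2) with hK₁
  set K₂ := Real.exp 1 * (1 / k ^ 2 + S ^ 2) with hK₂
  have hK₁p : 0 < K₁ := Real.exp_pos _
  have hK₂p : 0 < K₂ := by positivity
  refine ⟨Real.sqrt (K₁ + K₂), Real.sqrt_pos.2 (by positivity), ?_⟩
  intro uh u₀ u₁ _ hsm hode h0 h1 t ht hi0 hi1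
  have hgt := hg_pos t ht
  have hsq : Real.sqrt (K₁ + K₂) ^ 2 = K₁ + K₂ := Real.sq_sqrt (by positivity)
  have hP : ∀ ξ : EuclideanSpace ℝ (Fin n),
      ‖ξ‖ ^ 4 * ‖uh t ξ‖ ^ 2 ≤ K₁ * (‖ξ‖ ^ 4 * ‖u₀ ξ‖ ^ 2 + ‖u₁ ξ‖ ^ 2) ∧
      ‖deriv (fun s => uh s ξ) t‖ ^ 2 ≤
        K₂ * (g t) ^ 2 * (‖ξ‖ ^ 4 * ‖u₀ ξ‖ ^ 2 + ‖u₁ ξ‖ ^ 2) := by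
    intro ξ
    obtain ⟨hx, hy, hi⟩ := aux_bridge (fun s => uh s ξ) (fun s => b s + g s * ‖ξ‖ ^ 2) ‖ξ‖
      (hsm ξ) (hode ξ)
    have ha : ∀ u, 0 ≤ u → k * ‖ξ‖ ^ 2 ≤ b u + g u * ‖ξ‖ ^ 2 := by
      intro u hu
      have := mul_le_mul_of_nonneg_right (hkg u hu) (sq_nonneg ‖ξ‖)
      linarith [hb_pos u hu]
    have e1 := aux_solution _ _ _ _ ‖ξ‖ k (norm_nonneg _) hk hx hy (fun u => by positivity)
      (fun u => by positivity) hi ha t ht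
    have e2 := aux_velocity' _ _ _ _ ‖ξ‖ k S (g t) (norm_nonneg _) hk hx hy
      (fun u => by positivity) (fun u => by positivity) hi
      (fun u hu => le_trans (by positivity) (ha u hu)) t ht (hkg t ht) (hS t ht)
    simp only [h0, h1] at e1 e2
    exact ⟨e1, e2⟩
  constructor
  · apply aux_integral volume _ _ _ _ (fun ξ => by positivity) (fun ξ => by positivity)
      (fun ξ => by positivity) hi0 hi1 (Real.sqrt_nonneg _)
    intro ξ
    rw [hsq, aux_weight ‖ξ‖ σ (norm_nonneg _) hσ]
    have hw : 0 ≤ ‖ξ‖ ^ (2 * (σ - 2)) := by positivity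
    have h2 : K₁ * (‖ξ‖ ^ 4 * ‖u₀ ξ‖ ^ 2 + ‖u₁ ξ‖ ^ 2) ≤
      (K₁ + K₂) * (‖ξ‖ ^ 4 * ‖u₀ ξ‖ ^ 2 + ‖u₁ ξ‖ ^ 2) := by gcongr; linarith
    have h3 := mul_le_mul_of_nonneg_left ((hP ξ).1.trans h2) hw
    linarith
  · apply aux_integral volume _ _ _ _ (fun ξ => by positivity) (fun ξ => by positivity)
      (fun ξ => by positivity) hi0 hi1 (by positivity)
    intro ξ
    rw [mul_pow, hsq, aux_weight ‖ξ‖ σ (norm_nonneg _) hσ]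
    have hw : 0 ≤ ‖ξ‖ ^ (2 * (σ - 2)) := by positivity
    have h2 : K₂ * (g t) ^ 2 * (‖ξ‖ ^ 4 * ‖u₀ ξ‖ ^ 2 + ‖u₁ ξ‖ ^ 2) ≤
      (K₁ + K₂) * (g t) ^ 2 * (‖ξ‖ ^ 4 * ‖u₀ ξ‖ ^ 2 + ‖u₁ ξ‖ ^ 2) := by gcongr; linarith
    have h3 := mul_le_mul_of_nonneg_left ((hP ξ).2.trans h2) hw
    linarith
end

section
/- Let n ≥ 1. Assume g : [0,∞) → ℝ is C² with g(t) > 0 and g'(t) > 0 for all t, ∫₀^∞ 1/g(τ) dτ < ∞, and, with G(t) = ½∫₀ᵗ g(τ) dτ, there are constants C₁, C₂ > 0 with |g'(t)| ≤ C₁ g(t)²/G(t) and |g''(t)| ≤ C₂ g(t)³/G(t)² for all t > 0. Assume b : [0,∞) → ℝ is C² with b(t) > 0, either b'(t) ≥ 0 for all t or b'(t) < 0 for all t, lim_{t→∞} t·b(t) = ∞, |b'(t)| ≤ C b(t)/(1+t) and |b''(t)| ≤ C b(t)/(1+t)² for all t (some C > 0), and |b'(t)| ≤ a·b(t)² for all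 t with a fixed constant a < 1. Write ⟨ξ⟩ = (1+|ξ|²)^{1/2}. Then for every real σ ≥ 0 there is C' > 0 such that every Fourier solution û with data û₀, û₁ satisfies for all t ≥ 0 (whenever the data integrals are finite): (∫ |ξ|^{2σ}|û(t,ξ)|² dξ)^{1/2} ≤ C'[ (∫ |ξ|^{2σ}|û₀|² dξ)^{1/2} + (∫ |ξ|^{2σ}⟨ξ⟩^{−4}|û₁|² dξ)^{1/2} ]. Moreover, if b'(t) ≥ 0 for all t then (∫ |ξ|^{2σ}|∂ₜû(t,ξ)|² dξ)^{1/2} ≤ C' g(t)[ (∫ |ξ|^{2(σ+2)}|û₀|² dξ)^{1/2} + (∫ |ξ|^{2(σ+2)}⟨ξ⟩^{−4}|û₁|² dξ)^{1/2} ] + C' b(t)[ (∫ |ξ|^{2σ}|û₀|² dξ)^{1/2} + (∫ |ξ|^{2σ}⟨ξ⟩^{−4}|û₁|² dξ)^{1/2} ]; if b'(t) < 0 for all t then (∫ |ξ|^{2σ}|∂ₜû(t,ξ)|² dξ)^{1/2} ≤ C' g(t)[ (∫ |ξ|^{2(σ+2)}|û₀|² dξ)^{1/2} + (∫ |ξ|^{2σ}|û₁|²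 dξ)^{1/2} ] + C' b(t)[ (∫ |ξ|^{2σ}|û₀|² dξ)^{1/2} + (∫ |ξ|^{2(σ−2)}|û₁|² dξ)^{1/2} ]. -/
open MeasureTheory Filter

/-- Upper right slope of the norm of a solution of `f' = -c f + h`. -/
lemma slope_norm_aux {f : ℝ → ℂ} {x c : ℝ} {h : ℂ}
    (hf : HasDerivAt f (-(c : ℂ) * f x + h) x) {e : ℝ} (he : 0 < e) :
    ∀ᶠ z in nhdsWithin x (Set.Ioi x),
      ‖f z‖ - ‖f x‖ ≤ (z - x) * (-c * ‖f x‖ + ‖h‖ + e) := by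
  have h1 := (hf.isLittleO.def he).filter_mono (nhdsWithin_le_nhds (s := Set.Ioi x))
  have h2 : ∀ᶠ z in nhdsWithin x (Set.Ioi x), 0 < 1 - c * (z - x) := by
    apply Filter.Eventually.filter_mono nhdsWithin_le_nhds
    have : Continuous (fun z : ℝ => 1 - c * (z - x)) := by fun_prop
    exact (continuousAt_const (y := (0:ℝ))).eventually_lt this.continuousAt (by simp)
  filter_upwards [h1, h2, self_mem_nhdsWithin] with z hz1 hz2 hz3
  have hz : 0 < z - x := sub_pos.2 hz3
  have e1 : f z = (f z - f x - (z - x) • (-(c : ℂ) * f x + h)) +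
      (((1 - c * (z - x) : ℝ) : ℂ) * f x + ((z - x : ℝ) : ℂ) * h) := by
    rw [Complex.real_smul]; push_cast; ring
  have e2 : ‖f z‖ ≤ e * ‖z - x‖ + ((1 - c * (z - x)) * ‖f x‖ + (z - x) * ‖h‖) := by
    conv_lhs => rw [e1]
    refine (norm_add_le _ _).trans (add_le_add hz1 ((norm_add_le _ _).trans (le_of_eq ?_)))
    rw [norm_mul, norm_mul, Complex.norm_real, Complex.norm_real, Real.norm_of_nonneg hz2.le,
      Real.norm_of_nonneg hz.le]
  rw [Real.norm_of_nonneg hz.le] at e2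
  nlinarith

/-- The algebraic differential inequality. -/
lemma coeff_aux {q m B a K gi W P : ℝ} (ha0 : 0 ≤ a) (ha : a < 1) (hK : K = 1 / (1 - a))
    (hq : 0 ≤ q) (hqg : q ≤ gi) (hB : 0 < B) (hm : -(a * B) ≤ m) (hW : 0 ≤ W) (hP : 0 ≤ P) :
    (-q * W + |q - m| * P) + K * (-(B + m) * P + q * (W + P)) ≤ (1 + K) * gi * (W + K * P) := by
  have h1a : 0 < 1 - a := by linarith
  have hK1 : K * (1 - a) = 1 := by rw [hK]; field_simp
  have hKge : 1 ≤ K := by rw [hK, le_div_iff₀ h1a]; linarith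
  have h1 : |q - m| - K * (B + m) ≤ q := by
    rcases le_total 0 m with h | h
    · have : |q - m| ≤ q + m := abs_le.2 ⟨by linarith, by linarith⟩
      nlinarith [mul_nonneg (sub_nonneg.2 hKge) h, mul_pos (by linarith : 0 < K) hB]
    · rw [abs_of_nonneg (by linarith)]
      have : (1 + K) * (-m) ≤ (1 + K) * (a * B) :=
        mul_le_mul_of_nonneg_left (by linarith) (by linarith)
      have e : K * B - K * B * a = B := by linear_combination B * hK1
      nlinarith
  have h2 : (|q - m| - K * (B + m)) * P ≤ q * P := mul_le_mul_of_nonneg_right h1 hP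
  have h3 : (1 + K) * q * (W + K * P) ≤ (1 + K) * gi * (W + K * P) := by gcongr
  have h4 : (1 + K) * q * P ≤ (1 + K) * q * (K * P) := by
    apply mul_le_mul_of_nonneg_left _ (by positivity)
    nlinarith
  nlinarith [mul_nonneg hq hW]

lemma slope_comb_aux {d X Y e K R ρ a b : ℝ} (hd : 0 < d) (h1 : a ≤ d * (X + e))
    (h2 : K * b ≤ K * (d * (Y + e))) (h3 : X + K * Y ≤ R) (h4 : R + (1 + K) * e < ρ) :
    a + K * b < ρ * d := by
  have h5 : d * (X + K * Y + (1 + K) * e) < d * ρ := mul_lt_mul_of_pos_left (by linarith) hd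
  linarith

set_option maxHeartbeats 1000000 in
lemma pointwise_aux (b g : ℝ → ℝ)
    (hg : ContDiff ℝ 2 g) (hg_pos : ∀ t : ℝ, 0 ≤ t → 0 < g t)
    (hg' : ∀ t : ℝ, 0 ≤ t → 0 < deriv g t)
    (hg_int : IntegrableOn (fun t => (g t)⁻¹) (Set.Ici (0 : ℝ)))
    (hb : ContDiff ℝ 2 b) (hb_pos : ∀ t : ℝ, 0 ≤ t → 0 < b t)
    (a : ℝ) (ha : a < 1) (hbEF : ∀ t : ℝ, 0 ≤ t → |deriv b t| ≤ a * (b t) ^ 2) :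
    ∃ A : ℝ, 0 < A ∧ ∀ (r : ℝ) (u : ℝ → ℂ), 0 ≤ r → ContDiff ℝ 2 u →
      (∀ t : ℝ, 0 ≤ t → deriv (deriv u) t + ((r ^ 2 : ℝ) : ℂ) * u t +
        ((b t + g t * r ^ 2 : ℝ) : ℂ) * deriv u t = 0) →
      ∀ t : ℝ, 0 ≤ t →
        ‖u t‖ ≤ A * (‖u 0‖ + (1 + r ^ 2)⁻¹ * ‖deriv u 0‖) ∧
        ‖deriv u t‖ ≤ (b t + g t * r ^ 2) * (A * (‖u 0‖ + (1 + r ^ 2)⁻¹ * ‖deriv u 0‖)) := by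
  have ha0 : 0 ≤ a := by
    have h1 := (abs_nonneg _).trans (hbEF 0 le_rfl)
    exact nonneg_of_mul_nonneg_left h1 (pow_pos (hb_pos 0 le_rfl) 2)
  obtain ⟨K, hK⟩ : ∃ K, K = 1 / (1 - a) := ⟨_, rfl⟩
  have h1a : 0 < 1 - a := by linarith
  have hKge : 1 ≤ K := by rw [hK, le_div_iff₀ h1a]; linarith
  have hK0 : 0 < K := by linarith
  -- integrated coefficient
  let gi : ℝ → ℝ := fun s => (g (max s 0))⁻¹
  have gi_pos : ∀ s, 0 < gi s := fun s => inv_pos.2 (hg_pos _ (le_max_right _ _))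
  have gi_cont : Continuous gi :=
    (hg.continuous.comp (continuous_id.max continuous_const)).inv₀
      (fun s => (hg_pos _ (le_max_right _ _)).ne')
  have gi_eq : ∀ s, 0 ≤ s → gi s = (g s)⁻¹ := fun s hs => by simp [gi, max_eq_left hs]
  let H : ℝ → ℝ := fun t => ∫ s in (0:ℝ)..t, gi s
  have H_deriv : ∀ t, HasDerivAt H (gi t) t := fun t =>
    gi_cont.integral_hasStrictDerivAt 0 t |>.hasDerivAt
  have gi_int : IntegrableOn gi (Set.Ici (0:ℝ)) :=
    hg_int.congr_fun (fun s hs => (gi_eq s hs).symm) measurableSet_Ici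
  obtain ⟨I, hI⟩ : ∃ I, I = ∫ s in Set.Ici (0:ℝ), gi s := ⟨_, rfl⟩
  have H_le : ∀ t, 0 ≤ t → H t ≤ I := fun t ht => by
    rw [hI]
    simp only [H]
    rw [intervalIntegral.integral_of_le ht]
    exact setIntegral_mono_set gi_int (ae_of_all _ fun s => (gi_pos s).le)
      (Set.Ioc_subset_Icc_self.trans Set.Icc_subset_Ici_self).eventuallyLE
  obtain ⟨c0, hc0⟩ : ∃ c0, c0 = min (b 0) (g 0) := ⟨_, rfl⟩
  have hc0p : 0 < c0 := by rw [hc0]; exact lt_min (hb_pos 0 le_rfl) (hg_pos 0 le_rfl)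
  obtain ⟨D, hD⟩ : ∃ D, D = max 1 ((1 + K) / c0) := ⟨_, rfl⟩
  have hD1 : 1 ≤ D := hD ▸ le_max_left _ _
  have hD2 : (1 + K) / c0 ≤ D := hD ▸ le_max_right _ _
  refine ⟨D * Real.exp (2 * (1 + K) * I), by positivity, ?_⟩
  intro r u hr hu hode T hT
  let B : ℝ → ℝ := fun s => b s + g s * r ^ 2
  have B_pos : ∀ s, 0 ≤ s → 0 < B s := fun s hs => by
    have := hb_pos s hs; have := hg_pos s hs; simp only [B]; positivity
  have hbd : ∀ s, HasDerivAt b (deriv b s) s := fun s =>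
    (hb.differentiable (by norm_num) s).hasDerivAt
  have hgd : ∀ s, HasDerivAt g (deriv g s) s := fun s =>
    (hg.differentiable (by norm_num) s).hasDerivAt
  have B_deriv : ∀ s, HasDerivAt B (deriv b s + deriv g s * r ^ 2) s := fun s =>
    (hbd s).add ((hgd s).mul_const _)
  have hud : ∀ s, HasDerivAt u (deriv u s) s := fun s =>
    (hu.differentiable (by norm_num) s).hasDerivAt
  have hudd : ∀ s, HasDerivAt (deriv u) (deriv (deriv u) s) s := fun s => by
    have : ContDiff ℝ (1 + 1) u := by norm_num; exact hu
    have h1 : ContDiff ℝ 1 (deriv u) := (contDiff_succ_iff_deriv.1 this).2.2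
    exact (h1.differentiable (by norm_num) s).hasDerivAt
  let p : ℝ → ℂ := fun s => ((B s)⁻¹ : ℝ) * deriv u s
  let w : ℝ → ℂ := fun s => u s + p s
  let q : ℝ → ℝ := fun s => r ^ 2 / B s
  let m : ℝ → ℝ := fun s => (deriv b s + deriv g s * r ^ 2) / B s
  have p_deriv : ∀ s, 0 ≤ s → HasDerivAt p
      (-((B s + m s : ℝ) : ℂ) * p s + (-(q s : ℂ) * u s)) s := fun s hs => by
    have hB := (B_pos s hs).ne'
    have h1 := (((B_deriv s).inv hB).ofReal_comp).mul (hudd s)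
    refine h1.congr_deriv ?_
    have h2 : deriv (deriv u) s = -((r ^ 2 : ℝ) : ℂ) * u s - (B s : ℂ) * deriv u s := by
      have := hode s hs
      linear_combination this
    have hBc : (B s : ℂ) ≠ 0 := by exact_mod_cast hB
    rw [h2, Pi.inv_apply]
    simp only [p, m, q]
    push_cast
    field_simp
    ring
  have w_deriv : ∀ s, 0 ≤ s → HasDerivAt w
      (-((q s : ℝ) : ℂ) * w s + ((q s - m s : ℝ) : ℂ) * p s) s := fun s hs => by
    refine ((hud s).add (p_deriv s hs)).congr_deriv ?_
    have hBc : (B s : ℂ) ≠ 0 := by exact_mod_cast (B_pos s hs).ne'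
    have : deriv u s = (B s : ℂ) * p s := by
      simp only [p]; push_cast; field_simp
    rw [this]
    simp only [w]
    push_cast
    ring
  let N : ℝ → ℝ := fun s => ‖w s‖ + K * ‖p s‖
  have N_cont : ContinuousOn N (Set.Icc 0 T) := fun s hs =>
    ((w_deriv s hs.1).continuousAt.norm.add
      ((p_deriv s hs.1).continuousAt.norm.const_mul K)).continuousWithinAt
  have key : ∀ s, 0 ≤ s →
      (-q s * ‖w s‖ + |q s - m s| * ‖p s‖) +
        K * (-(B s + m s) * ‖p s‖ + q s * (‖w s‖ + ‖p s‖)) ≤ (1 + K) * gi s * N s := by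
    intro s hs
    have hB := B_pos s hs
    have hgp := hg_pos s hs
    have hbp := hb_pos s hs
    apply coeff_aux ha0 ha hK (by positivity) _ hB _ (norm_nonneg _) (norm_nonneg _)
    · rw [gi_eq s hs, div_le_iff₀ hB]
      have : (g s)⁻¹ * B s = (g s)⁻¹ * b s + r ^ 2 := by simp only [B]; field_simp
      rw [this]
      have : 0 < (g s)⁻¹ * b s := by positivity
      linarith
    · simp only [m]
      rw [le_div_iff₀ hB]
      have h1 := (abs_le.1 (hbEF s hs)).1
      have h2 : 0 ≤ deriv g s * r ^ 2 := mul_nonneg (hg' s hs).le (sq_nonneg _)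
      have h3 : b s ≤ B s := by simp only [B]; nlinarith [mul_nonneg hgp.le (sq_nonneg r)]
      have h4 : a * b s ^ 2 ≤ a * B s ^ 2 := by gcongr
      nlinarith
  have bound : ∀ ε, 0 < ε → N T ≤ (N 0 + ε) * Real.exp (2 * (1 + K) * H T) := by
    intro ε hε
    have hN0 : 0 ≤ N 0 := by simp only [N]; positivity
    have Bd : ∀ s, HasDerivAt (fun s => (N 0 + ε) * Real.exp (2 * (1 + K) * H s))
        ((N 0 + ε) * (Real.exp (2 * (1 + K) * H s) * (2 * (1 + K) * gi s))) s := fun s =>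
      (((H_deriv s).const_mul _).exp).const_mul _
    refine image_le_of_liminf_slope_right_lt_deriv_boundary' (f := N)
      (f' := fun s => (1 + K) * gi s * N s) (a := 0) (b := T) N_cont ?_
      (B := fun s => (N 0 + ε) * Real.exp (2 * (1 + K) * H s)) ?_
      (fun s _ => (Bd s).continuousAt.continuousWithinAt)
      (fun s _ => (Bd s).hasDerivWithinAt) ?_ ⟨hT, le_rfl⟩
    · intro x hx ρ hρ
      apply Filter.Eventually.frequently
      obtain ⟨e, he⟩ : ∃ e, e = (ρ - (1 + K) * gi x * N x) / (2 * (1 + K)) := ⟨_, rfl⟩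
      have he0 : 0 < e := by rw [he]; apply div_pos (sub_pos.2 hρ); positivity
      have he1 : e * (2 * (1 + K)) = ρ - (1 + K) * gi x * N x := by rw [he]; field_simp
      filter_upwards [slope_norm_aux (w_deriv x hx.1) he0, slope_norm_aux (p_deriv x hx.1) he0,
        self_mem_nhdsWithin] with z h1 h2 h3
      have hz : 0 < z - x := sub_pos.2 h3
      rw [slope_def_field, div_lt_iff₀ hz]
      have hq0 : 0 ≤ q x := div_nonneg (sq_nonneg _) (B_pos x hx.1).le
      have n1 : ‖((q x - m x : ℝ) : ℂ) * p x‖ = |q x - m x| * ‖p x‖ := by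
        rw [norm_mul, Complex.norm_real, Real.norm_eq_abs]
      have n2 : ‖-(q x : ℂ) * u x‖ ≤ q x * (‖w x‖ + ‖p x‖) := by
        rw [norm_mul, norm_neg, Complex.norm_real, Real.norm_of_nonneg hq0]
        apply mul_le_mul_of_nonneg_left _ hq0
        have : u x = w x - p x := by simp [w]
        rw [this]; exact norm_sub_le _ _
      rw [n1] at h1
      have h2' : ‖p z‖ - ‖p x‖ ≤
          (z - x) * (-(B x + m x) * ‖p x‖ + q x * (‖w x‖ + ‖p x‖) + e) :=
        h2.trans (mul_le_mul_of_nonneg_left (by linarith) hz.le)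
      have h2K := mul_le_mul_of_nonneg_left h2' hK0.le
      have hlt : (1 + K) * gi x * N x + (1 + K) * e < ρ := by
        have := mul_pos (by linarith : 0 < 1 + K) he0
        linarith
      have : N z - N x = (‖w z‖ - ‖w x‖) + K * (‖p z‖ - ‖p x‖) := by simp only [N]; ring
      rw [this]
      exact slope_comb_aux hz h1 h2K (key x hx.1) hlt
    · have : H 0 = 0 := by simp [H]
      simp [this, hε.le]
    · intro x hx hxe
      have hpos : 0 < (N 0 + ε) * Real.exp (2 * (1 + K) * H x) := by positivity
      have h3 : 0 < (1 + K) * gi x * ((N 0 + ε) * Real.exp (2 * (1 + K) * H x)) :=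
        mul_pos (mul_pos (by linarith) (gi_pos x)) hpos
      simp only [hxe]
      nlinarith
  have NT : N T ≤ N 0 * Real.exp (2 * (1 + K) * I) := by
    have hE : Real.exp (2 * (1 + K) * H T) ≤ Real.exp (2 * (1 + K) * I) := by
      apply Real.exp_le_exp.2
      apply mul_le_mul_of_nonneg_left (H_le T hT); positivity
    have hN0 : 0 ≤ N 0 := by simp only [N]; positivity
    refine le_of_forall_pos_le_add fun ε hε => ?_
    have h1 := bound (ε / Real.exp (2 * (1 + K) * I)) (by positivity)
    refine h1.trans ((mul_le_mul_of_nonneg_left hE (by positivity)).trans (le_of_eq ?_))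
    field_simp
  have N0 : N 0 ≤ D * (‖u 0‖ + (1 + r ^ 2)⁻¹ * ‖deriv u 0‖) := by
    have hB0 : c0 * (1 + r ^ 2) ≤ B 0 := by
      have i1 : c0 ≤ b 0 := hc0 ▸ min_le_left _ _
      have i2 : c0 ≤ g 0 := hc0 ▸ min_le_right _ _
      simp only [B]
      nlinarith [mul_le_mul_of_nonneg_right i2 (sq_nonneg r)]
    have hp : ‖p 0‖ = (B 0)⁻¹ * ‖deriv u 0‖ := by
      simp only [p]
      rw [norm_mul, Complex.norm_real, Real.norm_of_nonneg (inv_pos.2 (B_pos 0 le_rfl)).le]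
    have hp2 : (1 + K) * ‖p 0‖ ≤ D * ((1 + r ^ 2)⁻¹ * ‖deriv u 0‖) := by
      rw [hp]
      calc (1 + K) * ((B 0)⁻¹ * ‖deriv u 0‖)
          ≤ (1 + K) * ((c0 * (1 + r ^ 2))⁻¹ * ‖deriv u 0‖) := by gcongr
        _ = (1 + K) / c0 * ((1 + r ^ 2)⁻¹ * ‖deriv u 0‖) := by field_simp
        _ ≤ _ := by gcongr
    have : ‖w 0‖ ≤ ‖u 0‖ + ‖p 0‖ := norm_add_le _ _
    simp only [N]
    nlinarith [mul_le_mul_of_nonneg_right hD1 (norm_nonneg (u 0))]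
  have NT2 : N T ≤ D * Real.exp (2 * (1 + K) * I) * (‖u 0‖ + (1 + r ^ 2)⁻¹ * ‖deriv u 0‖) :=
    NT.trans ((mul_le_mul_of_nonneg_right N0 (Real.exp_pos _).le).trans (le_of_eq (by ring)))
  have hpN : ‖p T‖ ≤ N T := by
    simp only [N]; nlinarith [norm_nonneg (w T), norm_nonneg (p T)]
  constructor
  · refine le_trans ?_ NT2
    have : u T = w T - p T := by simp [w]
    rw [this]
    refine (norm_sub_le _ _).trans ?_
    simp only [N]; nlinarith [norm_nonneg (p T)]
  · have hBT := B_pos T hT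
    have : deriv u T = (B T : ℂ) * p T := by
      have hBc : (B T : ℂ) ≠ 0 := by exact_mod_cast hBT.ne'
      simp only [p]; push_cast; field_simp
    rw [this, norm_mul, Complex.norm_real, Real.norm_of_nonneg hBT.le]
    exact mul_le_mul_of_nonneg_left (hpN.trans NT2) hBT.le

lemma sqrt_integral_aux {α : Type*} [MeasurableSpace α] {μ : Measure α}
    {F f₁ f₂ f₃ f₄ : α → ℝ} {c g b : ℝ} (hc : 0 ≤ c) (hg : 0 ≤ g) (hb : 0 ≤ b)
    (hF : ∀ x, 0 ≤ F x) (i₁ : Integrable f₁ μ) (i₂ : Integrable f₂ μ)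
    (i₃ : Integrable f₃ μ) (i₄ : Integrable f₄ μ)
    (p₁ : ∀ x, 0 ≤ f₁ x) (p₂ : ∀ x, 0 ≤ f₂ x) (p₃ : ∀ x, 0 ≤ f₃ x) (p₄ : ∀ x, 0 ≤ f₄ x)
    (h : ∀ᵐ x ∂μ, F x ≤ (c * g) ^ 2 * (f₁ x + f₂ x) + (c * b) ^ 2 * (f₃ x + f₄ x)) :
    Real.sqrt (∫ x, F x ∂μ) ≤
      c * g * (Real.sqrt (∫ x, f₁ x ∂μ) + Real.sqrt (∫ x, f₂ x ∂μ)) +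
      c * b * (Real.sqrt (∫ x, f₃ x ∂μ) + Real.sqrt (∫ x, f₄ x ∂μ)) := by
  have h1 := integral_mono_of_nonneg (ae_of_all _ hF)
    (((i₁.add i₂).const_mul ((c * g) ^ 2)).add ((i₃.add i₄).const_mul ((c * b) ^ 2))) h
  have h2 : ∫ x, ((c * g) ^ 2 * (f₁ x + f₂ x) + (c * b) ^ 2 * (f₃ x + f₄ x)) ∂μ =
      (c * g) ^ 2 * (∫ x, f₁ x ∂μ + ∫ x, f₂ x ∂μ) +
      (c * b) ^ 2 * (∫ x, f₃ x ∂μ + ∫ x, f₄ x ∂μ) := by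
    have j₁ : Integrable (fun x => (c * g) ^ 2 * (f₁ x + f₂ x)) μ := (i₁.add i₂).const_mul _
    have j₂ : Integrable (fun x => (c * b) ^ 2 * (f₃ x + f₄ x)) μ := (i₃.add i₄).const_mul _
    rw [integral_add j₁ j₂, integral_const_mul, integral_const_mul, integral_add i₁ i₂, integral_add i₃ i₄]
  have q₁ : 0 ≤ ∫ x, f₁ x ∂μ := integral_nonneg p₁
  have q₂ : 0 ≤ ∫ x, f₂ x ∂μ := integral_nonneg p₂
  have q₃ : 0 ≤ ∫ x, f₃ x ∂μ := integral_nonneg p₃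
  have q₄ : 0 ≤ ∫ x, f₄ x ∂μ := integral_nonneg p₄
  have h3 := h1.trans (le_of_eq h2)
  have s₁ := Real.sq_sqrt q₁
  have s₂ := Real.sq_sqrt q₂
  have s₃ := Real.sq_sqrt q₃
  have s₄ := Real.sq_sqrt q₄
  have n₁ := Real.sqrt_nonneg (∫ x, f₁ x ∂μ)
  have n₂ := Real.sqrt_nonneg (∫ x, f₂ x ∂μ)
  have n₃ := Real.sqrt_nonneg (∫ x, f₃ x ∂μ)
  have n₄ := Real.sqrt_nonneg (∫ x, f₄ x ∂μ)
  apply Real.sqrt_le_iff.2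
  refine ⟨by positivity, h3.trans ?_⟩
  rw [← s₁, ← s₂, ← s₃, ← s₄]
  simp only [Real.sqrt_sq n₁, Real.sqrt_sq n₂, Real.sqrt_sq n₃, Real.sqrt_sq n₄]
  generalize Real.sqrt (∫ x, f₁ x ∂μ) = x₁ at *
  generalize Real.sqrt (∫ x, f₂ x ∂μ) = x₂ at *
  generalize Real.sqrt (∫ x, f₃ x ∂μ) = x₃ at *
  generalize Real.sqrt (∫ x, f₄ x ∂μ) = x₄ at *
  have e : (c * g * (x₁ + x₂) + c * b * (x₃ + x₄)) ^ 2 =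
    ((c * g) ^ 2 * (x₁ ^ 2 + x₂ ^ 2) + (c * b) ^ 2 * (x₃ ^ 2 + x₄ ^ 2)) +
    (2 * (c * g) ^ 2 * (x₁ * x₂) + 2 * (c * b) ^ 2 * (x₃ * x₄) +
      2 * (c * g) * (c * b) * ((x₁ + x₂) * (x₃ + x₄))) := by ring
  rw [e]
  have : 0 ≤ (2 * (c * g) ^ 2 * (x₁ * x₂) + 2 * (c * b) ^ 2 * (x₃ * x₄) +
      2 * (c * g) * (c * b) * ((x₁ + x₂) * (x₃ + x₄))) := by positivity
  linarith

/-- Squared version of the pointwise bound for the time derivative. -/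
lemma sq_bound_aux {V A b g r x y : ℝ} (hV : 0 ≤ V)
    (h : V ≤ (b + g * r ^ 2) * (A * (x + y))) :
    V ^ 2 ≤ (2 * A * g) ^ 2 * (r ^ 4 * x ^ 2 + r ^ 4 * y ^ 2) +
      (2 * A * b) ^ 2 * (x ^ 2 + y ^ 2) := by
  have h1 : V ^ 2 ≤ ((b + g * r ^ 2) * (A * (x + y))) ^ 2 := pow_le_pow_left₀ hV h 2
  have h2 : (b + g * r ^ 2) ^ 2 ≤ 2 * (b ^ 2 + g ^ 2 * r ^ 4) := by
    nlinarith [sq_nonneg (b - g * r ^ 2)]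
  have h3 : (x + y) ^ 2 ≤ 2 * (x ^ 2 + y ^ 2) := by nlinarith [sq_nonneg (x - y)]
  have h4 := mul_le_mul h2 h3 (sq_nonneg _) (by positivity)
  have h5 := mul_le_mul_of_nonneg_left h4 (sq_nonneg A)
  nlinarith

/-- Theorem 4.1 of the paper: effective friction together with an increasing
viscoelastic coefficient `g = g(t)`. -/
theorem effective_increasing_viscoelastic_decay
    (n : ℕ) (hn : 1 ≤ n)
    (b g G : ℝ → ℝ)
    (hg_smooth : ContDiff ℝ 2 g)
    (hg_pos : ∀ t : ℝ, 0 ≤ t → 0 < g t)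
    (hg_deriv_pos : ∀ t : ℝ, 0 ≤ t → 0 < deriv g t)
    (hg_int : IntegrableOn (fun t => (g t)⁻¹) (Set.Ici (0 : ℝ)))
    (hG : ∀ t : ℝ, G t = (1 / 2) * ∫ τ in (0 : ℝ)..t, g τ)
    (C₁ C₂ : ℝ) (hC₁ : 0 < C₁) (hC₂ : 0 < C₂)
    (hg1 : ∀ t : ℝ, 0 < t → |deriv g t| ≤ C₁ * (g t) ^ 2 / G t)
    (hg2 : ∀ t : ℝ, 0 < t → |deriv (deriv g) t| ≤ C₂ * (g t) ^ 3 / (G t) ^ 2)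
    (hb_smooth : ContDiff ℝ 2 b)
    (hb_pos : ∀ t : ℝ, 0 ≤ t → 0 < b t)
    (hb_sign : (∀ t : ℝ, 0 ≤ t → 0 ≤ deriv b t) ∨ (∀ t : ℝ, 0 ≤ t → deriv b t < 0))
    (hb_eff : Tendsto (fun t => t * b t) atTop atTop)
    (Cb : ℝ) (hCb : 0 < Cb)
    (hb1 : ∀ t : ℝ, 0 ≤ t → |deriv b t| ≤ Cb * b t / (1 + t))
    (hb2 : ∀ t : ℝ, 0 ≤ t → |deriv (deriv b) t| ≤ Cb * b t / (1 + t) ^ 2)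
    (a : ℝ) (ha : a < 1)
    (hbEF : ∀ t : ℝ, 0 ≤ t → |deriv b t| ≤ a * (b t) ^ 2) :
    ∀ σ : ℝ, 0 ≤ σ →
      ∃ C' : ℝ, 0 < C' ∧
        ∀ (uh : ℝ → EuclideanSpace ℝ (Fin n) → ℂ) (u₀ u₁ : EuclideanSpace ℝ (Fin n) → ℂ),
          Measurable (fun p : ℝ × EuclideanSpace ℝ (Fin n) => uh p.1 p.2) →
          (∀ ξ : EuclideanSpace ℝ (Fin n), ContDiff ℝ 2 (fun s => uh s ξ)) →
          (∀ (ξ : EuclideanSpace ℝ (Fin n)) (t : ℝ), 0 ≤ t →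
            deriv (deriv (fun s => uh s ξ)) t + ((‖ξ‖ ^ 2 : ℝ) : ℂ) * uh t ξ +
              ((b t + g t * ‖ξ‖ ^ 2 : ℝ) : ℂ) * deriv (fun s => uh s ξ) t = 0) →
          (∀ ξ : EuclideanSpace ℝ (Fin n), uh 0 ξ = u₀ ξ) →
          (∀ ξ : EuclideanSpace ℝ (Fin n), deriv (fun s => uh s ξ) 0 = u₁ ξ) →
          ∀ t : ℝ, 0 ≤ t →
            Integrable (fun ξ : EuclideanSpace ℝ (Fin n) => ‖ξ‖ ^ (2 * σ) * ‖u₀ ξ‖ ^ 2) →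
            Integrable (fun ξ : EuclideanSpace ℝ (Fin n) => ‖ξ‖ ^ (2 * σ) * ((1 + ‖ξ‖ ^ 2) ^ 2)⁻¹ * ‖u₁ ξ‖ ^ 2) →
            Integrable (fun ξ : EuclideanSpace ℝ (Fin n) => ‖ξ‖ ^ (2 * (σ + 2)) * ‖u₀ ξ‖ ^ 2) →
            Integrable (fun ξ : EuclideanSpace ℝ (Fin n) => ‖ξ‖ ^ (2 * (σ + 2)) * ((1 + ‖ξ‖ ^ 2) ^ 2)⁻¹ * ‖u₁ ξ‖ ^ 2) →
            Integrable (fun ξ : EuclideanSpace ℝ (Fin n) => ‖ξ‖ ^ (2 * σ) * ‖u₁ ξ‖ ^ 2) →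
            Integrable (fun ξ : EuclideanSpace ℝ (Fin n) => ‖ξ‖ ^ (2 * (σ - 2)) * ‖u₁ ξ‖ ^ 2) →
            (Real.sqrt (∫ ξ : EuclideanSpace ℝ (Fin n), ‖ξ‖ ^ (2 * σ) * ‖uh t ξ‖ ^ 2) ≤
                C' * (Real.sqrt (∫ ξ : EuclideanSpace ℝ (Fin n), ‖ξ‖ ^ (2 * σ) * ‖u₀ ξ‖ ^ 2) + Real.sqrt (∫ ξ : EuclideanSpace ℝ (Fin n), ‖ξ‖ ^ (2 * σ) * ((1 + ‖ξ‖ ^ 2) ^ 2)⁻¹ * ‖u₁ ξ‖ ^ 2))) ∧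
              ((∀ s : ℝ, 0 ≤ s → 0 ≤ deriv b s) →
                Real.sqrt (∫ ξ : EuclideanSpace ℝ (Fin n), ‖ξ‖ ^ (2 * σ) * ‖deriv (fun s => uh s ξ) t‖ ^ 2) ≤
                  C' * g t * (Real.sqrt (∫ ξ : EuclideanSpace ℝ (Fin n), ‖ξ‖ ^ (2 * (σ + 2)) * ‖u₀ ξ‖ ^ 2) + Real.sqrt (∫ ξ : EuclideanSpace ℝ (Fin n), ‖ξ‖ ^ (2 * (σ + 2)) * ((1 + ‖ξ‖ ^ 2) ^ 2)⁻¹ * ‖u₁ ξ‖ ^ 2)) +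
                    C' * b t * (Real.sqrt (∫ ξ : EuclideanSpace ℝ (Fin n), ‖ξ‖ ^ (2 * σ) * ‖u₀ ξ‖ ^ 2) + Real.sqrt (∫ ξ : EuclideanSpace ℝ (Fin n), ‖ξ‖ ^ (2 * σ) * ((1 + ‖ξ‖ ^ 2) ^ 2)⁻¹ * ‖u₁ ξ‖ ^ 2))) ∧
              ((∀ s : ℝ, 0 ≤ s → deriv b s < 0) →
                Real.sqrt (∫ ξ : EuclideanSpace ℝ (Fin n), ‖ξ‖ ^ (2 * σ) * ‖deriv (fun s => uh s ξ) t‖ ^ 2) ≤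
                  C' * g t * (Real.sqrt (∫ ξ : EuclideanSpace ℝ (Fin n), ‖ξ‖ ^ (2 * (σ + 2)) * ‖u₀ ξ‖ ^ 2) + Real.sqrt (∫ ξ : EuclideanSpace ℝ (Fin n), ‖ξ‖ ^ (2 * σ) * ‖u₁ ξ‖ ^ 2)) +
                    C' * b t * (Real.sqrt (∫ ξ : EuclideanSpace ℝ (Fin n), ‖ξ‖ ^ (2 * σ) * ‖u₀ ξ‖ ^ 2) + Real.sqrt (∫ ξ : EuclideanSpace ℝ (Fin n), ‖ξ‖ ^ (2 * (σ - 2)) * ‖u₁ ξ‖ ^ 2))) := by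
  obtain ⟨A, hA, key⟩ := pointwise_aux b g hg_smooth hg_pos hg_deriv_pos hg_int hb_smooth hb_pos
    a ha hbEF
  intro σ hσ
  refine ⟨2 * A, by positivity, ?_⟩
  intro uh u₀ u₁ _ hsm hode h0 h1 t ht i1 i2 i3 i4 i5 i6
  have hgt := hg_pos t ht
  have hbt := hb_pos t ht
  have pw : ∀ ξ : EuclideanSpace ℝ (Fin n),
      ‖uh t ξ‖ ≤ A * (‖u₀ ξ‖ + (1 + ‖ξ‖ ^ 2)⁻¹ * ‖u₁ ξ‖) ∧
      ‖deriv (fun s => uh s ξ) t‖ ≤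
        (b t + g t * ‖ξ‖ ^ 2) * (A * (‖u₀ ξ‖ + (1 + ‖ξ‖ ^ 2)⁻¹ * ‖u₁ ξ‖)) := by
    intro ξ
    have := key ‖ξ‖ (fun s => uh s ξ) (norm_nonneg _) (hsm ξ) (hode ξ) t ht
    simpa only [h0, h1] using this
  have : Nonempty (Fin n) := ⟨⟨0, hn⟩⟩
  have hne : ∀ᵐ ξ : EuclideanSpace ℝ (Fin n), 0 < ‖ξ‖ := by
    have : ∀ᵐ ξ : EuclideanSpace ℝ (Fin n), ξ ≠ 0 := by
      simp [ae_iff]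
    filter_upwards [this] with ξ hξ
    exact norm_pos_iff.2 hξ
  have r4 : ∀ x : ℝ, 0 < x → x ^ (2 * (σ + 2)) = x ^ (2 * σ) * x ^ 4 := by
    intro x hx
    rw [show 2 * (σ + 2) = 2 * σ + (4 : ℕ) by push_cast; ring, Real.rpow_add_natCast hx.ne']
  have r4' : ∀ x : ℝ, 0 < x → x ^ (2 * σ) = x ^ (2 * (σ - 2)) * x ^ 4 := by
    intro x hx
    rw [show 2 * σ = 2 * (σ - 2) + (4 : ℕ) by push_cast; ring, Real.rpow_add_natCast hx.ne']
  refine ⟨?_, fun _ => ?_, fun _ => ?_⟩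
  · have := sqrt_integral_aux (c := 2 * A) (g := 0) (b := 1)
      (F := fun ξ : EuclideanSpace ℝ (Fin n) => ‖ξ‖ ^ (2 * σ) * ‖uh t ξ‖ ^ 2)
      (by positivity) le_rfl zero_le_one
      (fun ξ => by positivity) i1 i2 i1 i2 (fun ξ => by positivity) (fun ξ => by positivity)
      (fun ξ => by positivity) (fun ξ => by positivity) (ae_of_all _ fun ξ => ?_)
    · simpa only [mul_zero, zero_mul, zero_add, mul_one] using this
    · have h := sq_bound_aux (b := 1) (g := 0) (r := 0) (norm_nonneg (uh t ξ))
        (by simpa using (pw ξ).1)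
      have h' := mul_le_mul_of_nonneg_left h (by positivity : 0 ≤ ‖ξ‖ ^ (2 * σ))
      refine h'.trans (le_of_eq ?_)
      rw [← inv_pow]
      ring
  · refine sqrt_integral_aux (by positivity) hgt.le hbt.le
      (fun ξ => by positivity) i3 i4 i1 i2 (fun ξ => by positivity) (fun ξ => by positivity)
      (fun ξ => by positivity) (fun ξ => by positivity) ?_
    filter_upwards [hne] with ξ hξ
    have h := sq_bound_aux (norm_nonneg _) (pw ξ).2
    have h' := mul_le_mul_of_nonneg_left h (by positivity : 0 ≤ ‖ξ‖ ^ (2 * σ))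
    refine h'.trans (le_of_eq ?_)
    rw [← inv_pow, r4 _ hξ]
    ring
  · refine sqrt_integral_aux (by positivity) hgt.le hbt.le
      (fun ξ => by positivity) i3 i5 i1 i6 (fun ξ => by positivity) (fun ξ => by positivity)
      (fun ξ => by positivity) (fun ξ => by positivity) ?_
    filter_upwards [hne] with ξ hξ
    have hle : ‖deriv (fun s => uh s ξ) t‖ ≤
        (b t + g t * ‖ξ‖ ^ 2) * (A * (‖u₀ ξ‖ + (‖ξ‖ ^ 2)⁻¹ * ‖u₁ ξ‖)) := by
      refine (pw ξ).2.trans ?_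
      gcongr
      linarith
    have h := sq_bound_aux (norm_nonneg _) hle
    have h' := mul_le_mul_of_nonneg_left h (by positivity : 0 ≤ ‖ξ‖ ^ (2 * σ))
    refine h'.trans (le_of_eq ?_)
    rw [r4 _ hξ, r4' _ hξ]
    field_simp
end

section
/- Let n ≥ 1. Assume b : [0,∞) → ℝ is C² with b(t) > 0, b' of constant sign, lim_{t→∞} t·b(t) = ∞, |b'(t)| ≤ C b(t)/(1+t) and |b''(t)| ≤ C b(t)/(1+t)² for all t (some C > 0), and |b'(t)| ≤ a·b(t)² for all t with a fixed a < 1. Assume g : [0,∞) → ℝ is C¹ with g(t) > 0 and g'(t) < 0 for all t, ∫₀^∞ g(τ) dτ < ∞, b(t)g(t) ≤ ½ for all t, b'(t)/b(t) ≤ −g'(t)/g(t) for all t, and ∫₀^∞ g'(τ)²/g(τ) dτ < ∞. Write ⟨ξ⟩ = (1+|ξ|²)^{1/2} and B(t) = 1 + ∫_{t₀}^t 1/b(τ) dτ. Then there exist t₀ ≥ 0 and, for every real σ, a constant C' > 0 such that every Fourier solution û with data û₀, û₁ satisfies for all t ≥ t₀ (whenever the data integrals are finite): for σ ≥ 1,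 (∫ |ξ|^{2σ}|û(t,ξ)|² dξ)^{1/2} ≤ C' B(t)^{−σ/2} (∫ ⟨ξ⟩^{2σ}|û₀|² dξ)^{1/2} + C' B(t)^{−(σ−1)/2} (∫ ⟨ξ⟩^{2(σ−1)}|û₁|² dξ)^{1/2}; and for σ ≥ 0, (∫ |ξ|^{2σ}|∂ₜû(t,ξ)|² dξ)^{1/2} ≤ C' B(t)^{−(σ+1)/2} (∫ ⟨ξ⟩^{2(σ+1)}|û₀|² dξ)^{1/2} + C' B(t)^{−σ/2} (∫ ⟨ξ⟩^{2σ}|û₁|² dξ)^{1/2}. -/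
open MeasureTheory Filter

/-- Algebraic core: the perturbed energy decays at rate `k/9`. -/
theorem aux_alg (b g L k k' v y : ℝ) (hb : 0 < b) (hg : 0 ≤ g) (hbg : b * g ≤ 1 / 2)
    (hL : 0 ≤ L) (hk : 0 ≤ k) (hkL : k * (L + b ^ 2) = L * b) (hk' : |k'| ≤ b * k) :
    2 * v * (-(L * y) - (b + g * L) * v) + 2 * L * y * v
      + (1 / 4) * (k' * v * y + k * (-(L * y) - (b + g * L) * v) * y + k * v * v)
      ≤ -(1 / 9) * k * (v ^ 2 + L * y ^ 2 + (1 / 4) * k * v * y) := by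
  have hkb : k ≤ b := by
    by_contra h
    push Not at h
    nlinarith [mul_nonneg hL (sub_nonneg.2 h.le), pow_pos hb 2, mul_pos (pow_pos hb 2) (lt_trans hb h)]
  have hkbL : k * b ≤ L := by
    by_contra h
    push Not at h
    nlinarith [mul_nonneg hk hL]
  have hkk : k ^ 2 ≤ L := by nlinarith
  set m := b + g * L with hm
  have hgL : 0 ≤ g * L := mul_nonneg hg hL
  have hbm : b ≤ m := by linarith
  have hm0 : 0 < m := by linarith
  have hkm : k * m ≤ 3 / 2 * L := by
    have h1 : k * (g * L) ≤ b * (g * L) := mul_le_mul_of_nonneg_right hkb hgL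
    have h2 : b * g * L ≤ 1 / 2 * L := mul_le_mul_of_nonneg_right hbg hL
    rw [hm]; nlinarith
  have hk1 := abs_le.1 hk'
  have hbk : b * k ≤ m * k := mul_le_mul_of_nonneg_right hbm hk
  -- cross term
  have hc : -(1 / 4) * ((k * m - k') * (v * y)) ≤ m * v ^ 2 + 3 / 32 * k * L * y ^ 2 := by
    have h0 : |(k * m - k')| ≤ 2 * (k * m) := by
      rw [abs_le]; constructor <;> nlinarith [mul_nonneg hk hm0.le]
    have h1 : |(k * m - k') * (v * y)| ≤ 2 * (k * m) * (|v| * |y|) := by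
      rw [abs_mul, abs_mul]
      exact mul_le_mul_of_nonneg_right h0 (by positivity)
    have h2 := neg_abs_le ((k * m - k') * (v * y))
    have h3 : 0 ≤ m * (|v| - 1 / 4 * k * |y|) ^ 2 := by positivity
    have h4 : k * m * (k * y ^ 2) ≤ 3 / 2 * L * (k * y ^ 2) :=
      mul_le_mul_of_nonneg_right hkm (by positivity)
    have h5 := sq_abs v
    have h6 := sq_abs y
    have h7 : m * (|v| - 1 / 4 * k * |y|) ^ 2
        = m * v ^ 2 - 1 / 2 * (k * m) * (|v| * |y|) + 1 / 16 * (k * m * (k * y ^ 2)) := by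
      rw [← h5, ← h6]; ring
    nlinarith
  have hF : k * (1 / 4 * k * v * y) ≤ k * (1 / 8 * (v ^ 2 + L * y ^ 2)) := by
    apply mul_le_mul_of_nonneg_left _ hk
    nlinarith [sq_nonneg (v - k * y), mul_le_mul_of_nonneg_right hkk (sq_nonneg y)]
  have hkv : k * v ^ 2 ≤ m * v ^ 2 := mul_le_mul_of_nonneg_right (hkb.trans hbm) (sq_nonneg v)
  have hkLy : 0 ≤ k * L * y ^ 2 := by positivity
  have hmv : 0 ≤ m * v ^ 2 := by positivity
  nlinarith

theorem aux_hasDerivAt_B (b : ℝ → ℝ) (hb : ContDiff ℝ 2 b) (hb_pos : ∀ t : ℝ, 0 ≤ t → 0 < b t)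
    (t : ℝ) (ht : 0 ≤ t) :
    HasDerivAt (fun t => ∫ τ in (0:ℝ)..t, (b τ)⁻¹) (b t)⁻¹ t := by
  apply intervalIntegral.integral_hasDerivAt_right
  · apply ContinuousOn.intervalIntegrable
    intro x hx
    rw [Set.uIcc_of_le ht] at hx
    exact (hb.continuous.continuousAt.inv₀ (hb_pos x hx.1).ne').continuousWithinAt
  · exact (hb.continuous.measurable.inv).stronglyMeasurable.stronglyMeasurableAtFilter
  · exact hb.continuous.continuousAt.inv₀ (hb_pos t ht).ne'

theorem aux_B_nonneg (b : ℝ → ℝ) (hb_pos : ∀ t : ℝ, 0 ≤ t → 0 < b t)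
    (t : ℝ) (ht : 0 ≤ t) : 0 ≤ ∫ τ in (0:ℝ)..t, (b τ)⁻¹ :=
  intervalIntegral.integral_nonneg ht fun u hu => (inv_pos.2 (hb_pos u hu.1)).le

theorem aux_A (b : ℝ → ℝ) (hb : ContDiff ℝ 2 b) (hb_pos : ∀ t : ℝ, 0 ≤ t → 0 < b t)
    (hb_eff : Tendsto (fun t => t * b t) atTop atTop) (Cb : ℝ)
    (hb1 : ∀ t : ℝ, 0 ≤ t → |deriv b t| ≤ Cb * b t / (1 + t)) (K : ℝ) (hK : 0 ≤ K) :
    ∃ A : ℝ, 0 ≤ A ∧ ∀ t : ℝ, 0 ≤ t → K / b t ^ 2 ≤ A + ∫ τ in (0:ℝ)..t, (b τ)⁻¹ := by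
  set f : ℝ → ℝ := fun t => K / b t ^ 2 - ∫ τ in (0:ℝ)..t, (b τ)⁻¹ with hf
  have hbd : ∀ t, HasDerivAt b (deriv b t) t := fun t =>
    ((hb.differentiable (by norm_num)) t).hasDerivAt
  have hfd : ∀ t, 0 ≤ t → HasDerivAt f
      ((0 * b t ^ 2 - K * (2 * b t ^ 1 * deriv b t)) / (b t ^ 2) ^ 2 - (b t)⁻¹) t := by
    intro t ht
    have h := ((hasDerivAt_const t K).div ((hbd t).pow 2) (pow_ne_zero 2 (hb_pos t ht).ne')).sub
      (aux_hasDerivAt_B b hb hb_pos t ht)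
    refine HasDerivAt.congr_deriv (f := f) h ?_
    simp only [Pi.pow_apply]
    norm_num
  obtain ⟨T, hT⟩ := ((hb_eff.eventually_ge_atTop (2 * K * Cb)).and (eventually_ge_atTop 0)).exists_forall_of_atTop
  have hT0 : 0 ≤ T := (hT T le_rfl).2
  have hanti : AntitoneOn f (Set.Ici T) := by
    apply antitoneOn_of_deriv_nonpos (convex_Ici T)
    · intro t ht
      exact (hfd t (hT0.trans ht)).continuousAt.continuousWithinAt
    · intro t ht
      rw [interior_Ici] at ht
      exact (hfd t (hT0.trans (le_of_lt ht))).differentiableAt.differentiableWithinAt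
    · intro t ht
      rw [interior_Ici] at ht
      have ht0 : 0 ≤ t := hT0.trans (le_of_lt ht)
      rw [(hfd t ht0).deriv]
      have hp := hb_pos t ht0
      have h1 := hb1 t ht0
      have h2 := (hT t (le_of_lt ht)).1
      have h3 : -deriv b t * (1 + t) ≤ Cb * b t := by
        have := (neg_le_abs _).trans h1
        rwa [le_div_iff₀ (by linarith)] at this
      have h4 : (0 * b t ^ 2 - K * (2 * b t ^ 1 * deriv b t)) / (b t ^ 2) ^ 2 - (b t)⁻¹
        = (2 * K * (-deriv b t) - b t ^ 2) / b t ^ 3 := by field_simp; ring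
      rw [h4]
      apply div_nonpos_of_nonpos_of_nonneg _ (by positivity)
      have h5 : 2 * K * (-deriv b t * (1 + t)) ≤ 2 * K * (Cb * b t) :=
        mul_le_mul_of_nonneg_left h3 (by linarith)
      have h6 : (2 * K * (-deriv b t) - b t ^ 2) * (1 + t) ≤ 0 := by
        nlinarith [mul_le_mul_of_nonneg_right h2 hp.le, pow_pos hp 2]
      by_contra hh
      push Not at hh
      nlinarith [mul_pos hh (show 0 < 1 + t by linarith)]
  obtain ⟨A, hA⟩ := (isCompact_Icc (a := (0:ℝ)) (b := T)).bddAbove_image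
    (f := f) (fun t ht => (hfd t ht.1).continuousAt.continuousWithinAt)
  have hA' : ∀ t, 0 ≤ t → t ≤ T → f t ≤ A := fun t h0 h1 => hA ⟨t, ⟨h0, h1⟩, rfl⟩
  refine ⟨max A 0, le_max_right _ _, fun t ht => ?_⟩
  have : f t ≤ A := by
    rcases le_total t T with h | h
    · exact hA' t ht h
    · exact (hanti (Set.mem_Ici.2 le_rfl) h h).trans (hA' T hT0 le_rfl)
  have h2 := le_max_left A 0
  simp only [hf] at this
  linarith

/-- Energy estimate with polynomial weight. -/
theorem aux_energy_s5 (b g : ℝ → ℝ) (hb : ContDiff ℝ 2 b) (hb_pos : ∀ t : ℝ, 0 ≤ t → 0 < b t)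
    (hb2 : ∀ t : ℝ, 0 ≤ t → |deriv b t| ≤ (b t) ^ 2)
    (hg_pos : ∀ t : ℝ, 0 ≤ t → 0 < g t)
    (hbg : ∀ t : ℝ, 0 ≤ t → b t * g t ≤ 1 / 2)
    (s : ℝ) (hs : 0 ≤ s) (A : ℝ) (hA : 0 ≤ A)
    (hAb : ∀ t : ℝ, 0 ≤ t → 9 * s / b t ^ 2 ≤ A + ∫ τ in (0:ℝ)..t, (b τ)⁻¹)
    (L : ℝ) (hL : 0 ≤ L) (y v : ℝ → ℝ)
    (hy : ∀ t, 0 ≤ t → HasDerivAt y (v t) t)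
    (hv : ∀ t, 0 ≤ t → HasDerivAt v (-(L * y t) - (b t + g t * L) * v t) t)
    (t : ℝ) (ht : 0 ≤ t) :
    (L * (1 + ∫ τ in (0:ℝ)..t, (b τ)⁻¹)) ^ s * (v t ^ 2 + L * y t ^ 2) ≤
      2 * (9 * s + 1 + (A + 1)) ^ s * (1 + L) ^ s * (v 0 ^ 2 + L * y 0 ^ 2) := by
  set k : ℝ → ℝ := fun t => L * b t / (L + b t ^ 2) with hk
  set F : ℝ → ℝ := fun t => v t ^ 2 + L * y t ^ 2 + (1 / 4) * (k t * v t * y t) with hF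
  set I : ℝ → ℝ := fun t => ∫ τ in (0:ℝ)..t, (b τ)⁻¹ with hI
  set Q : ℝ → ℝ := fun t => 9 * s + 1 + L * (A + 1 + I t) with hQ
  have hI0 : ∀ t, 0 ≤ t → 0 ≤ I t := fun t ht => aux_B_nonneg b hb_pos t ht
  have hbd : ∀ t, HasDerivAt b (deriv b t) t := fun t =>
    ((hb.differentiable (by norm_num)) t).hasDerivAt
  have hden : ∀ t, 0 ≤ t → 0 < L + b t ^ 2 := fun t ht => by
    have := hb_pos t ht; positivity
  have hQ1 : ∀ t, 0 ≤ t → 1 ≤ Q t := fun t ht => by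
    have := hI0 t ht
    have : 0 ≤ L * (A + 1 + I t) := by positivity
    simp only [hQ]; linarith
  have hk0 : ∀ t, 0 ≤ t → 0 ≤ k t := fun t ht => by
    have := hb_pos t ht; have := hden t ht; simp only [hk]; positivity
  have hkeq : ∀ t, 0 ≤ t → k t * (L + b t ^ 2) = L * b t := fun t ht => by
    have := hden t ht; simp only [hk]; field_simp
  have hkk : ∀ t, 0 ≤ t → k t ^ 2 ≤ L := fun t ht => by
    have h1 := hkeq t ht
    have h2 := hk0 t ht
    have h3 := hb_pos t ht
    have hkb : k t ≤ b t := by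
      by_contra h
      push Not at h
      nlinarith [mul_nonneg hL (sub_nonneg.2 h.le), pow_pos h3 2, mul_pos (pow_pos h3 2) (lt_trans h3 h)]
    have hkbL : k t * b t ≤ L := by
      by_contra h
      push Not at h
      nlinarith [mul_nonneg h2 hL]
    nlinarith
  have hFE : ∀ t, 0 ≤ t → |(1 / 4) * (k t * v t * y t)| ≤ 1 / 8 * (v t ^ 2 + L * y t ^ 2) := by
    intro t ht
    have h1 := mul_le_mul_of_nonneg_right (hkk t ht) (sq_nonneg (y t))
    rw [abs_le]
    constructor
    · nlinarith [sq_nonneg (v t + k t * y t)]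
    · nlinarith [sq_nonneg (v t - k t * y t)]
  have hkd : ∀ t, 0 ≤ t → HasDerivAt k (L * deriv b t * (L - b t ^ 2) / (L + b t ^ 2) ^ 2) t := by
    intro t ht
    have h := ((hbd t).const_mul L).div (((hbd t).pow 2).const_add L) (hden t ht).ne'
    refine HasDerivAt.congr_deriv (f := k) h ?_
    simp only [Pi.pow_apply]
    congr 1
    push_cast
    ring
  have hkd' : ∀ t, 0 ≤ t → |L * deriv b t * (L - b t ^ 2) / (L + b t ^ 2) ^ 2| ≤ b t * k t := by
    intro t ht
    have hd := hden t ht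
    rw [abs_div, abs_mul, abs_mul, abs_of_nonneg hL, abs_of_nonneg (sq_nonneg (L + b t ^ 2)),
      div_le_iff₀ (by positivity)]
    have h1 : |L - b t ^ 2| ≤ L + b t ^ 2 := by
      rw [abs_le]; constructor <;> nlinarith [sq_nonneg (b t)]
    calc L * |deriv b t| * |L - b t ^ 2| ≤ L * b t ^ 2 * (L + b t ^ 2) := by
          apply mul_le_mul _ h1 (abs_nonneg _) (by positivity)
          exact mul_le_mul_of_nonneg_left (hb2 t ht) hL
      _ = b t * (k t * (L + b t ^ 2)) * (L + b t ^ 2) := by rw [hkeq t ht]; ring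
      _ = _ := by ring
  have hFd : ∀ t, 0 ≤ t → ∃ F', HasDerivAt F F' t ∧ F' ≤ -(1 / 9) * k t * F t := by
    intro t ht
    have h := (((hv t ht).pow 2).add (((hy t ht).pow 2).const_mul L)).add
      ((((hkd t ht).mul (hv t ht)).mul (hy t ht)).const_mul (1 / 4))
    refine ⟨_, h, ?_⟩
    have h2 := aux_alg (b t) (g t) L (k t) _ (v t) (y t) (hb_pos t ht) (hg_pos t ht).le (hbg t ht) hL
      (hk0 t ht) (hkeq t ht) (hkd' t ht)
    refine le_trans (le_of_eq ?_) (h2.trans (le_of_eq ?_))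
    · simp only [Pi.mul_apply]; push_cast; ring
    · simp only [hF]; ring
  have hQd : ∀ t, 0 ≤ t → HasDerivAt Q (L * (b t)⁻¹) t := by
    intro t ht
    exact (((aux_hasDerivAt_B b hb hb_pos t ht).const_add (A + 1)).const_mul L).const_add _
  have hF0 : ∀ t, 0 ≤ t → 0 ≤ F t := fun t ht => by
    have h1 := (abs_le.1 (hFE t ht)).1
    have : 0 ≤ v t ^ 2 + L * y t ^ 2 := by positivity
    simp only [hF]; linarith
  have hGd : ∀ t, 0 ≤ t → ∃ G', HasDerivAt (fun t => Q t ^ s * F t) G' t ∧ G' ≤ 0 := by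
    intro t ht
    obtain ⟨F', hF', hle⟩ := hFd t ht
    have hQp : 0 < Q t := lt_of_lt_of_le one_pos (hQ1 t ht)
    have hq := (hQd t ht).rpow_const (p := s) (Or.inl hQp.ne')
    refine ⟨_, hq.mul hF', ?_⟩
    have e : Q t ^ s = Q t ^ (s - 1) * Q t := by
      rw [Real.rpow_sub_one hQp.ne']; field_simp
    have hp := hb_pos t ht
    have key : 9 * (L * (b t)⁻¹ * s) ≤ Q t * k t := by
      have h1 := hAb t ht
      rw [div_le_iff₀ (by positivity)] at h1
      have h2 : Q t * k t - 9 * (L * (b t)⁻¹ * s)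
        = L * (Q t * b t ^ 2 - 9 * s * (L + b t ^ 2)) / (b t * (L + b t ^ 2)) := by
        have := hden t ht
        simp only [hk]; field_simp
      have h3 : 0 ≤ Q t * b t ^ 2 - 9 * s * (L + b t ^ 2) := by
        simp only [hQ]
        have h4 := mul_le_mul_of_nonneg_left h1 hL
        have : 0 ≤ L * b t ^ 2 := by positivity
        nlinarith [sq_nonneg (b t)]
      have : 0 ≤ L * (Q t * b t ^ 2 - 9 * s * (L + b t ^ 2)) / (b t * (L + b t ^ 2)) :=
        div_nonneg (mul_nonneg hL h3) (mul_pos hp (hden t ht)).le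
      linarith
    have h5 : Q t * F' ≤ Q t * (-(1 / 9) * k t * F t) := mul_le_mul_of_nonneg_left hle hQp.le
    have h6 := mul_le_mul_of_nonneg_right key (hF0 t ht)
    have h7 : L * (b t)⁻¹ * s * F t + Q t * F' ≤ 0 := by nlinarith
    have h8 : L * (b t)⁻¹ * s * Q t ^ (s - 1) * F t + Q t ^ s * F'
      = Q t ^ (s - 1) * (L * (b t)⁻¹ * s * F t + Q t * F') := by rw [e]; ring
    rw [h8]
    exact mul_nonpos_of_nonneg_of_nonpos (by positivity) h7
  have hanti : AntitoneOn (fun t => Q t ^ s * F t) (Set.Ici 0) := by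
    apply antitoneOn_of_deriv_nonpos (convex_Ici 0)
    · intro t ht
      obtain ⟨_, h, _⟩ := hGd t ht
      exact h.continuousAt.continuousWithinAt
    · intro t ht
      rw [interior_Ici] at ht
      obtain ⟨_, h, _⟩ := hGd t (le_of_lt ht)
      exact h.differentiableAt.differentiableWithinAt
    · intro t ht
      rw [interior_Ici] at ht
      obtain ⟨_, h, h'⟩ := hGd t (le_of_lt ht)
      rw [h.deriv]; exact h'
  have h := hanti (Set.mem_Ici.2 le_rfl) (Set.mem_Ici.2 ht) ht
  simp only at h
  have hE : 0 ≤ v t ^ 2 + L * y t ^ 2 := by positivity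
  have hE0 : 0 ≤ v 0 ^ 2 + L * y 0 ^ 2 := by positivity
  have hQs : 0 ≤ Q t ^ s := Real.rpow_nonneg (zero_le_one.trans (hQ1 t ht)) _
  have hQs0 : 0 ≤ Q 0 ^ s := Real.rpow_nonneg (zero_le_one.trans (hQ1 0 le_rfl)) _
  have hlow : 7 / 8 * (v t ^ 2 + L * y t ^ 2) ≤ F t := by
    have := (abs_le.1 (hFE t ht)).1
    simp only [hF]; linarith
  have hup : F 0 ≤ 9 / 8 * (v 0 ^ 2 + L * y 0 ^ 2) := by
    have := (abs_le.1 (hFE 0 le_rfl)).2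
    simp only [hF]; linarith
  have hIt := hI0 t ht
  have h1 : (L * (1 + I t)) ^ s ≤ Q t ^ s := by
    apply Real.rpow_le_rpow (by positivity) _ hs
    simp only [hQ]
    have : 0 ≤ L * A := by positivity
    nlinarith
  have h2 : Q 0 ^ s ≤ (9 * s + 1 + (A + 1)) ^ s * (1 + L) ^ s := by
    rw [← Real.mul_rpow (by positivity) (by positivity)]
    apply Real.rpow_le_rpow (zero_le_one.trans (hQ1 0 le_rfl)) _ hs
    simp only [hQ, hI, intervalIntegral.integral_same]
    nlinarith [mul_nonneg hs hL, mul_nonneg hA hL]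
  have c1 := mul_le_mul_of_nonneg_right h1 hE
  have c2 := mul_le_mul_of_nonneg_left hlow hQs
  have c3 := mul_le_mul_of_nonneg_left hup hQs0
  have c4 := mul_le_mul_of_nonneg_right h2 hE0
  have c5 := mul_nonneg hQs0 hE0
  nlinarith

/-- Pointwise estimate, real valued. -/
theorem aux_point (b g : ℝ → ℝ) (hb : ContDiff ℝ 2 b) (hb_pos : ∀ t : ℝ, 0 ≤ t → 0 < b t)
    (hb_eff : Tendsto (fun t => t * b t) atTop atTop) (Cb : ℝ)
    (hb1 : ∀ t : ℝ, 0 ≤ t → |deriv b t| ≤ Cb * b t / (1 + t))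
    (hb2 : ∀ t : ℝ, 0 ≤ t → |deriv b t| ≤ (b t) ^ 2)
    (hg_pos : ∀ t : ℝ, 0 ≤ t → 0 < g t)
    (hbg : ∀ t : ℝ, 0 ≤ t → b t * g t ≤ 1 / 2)
    (s : ℝ) (hs : 0 ≤ s) :
    ∃ C : ℝ, 0 < C ∧ ∀ (L : ℝ) (_ : 0 ≤ L) (y v : ℝ → ℝ)
      (_ : ∀ t, 0 ≤ t → HasDerivAt y (v t) t)
      (_ : ∀ t, 0 ≤ t → HasDerivAt v (-(L * y t) - (b t + g t * L) * v t) t)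
      (t : ℝ) (_ : 0 ≤ t),
      L ^ s * (v t ^ 2 + L * y t ^ 2) ≤
        C * (1 + ∫ τ in (0:ℝ)..t, (b τ)⁻¹) ^ (-(s + 1)) * ((1 + L) ^ (s + 1) * y 0 ^ 2)
        + C * (1 + ∫ τ in (0:ℝ)..t, (b τ)⁻¹) ^ (-s) * ((1 + L) ^ s * v 0 ^ 2) := by
  obtain ⟨A, hA, hAb⟩ := aux_A b hb hb_pos hb_eff Cb hb1 (9 * s) (by positivity)
  obtain ⟨A', hA', hAb'⟩ := aux_A b hb hb_pos hb_eff Cb hb1 (9 * (s + 1)) (by positivity)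
  set C1 := 2 * (9 * s + 1 + (A + 1)) ^ s with hC1
  set C2 := 2 * (9 * (s + 1) + 1 + (A' + 1)) ^ (s + 1) with hC2
  have hC1p : 0 < C1 := by positivity
  have hC2p : 0 < C2 := by positivity
  refine ⟨C1 + C2, by positivity, ?_⟩
  intro L hL y v hy hv t ht
  have e1 := aux_energy_s5 b g hb hb_pos hb2 hg_pos hbg s hs A hA hAb L hL y v hy hv t ht
  have e2 := aux_energy_s5 b g hb hb_pos hb2 hg_pos hbg (s + 1) (by positivity) A' hA' hAb' L hL y v hy hv t ht
  rw [← hC1] at e1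
  rw [← hC2] at e2
  have hI := aux_B_nonneg b hb_pos t ht
  set B := 1 + ∫ τ in (0:ℝ)..t, (b τ)⁻¹ with hB
  have hBp : 0 < B := by linarith
  rw [Real.mul_rpow hL hBp.le] at e1 e2
  rw [Real.rpow_add_one' hL (by positivity)] at e2
  have hBs : 0 < B ^ s := Real.rpow_pos_of_pos hBp _
  have hBs1 : 0 < B ^ (s + 1) := Real.rpow_pos_of_pos hBp _
  rw [Real.rpow_neg hBp.le, Real.rpow_neg hBp.le]
  set E := v t ^ 2 + L * y t ^ 2 with hE
  set X := v 0 ^ 2 with hX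
  set Y := y 0 ^ 2 with hY
  have hX0 : 0 ≤ X := sq_nonneg _
  have hY0 : 0 ≤ Y := sq_nonneg _
  have hE0 : 0 ≤ E := by positivity
  have hLs : 0 ≤ L ^ s := Real.rpow_nonneg hL _
  have hWs : 0 < (1 + L) ^ s := by positivity
  have hWs1 : 0 < (1 + L) ^ (s + 1) := by positivity
  -- divide
  have f1 : L ^ s * E ≤ C1 * (B ^ s)⁻¹ * (1 + L) ^ s * (X + L * Y) := by
    have : L ^ s * E * B ^ s ≤ C1 * (1 + L) ^ s * (X + L * Y) := by linarith
    rw [← le_div_iff₀ hBs] at this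
    refine this.trans (le_of_eq ?_)
    field_simp
  have f2 : L * (L ^ s * E) ≤ C2 * (B ^ (s + 1))⁻¹ * (1 + L) ^ (s + 1) * (X + L * Y) := by
    have : L * (L ^ s * E) * B ^ (s + 1) ≤ C2 * (1 + L) ^ (s + 1) * (X + L * Y) := by linarith
    rw [← le_div_iff₀ hBs1] at this
    refine this.trans (le_of_eq ?_)
    field_simp
  set P := (B ^ s)⁻¹ * (1 + L) ^ s with hP
  set R := (B ^ (s + 1))⁻¹ * (1 + L) ^ (s + 1) with hR
  have hP0 : 0 < P := by positivity
  have hR0 : 0 < R := by positivity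
  have goal : L ^ s * E ≤ (C1 + C2) * R * Y + (C1 + C2) * P * X := by
    set Z := L ^ s * E with hZ
    have hZ0 : 0 ≤ Z := by positivity
    have f1' : Z ≤ C1 * P * (X + L * Y) := by rw [hP]; linarith
    have f2' : L * Z ≤ C2 * R * (X + L * Y) := by rw [hR]; linarith
    rcases (add_nonneg hX0 (mul_nonneg hL hY0)).eq_or_lt with h0 | h0
    · rw [← h0] at f1'
      have : 0 ≤ (C1 + C2) * R * Y + (C1 + C2) * P * X := by positivity
      linarith
    · have : Z * (X + L * Y) ≤ (C1 * P * X + C2 * R * Y) * (X + L * Y) := by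
        have a1 := mul_le_mul_of_nonneg_right f1' hX0
        have a2 := mul_le_mul_of_nonneg_right f2' hY0
        linarith
      have := le_of_mul_le_mul_right this h0
      have b1 : 0 ≤ C2 * P * X := by positivity
      have b2 : 0 ≤ C1 * R * Y := by positivity
      linarith
  rw [hP, hR] at goal
  linarith

/-- Pointwise estimate, complex valued. -/
theorem aux_point_complex (b g : ℝ → ℝ) (hb : ContDiff ℝ 2 b) (hb_pos : ∀ t : ℝ, 0 ≤ t → 0 < b t)
    (hb_eff : Tendsto (fun t => t * b t) atTop atTop) (Cb : ℝ)
    (hb1 : ∀ t : ℝ, 0 ≤ t → |deriv b t| ≤ Cb * b t / (1 + t))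
    (hb2 : ∀ t : ℝ, 0 ≤ t → |deriv b t| ≤ (b t) ^ 2)
    (hg_pos : ∀ t : ℝ, 0 ≤ t → 0 < g t)
    (hbg : ∀ t : ℝ, 0 ≤ t → b t * g t ≤ 1 / 2)
    (s : ℝ) (hs : 0 ≤ s) :
    ∃ C : ℝ, 0 < C ∧ ∀ (L : ℝ) (_ : 0 ≤ L) (w : ℝ → ℂ) (_ : ContDiff ℝ 2 w)
      (_ : ∀ t, 0 ≤ t → deriv (deriv w) t + (L : ℂ) * w t +
              ((b t + g t * L : ℝ) : ℂ) * deriv w t = 0)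
      (t : ℝ) (_ : 0 ≤ t),
      L ^ s * (‖deriv w t‖ ^ 2 + L * ‖w t‖ ^ 2) ≤
        C * (1 + ∫ τ in (0:ℝ)..t, (b τ)⁻¹) ^ (-(s + 1)) * ((1 + L) ^ (s + 1) * ‖w 0‖ ^ 2)
        + C * (1 + ∫ τ in (0:ℝ)..t, (b τ)⁻¹) ^ (-s) * ((1 + L) ^ s * ‖deriv w 0‖ ^ 2) := by
  obtain ⟨C, hC, h⟩ := aux_point b g hb hb_pos hb_eff Cb hb1 hb2 hg_pos hbg s hs
  refine ⟨C, hC, ?_⟩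
  intro L hL w hw hode t ht
  have hd1 : ∀ t, HasDerivAt w (deriv w t) t := fun t =>
    ((hw.differentiable (by norm_num)) t).hasDerivAt
  have hw' : ContDiff ℝ 1 (deriv w) := by
    have : ContDiff ℝ (1 + 1) w := by simpa [one_add_one_eq_two] using hw
    exact (contDiff_succ_iff_deriv.1 this).2.2
  have hd2 : ∀ t, HasDerivAt (deriv w) (deriv (deriv w) t) t := fun t =>
    ((hw'.differentiable (by norm_num)) t).hasDerivAt
  have hre := h L hL (fun t => (w t).re) (fun t => (deriv w t).re)
    (fun t _ => Complex.reCLM.hasFDerivAt.comp_hasDerivAt t (hd1 t))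
    (fun t ht => by
      have h1 := Complex.reCLM.hasFDerivAt.comp_hasDerivAt t (hd2 t)
      have h2 := congrArg Complex.re (hode t ht)
      simp only [Complex.add_re, Complex.re_ofReal_mul, Complex.zero_re] at h2
      have h3 : -(L * (w t).re) - (b t + g t * L) * (deriv w t).re = (deriv (deriv w) t).re := by
        linarith
      rw [h3]
      exact h1) t ht
  have him := h L hL (fun t => (w t).im) (fun t => (deriv w t).im)
    (fun t _ => Complex.imCLM.hasFDerivAt.comp_hasDerivAt t (hd1 t))
    (fun t ht => by
      have h1 := Complex.imCLM.hasFDerivAt.comp_hasDerivAt t (hd2 t)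
      have h2 := congrArg Complex.im (hode t ht)
      simp only [Complex.add_im, Complex.im_ofReal_mul, Complex.zero_im] at h2
      have h3 : -(L * (w t).im) - (b t + g t * L) * (deriv w t).im = (deriv (deriv w) t).im := by
        linarith
      rw [h3]
      exact h1) t ht
  have hn : ∀ z : ℂ, ‖z‖ ^ 2 = z.re ^ 2 + z.im ^ 2 := fun z => by
    rw [Complex.sq_norm, Complex.normSq_apply]; ring
  simp only [hn]
  linarith

theorem aux_integrate {X : Type*} [MeasurableSpace X] (μ : Measure X) (f h1 h2 : X → ℝ)
    (C D B p q : ℝ) (hC : 0 ≤ C) (hCD : C ≤ D ^ 2) (hD : 0 ≤ D) (hB : 0 < B)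
    (hf : ∀ x, 0 ≤ f x) (hi1 : Integrable h1 μ) (hi2 : Integrable h2 μ)
    (hp1 : ∀ x, 0 ≤ h1 x) (hp2 : ∀ x, 0 ≤ h2 x)
    (hle : ∀ x, f x ≤ C * B ^ (-p) * h1 x + C * B ^ (-q) * h2 x) :
    Real.sqrt (∫ x, f x ∂μ) ≤ D * B ^ (-(p / 2)) * Real.sqrt (∫ x, h1 x ∂μ)
      + D * B ^ (-(q / 2)) * Real.sqrt (∫ x, h2 x ∂μ) := by
  have h := integral_mono_of_nonneg (μ := μ) (Eventually.of_forall hf)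
    ((hi1.const_mul (C * B ^ (-p))).add (hi2.const_mul (C * B ^ (-q)))) (Eventually.of_forall hle)
  simp only [Pi.add_apply] at h
  rw [integral_add (hi1.const_mul _) (hi2.const_mul _), integral_const_mul, integral_const_mul] at h
  have J1 : 0 ≤ ∫ x, h1 x ∂μ := integral_nonneg hp1
  have J2 : 0 ≤ ∫ x, h2 x ∂μ := integral_nonneg hp2
  have sq : ∀ r : ℝ, B ^ (-r) = (B ^ (-(r / 2))) ^ 2 := fun r => by
    rw [← Real.rpow_natCast, ← Real.rpow_mul hB.le]; congr 1; push_cast; ring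
  have hBp : ∀ r : ℝ, 0 ≤ B ^ r := fun r => Real.rpow_nonneg hB.le r
  have key : ∀ (r J : ℝ), 0 ≤ J → C * B ^ (-r) * J ≤ (D * B ^ (-(r / 2)) * Real.sqrt J) ^ 2 := by
    intro r J hJ
    rw [mul_pow, mul_pow, Real.sq_sqrt hJ, ← sq]
    exact mul_le_mul_of_nonneg_right (mul_le_mul_of_nonneg_right hCD (hBp _)) hJ
  have n1 : 0 ≤ D * B ^ (-(p / 2)) * Real.sqrt (∫ x, h1 x ∂μ) :=
    mul_nonneg (mul_nonneg hD (hBp _)) (Real.sqrt_nonneg _)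
  have n2 : 0 ≤ D * B ^ (-(q / 2)) * Real.sqrt (∫ x, h2 x ∂μ) :=
    mul_nonneg (mul_nonneg hD (hBp _)) (Real.sqrt_nonneg _)
  apply Real.sqrt_le_iff.2 ⟨add_nonneg n1 n2, ?_⟩
  have k1 := key p _ J1
  have k2 := key q _ J2
  nlinarith [mul_nonneg n1 n2]

/-- Theorem 4.5 of the paper: effective friction together with an integrable and
decaying viscoelastic coefficient `g = g(t)`. -/
theorem effective_integrable_decaying_viscoelastic_decay
    (n : ℕ) (hn : 1 ≤ n)
    (b g : ℝ → ℝ)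
    (hb_smooth : ContDiff ℝ 2 b)
    (hb_pos : ∀ t : ℝ, 0 ≤ t → 0 < b t)
    (hb_sign : (∀ t : ℝ, 0 ≤ t → 0 ≤ deriv b t) ∨ (∀ t : ℝ, 0 ≤ t → deriv b t ≤ 0))
    (hb_eff : Tendsto (fun t => t * b t) atTop atTop)
    (Cb : ℝ) (hCb : 0 < Cb)
    (hb1 : ∀ t : ℝ, 0 ≤ t → |deriv b t| ≤ Cb * b t / (1 + t))
    (hb2 : ∀ t : ℝ, 0 ≤ t → |deriv (deriv b) t| ≤ Cb * b t / (1 + t) ^ 2)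
    (a : ℝ) (ha : a < 1)
    (hbEF : ∀ t : ℝ, 0 ≤ t → |deriv b t| ≤ a * (b t) ^ 2)
    (hg_smooth : ContDiff ℝ 1 g)
    (hg_pos : ∀ t : ℝ, 0 ≤ t → 0 < g t)
    (hg_deriv_neg : ∀ t : ℝ, 0 ≤ t → deriv g t < 0)
    (hg_int : IntegrableOn g (Set.Ici (0 : ℝ)))
    (hbg : ∀ t : ℝ, 0 ≤ t → b t * g t ≤ 1 / 2)
    (hbg' : ∀ t : ℝ, 0 ≤ t → deriv b t / b t ≤ -(deriv g t) / g t)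
    (hg5 : IntegrableOn (fun t => (deriv g t) ^ 2 / g t) (Set.Ici (0 : ℝ))) :
    ∃ t₀ : ℝ, 0 ≤ t₀ ∧
      ∀ σ : ℝ, ∃ C' : ℝ, 0 < C' ∧
        ∀ (uh : ℝ → EuclideanSpace ℝ (Fin n) → ℂ) (u₀ u₁ : EuclideanSpace ℝ (Fin n) → ℂ),
          Measurable (fun p : ℝ × EuclideanSpace ℝ (Fin n) => uh p.1 p.2) →
          (∀ ξ : EuclideanSpace ℝ (Fin n), ContDiff ℝ 2 (fun s => uh s ξ)) →
          (∀ (ξ : EuclideanSpace ℝ (Fin n)) (t : ℝ), 0 ≤ t →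
            deriv (deriv (fun s => uh s ξ)) t + ((‖ξ‖ ^ 2 : ℝ) : ℂ) * uh t ξ +
              ((b t + g t * ‖ξ‖ ^ 2 : ℝ) : ℂ) * deriv (fun s => uh s ξ) t = 0) →
          (∀ ξ : EuclideanSpace ℝ (Fin n), uh 0 ξ = u₀ ξ) →
          (∀ ξ : EuclideanSpace ℝ (Fin n), deriv (fun s => uh s ξ) 0 = u₁ ξ) →
          ∀ t : ℝ, t₀ ≤ t →
            Integrable (fun ξ : EuclideanSpace ℝ (Fin n) => (1 + ‖ξ‖ ^ 2) ^ (σ) * ‖u₀ ξ‖ ^ 2) →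
            Integrable (fun ξ : EuclideanSpace ℝ (Fin n) => (1 + ‖ξ‖ ^ 2) ^ (σ - 1) * ‖u₁ ξ‖ ^ 2) →
            Integrable (fun ξ : EuclideanSpace ℝ (Fin n) => (1 + ‖ξ‖ ^ 2) ^ (σ + 1) * ‖u₀ ξ‖ ^ 2) →
            Integrable (fun ξ : EuclideanSpace ℝ (Fin n) => (1 + ‖ξ‖ ^ 2) ^ (σ) * ‖u₁ ξ‖ ^ 2) →
            ((1 ≤ σ →
              Real.sqrt (∫ ξ : EuclideanSpace ℝ (Fin n), ‖ξ‖ ^ (2 * σ) * ‖uh t ξ‖ ^ 2) ≤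
                C' * (1 + ∫ τ in t₀..t, (b τ)⁻¹) ^ (-(σ / 2)) * Real.sqrt (∫ ξ : EuclideanSpace ℝ (Fin n), (1 + ‖ξ‖ ^ 2) ^ (σ) * ‖u₀ ξ‖ ^ 2) +
                  C' * (1 + ∫ τ in t₀..t, (b τ)⁻¹) ^ (-((σ - 1) / 2)) * Real.sqrt (∫ ξ : EuclideanSpace ℝ (Fin n), (1 + ‖ξ‖ ^ 2) ^ (σ - 1) * ‖u₁ ξ‖ ^ 2)) ∧
            (0 ≤ σ →
              Real.sqrt (∫ ξ : EuclideanSpace ℝ (Fin n), ‖ξ‖ ^ (2 * σ) * ‖deriv (fun s => uh s ξ) t‖ ^ 2) ≤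
                C' * (1 + ∫ τ in t₀..t, (b τ)⁻¹) ^ (-((σ + 1) / 2)) * Real.sqrt (∫ ξ : EuclideanSpace ℝ (Fin n), (1 + ‖ξ‖ ^ 2) ^ (σ + 1) * ‖u₀ ξ‖ ^ 2) +
                  C' * (1 + ∫ τ in t₀..t, (b τ)⁻¹) ^ (-(σ / 2)) * Real.sqrt (∫ ξ : EuclideanSpace ℝ (Fin n), (1 + ‖ξ‖ ^ 2) ^ (σ) * ‖u₁ ξ‖ ^ 2))) := by
  have hb2' : ∀ t : ℝ, 0 ≤ t → |deriv b t| ≤ (b t) ^ 2 := fun t ht =>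
    (hbEF t ht).trans (by nlinarith [sq_nonneg (b t)])
  have hpt := aux_point_complex b g hb_smooth hb_pos hb_eff Cb hb1 hb2' hg_pos hbg
  refine ⟨0, le_rfl, fun σ => ?_⟩
  have hpt' : ∀ s : ℝ, ∃ C : ℝ, 0 < C ∧ (0 ≤ s → ∀ (L : ℝ) (_ : 0 ≤ L) (w : ℝ → ℂ) (_ : ContDiff ℝ 2 w)
      (_ : ∀ t, 0 ≤ t → deriv (deriv w) t + (L : ℂ) * w t +
              ((b t + g t * L : ℝ) : ℂ) * deriv w t = 0)
      (t : ℝ) (_ : 0 ≤ t),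
      L ^ s * (‖deriv w t‖ ^ 2 + L * ‖w t‖ ^ 2) ≤
        C * (1 + ∫ τ in (0:ℝ)..t, (b τ)⁻¹) ^ (-(s + 1)) * ((1 + L) ^ (s + 1) * ‖w 0‖ ^ 2)
        + C * (1 + ∫ τ in (0:ℝ)..t, (b τ)⁻¹) ^ (-s) * ((1 + L) ^ s * ‖deriv w 0‖ ^ 2)) := by
    intro s
    by_cases hs : 0 ≤ s
    · obtain ⟨C, hC, h⟩ := hpt s hs
      exact ⟨C, hC, fun _ => h⟩
    · exact ⟨1, one_pos, fun h => absurd h hs⟩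
  obtain ⟨C1, hC1, h1⟩ := hpt' (σ - 1)
  obtain ⟨C2, hC2, h2⟩ := hpt' σ
  refine ⟨1 + C1 + C2, by positivity, ?_⟩
  intro uh u₀ u₁ _ hsm hode hi0 hi1 t ht i1 i2 i3 i4
  have hI := aux_B_nonneg b hb_pos t ht
  have hB : 0 < 1 + ∫ τ in (0:ℝ)..t, (b τ)⁻¹ := by linarith
  have hnn : ∀ (r : ℝ) (x : EuclideanSpace ℝ (Fin n)) (z : ℂ), 0 ≤ (1 + ‖x‖ ^ 2) ^ r * ‖z‖ ^ 2 :=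
    fun r x z => by positivity
  have hpow : ∀ (r : ℝ) (x : EuclideanSpace ℝ (Fin n)), ‖x‖ ^ (2 * r) = (‖x‖ ^ 2) ^ r := by
    intro r x
    rw [Real.rpow_mul (norm_nonneg _), Real.rpow_two]
  constructor
  · intro hσ
    refine aux_integrate volume _ _ _ C1 (1 + C1 + C2) _ σ (σ - 1) hC1.le (by nlinarith)
      (by positivity) hB (fun x => by positivity) i1 i2 (fun x => hnn _ _ _) (fun x => hnn _ _ _) ?_
    intro x
    have h := h1 (by linarith) (‖x‖ ^ 2) (by positivity) (fun s => uh s x) (hsm x) (hode x) t ht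
    simp only [hi0, hi1, sub_add_cancel] at h
    refine le_trans ?_ h
    have e : (‖x‖ ^ 2) ^ σ = (‖x‖ ^ 2) ^ (σ - 1) * ‖x‖ ^ 2 := by
      rw [← Real.rpow_add_one' (by positivity) (by linarith), sub_add_cancel]
    rw [hpow, e]
    have : 0 ≤ (‖x‖ ^ 2) ^ (σ - 1) * ‖deriv (fun s => uh s x) t‖ ^ 2 := by positivity
    linarith
  · intro hσ
    refine aux_integrate volume _ _ _ C2 (1 + C1 + C2) _ (σ + 1) σ hC2.le (by nlinarith)
      (by positivity) hB (fun x => by positivity) i3 i4 (fun x => hnn _ _ _) (fun x => hnn _ _ _) ?_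
    intro x
    have h := h2 hσ (‖x‖ ^ 2) (by positivity) (fun s => uh s x) (hsm x) (hode x) t ht
    simp only [hi0, hi1] at h
    refine le_trans ?_ h
    rw [hpow]
    have : 0 ≤ (‖x‖ ^ 2) ^ σ * (‖x‖ ^ 2 * ‖uh t x‖ ^ 2) := by positivity
    linarith
end

section
/- Let n ≥ 1. Assume b : [0,∞) → ℝ is C² with b(t) > 0 and b'(t) > 0 for all t, |b'(t)| ≤ C b(t)/(1+t) and |b''(t)| ≤ C b(t)/(1+t)² for all t (some C > 0), ∫₀^∞ 1/b(τ) dτ < ∞, and b'(t) = o(b(t)²) as t → ∞ (i.e. for every ε > 0 there is T with |b'(t)| ≤ ε b(t)² for t ≥ T). Assume g : [0,∞) → ℝ is C² with g(t) > 0 and g'(t) > 0 for all t, ∫₀^∞ 1/g(τ) dτ < ∞, and, with G(t) = ½∫₀ᵗ g(τ) dτ, there are constants C₁, C₂ > 0 with |g'(t)| ≤ C₁ g(t)²/G(t) and |g''(t)| ≤ C₂ g(t)³/G(t)² for all t > 0. Write ⟨ξ⟩ = (1+|ξ|²)^{1/2}. Then for every real σ ≥ 0 there is C' > 0 such that every Fourier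 solution û with data û₀, û₁ satisfies for all t ≥ 0 (whenever the data integrals are finite): (∫ |ξ|^{2σ}|û(t,ξ)|² dξ)^{1/2} ≤ C'[ (∫ |ξ|^{2σ}|û₀|² dξ)^{1/2} + (∫ |ξ|^{2σ}⟨ξ⟩^{−4}|û₁|² dξ)^{1/2} ] and (∫ |ξ|^{2σ}|∂ₜû(t,ξ)|² dξ)^{1/2} ≤ C' g(t)[ (∫ |ξ|^{2(σ+2)}|û₀|² dξ)^{1/2} + (∫ |ξ|^{2(σ+2)}⟨ξ⟩^{−4}|û₁|² dξ)^{1/2} ] + C' b(t)[ (∫ |ξ|^{2σ}|û₀|² dξ)^{1/2} + (∫ |ξ|^{2σ}⟨ξ⟩^{−4}|û₁|² dξ)^{1/2} ]. -/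
open MeasureTheory Filter

/-- Subadditivity of the square root. -/
lemma sqrt_add_le_aux {x y : ℝ} (hx : 0 ≤ x) (hy : 0 ≤ y) :
    Real.sqrt (x + y) ≤ Real.sqrt x + Real.sqrt y := by
  refine Real.sqrt_le_iff.2 ⟨by positivity, ?_⟩
  nlinarith [Real.sq_sqrt hx, Real.sq_sqrt hy,
    mul_nonneg (Real.sqrt_nonneg x) (Real.sqrt_nonneg y)]

/-- Elementary algebra for the derivative estimate. -/
lemma sq_bound_aux_s6 (C x y p q r d : ℝ) (hd0 : 0 ≤ d)
    (hd : d ≤ C * (x + y) * (p + q * r ^ 2)) :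
    d ^ 2 ≤ C ^ 2 * ((2 * (x ^ 2 + y ^ 2)) * (2 * (p ^ 2 + q ^ 2 * r ^ 4))) := by
  have h2 : d ^ 2 ≤ (C * (x + y) * (p + q * r ^ 2)) ^ 2 := pow_le_pow_left₀ hd0 hd 2
  have h3 : (x + y) ^ 2 ≤ 2 * (x ^ 2 + y ^ 2) := by nlinarith [sq_nonneg (x - y)]
  have h4 : (p + q * r ^ 2) ^ 2 ≤ 2 * (p ^ 2 + q ^ 2 * r ^ 4) := by
    nlinarith [sq_nonneg (p - q * r ^ 2)]
  have h5 := mul_le_mul h3 h4 (sq_nonneg _) (by positivity)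
  have h6 := mul_le_mul_of_nonneg_left h5 (sq_nonneg C)
  refine h2.trans (le_trans (le_of_eq ?_) h6)
  ring

/-- Derivative of the regularized norm. -/
lemma regnorm_hasDerivAt (f : ℝ → ℂ) (f' : ℂ) (t ε : ℝ) (hε : 0 < ε)
    (hf : HasDerivAt f f' t) :
    HasDerivAt (fun s => Real.sqrt (‖f s‖ ^ 2 + ε ^ 2))
      (inner ℝ (f t) f' / Real.sqrt (‖f t‖ ^ 2 + ε ^ 2)) t := by
  have h1 := (hf.norm_sq.add_const (ε ^ 2)).sqrt (by positivity)
  convert h1 using 1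
  field_simp

/-- Pointwise estimate for the damped oscillator with increasing damping. -/
lemma pointwise_damped (b g : ℝ → ℝ)
    (hb_smooth : ContDiff ℝ 2 b)
    (hb_pos : ∀ t : ℝ, 0 ≤ t → 0 < b t)
    (hb_deriv_pos : ∀ t : ℝ, 0 ≤ t → 0 < deriv b t)
    (hg_smooth : ContDiff ℝ 2 g)
    (hg_pos : ∀ t : ℝ, 0 ≤ t → 0 < g t)
    (hg_deriv_pos : ∀ t : ℝ, 0 ≤ t → 0 < deriv g t)
    (hg_int : IntegrableOn (fun t => (g t)⁻¹) (Set.Ici (0 : ℝ)))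
    (r : ℝ) (u : ℝ → ℂ) (hu : ContDiff ℝ 2 u)
    (hode : ∀ t : ℝ, 0 ≤ t → deriv (deriv u) t + ((r ^ 2 : ℝ) : ℂ) * u t +
      ((b t + g t * r ^ 2 : ℝ) : ℂ) * deriv u t = 0) (t : ℝ) (ht : 0 ≤ t) :
    ‖u t‖ + ‖deriv u t‖ / (b t + g t * r ^ 2) ≤
      Real.exp (∫ s in Set.Ici (0 : ℝ), (g s)⁻¹) *
        (‖u 0‖ + ‖deriv u 0‖ / (b 0 + g 0 * r ^ 2)) := by
  set K := ∫ s in Set.Ici (0 : ℝ), (g s)⁻¹ with hK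
  set a : ℝ → ℝ := fun t => b t + g t * r ^ 2 with ha
  set v : ℝ → ℂ := deriv u with hv
  have ha_pos : ∀ t, 0 ≤ t → 0 < a t := fun t ht => by
    have := hb_pos t ht
    have := hg_pos t ht
    simp only [ha]; positivity
  have hbd : ∀ t, HasDerivAt b (deriv b t) t := fun t =>
    (hb_smooth.differentiable (by norm_num) t).hasDerivAt
  have hgd : ∀ t, HasDerivAt g (deriv g t) t := fun t =>
    (hg_smooth.differentiable (by norm_num) t).hasDerivAt
  have had : ∀ t, HasDerivAt a (deriv b t + deriv g t * r ^ 2) t := fun t =>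
    (hbd t).add ((hgd t).mul_const _)
  have hud : ∀ t, HasDerivAt u (v t) t := fun t =>
    (hu.differentiable (by norm_num) t).hasDerivAt
  have hvC : ContDiff ℝ 1 v := by
    have : ContDiff ℝ (1 + 1) u := by simpa [one_add_one_eq_two] using hu
    exact (contDiff_succ_iff_deriv.1 this).2.2
  have hvd : ∀ t, HasDerivAt v (deriv v t) t := fun t =>
    (hvC.differentiable (by norm_num) t).hasDerivAt
  set Γ : ℝ → ℝ := fun t => ∫ s in (0:ℝ)..t, (g (max s 0))⁻¹ with hΓ
  have hcont : Continuous (fun s => (g (max s 0))⁻¹) := by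
    refine Continuous.inv₀ (hg_smooth.continuous.comp (by fun_prop)) ?_
    intro s
    exact (hg_pos _ (le_max_right _ _)).ne'
  have hΓd : ∀ t, HasDerivAt Γ ((g (max t 0))⁻¹) t := fun t =>
    hcont.integral_hasStrictDerivAt 0 t |>.hasDerivAt
  have hΓ0 : Γ 0 = 0 := by simp [hΓ]
  have hΓK : Γ t ≤ K := by
    simp only [hΓ, hK]
    rw [intervalIntegral.integral_of_le ht]
    have : ∫ s in Set.Ioc 0 t, (g (max s 0))⁻¹ = ∫ s in Set.Ioc 0 t, (g s)⁻¹ := by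
      refine setIntegral_congr_fun measurableSet_Ioc ?_
      intro s hs
      simp [max_eq_left hs.1.le]
    rw [this]
    refine setIntegral_mono_set hg_int ?_ ?_
    · refine (ae_restrict_mem measurableSet_Ici).mono ?_
      intro s hs
      exact (inv_pos.2 (hg_pos s hs)).le
    · exact Eventually.of_forall (fun s hs => hs.1.le)
  have key : ∀ ε : ℝ, 0 < ε →
      (‖u t‖ + ‖v t‖ / a t) * Real.exp (-Γ t) ≤
        (Real.sqrt (‖u 0‖ ^ 2 + ε ^ 2) + Real.sqrt (‖v 0‖ ^ 2 + ε ^ 2) / a 0) + ε * t := by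
    intro ε hε
    set U : ℝ → ℝ := fun s => Real.sqrt (‖u s‖ ^ 2 + ε ^ 2) with hU
    set V : ℝ → ℝ := fun s => Real.sqrt (‖v s‖ ^ 2 + ε ^ 2) with hV
    have hUp : ∀ s, 0 < U s := fun s => Real.sqrt_pos.2 (by positivity)
    have hVp : ∀ s, 0 < V s := fun s => Real.sqrt_pos.2 (by positivity)
    have hUu : ∀ s, ‖u s‖ ≤ U s := fun s => Real.le_sqrt_of_sq_le (by nlinarith)
    have hVv : ∀ s, ‖v s‖ ≤ V s := fun s => Real.le_sqrt_of_sq_le (by nlinarith)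
    have hVe : ∀ s, ε ≤ V s := fun s => Real.le_sqrt_of_sq_le (by nlinarith [norm_nonneg (v s)])
    have hVsq : ∀ s, V s ^ 2 = ‖v s‖ ^ 2 + ε ^ 2 := fun s => Real.sq_sqrt (by positivity)
    set F : ℝ → ℝ := fun s => (U s + V s / a s) * Real.exp (-Γ s) - ε * s with hF
    have hFd : ∀ s, 0 ≤ s → HasDerivAt F
        ((inner ℝ (u s) (v s) / U s +
          ((inner ℝ (v s) (deriv v s) / V s) * a s -
            V s * (deriv b s + deriv g s * r ^ 2)) / a s ^ 2) * Real.exp (-Γ s) +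
          (U s + V s / a s) * (Real.exp (-Γ s) * (-(g (max s 0))⁻¹)) - ε * 1) s := by
      intro s hs
      have h1 := regnorm_hasDerivAt u (v s) s ε hε (hud s)
      have h2 := regnorm_hasDerivAt v (deriv v s) s ε hε (hvd s)
      exact ((h1.add (h2.div (had s) (ha_pos s hs).ne')).mul ((hΓd s).neg.exp)).sub
        ((hasDerivAt_id s).const_mul ε)
    have hneg : ∀ s, 0 ≤ s → deriv F s ≤ 0 := by
      intro s hs
      rw [(hFd s hs).deriv, max_eq_left hs]
      have hap := ha_pos s hs
      have hgp := hg_pos s hs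
      have hda : 0 ≤ deriv b s + deriv g s * r ^ 2 := by
        have := hb_deriv_pos s hs
        have := hg_deriv_pos s hs
        positivity
      have e1 : inner ℝ (u s) (v s) / U s ≤ V s := by
        rw [div_le_iff₀ (hUp s)]
        calc inner ℝ (u s) (v s) ≤ ‖u s‖ * ‖v s‖ := real_inner_le_norm _ _
          _ ≤ U s * V s := mul_le_mul (hUu s) (hVv s) (norm_nonneg _) (hUp s).le
          _ = _ := mul_comm _ _
      have hvs : deriv v s = (-(r ^ 2)) • u s + (-(a s)) • v s := by
        have := hode s hs
        simp only [Complex.real_smul]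
        push_cast [ha] at this ⊢
        linear_combination this
      have e2 : inner ℝ (v s) (deriv v s) / V s ≤ r ^ 2 * U s - a s * (V s - ε) := by
        rw [div_le_iff₀ (hVp s), hvs, inner_add_right, real_inner_smul_right,
          real_inner_smul_right, real_inner_self_eq_norm_sq]
        have i1 : -(inner ℝ (v s) (u s)) ≤ V s * U s := by
          calc -(inner ℝ (v s) (u s)) ≤ |inner ℝ (v s) (u s)| := neg_le_abs _
            _ ≤ ‖v s‖ * ‖u s‖ := abs_real_inner_le_norm _ _
            _ ≤ V s * U s := mul_le_mul (hVv s) (hUu s) (norm_nonneg _) (hVp s).le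
        have i2 : r ^ 2 * (-(inner ℝ (v s) (u s))) ≤ r ^ 2 * (V s * U s) :=
          mul_le_mul_of_nonneg_left i1 (sq_nonneg r)
        have i3 : (V s - ε) * V s ≤ ‖v s‖ ^ 2 := by
          nlinarith [hVsq s, hVe s]
        have i4 := mul_le_mul_of_nonneg_left i3 hap.le
        nlinarith
      have e3 : ((inner ℝ (v s) (deriv v s) / V s) * a s -
            V s * (deriv b s + deriv g s * r ^ 2)) / a s ^ 2 ≤ (g s)⁻¹ * U s - V s + ε := by
        have j0 : 0 ≤ V s * (deriv b s + deriv g s * r ^ 2) := mul_nonneg (hVp s).le hda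
        have j1 : r ^ 2 ≤ (g s)⁻¹ * a s := by
          have : (g s)⁻¹ * a s = (g s)⁻¹ * b s + r ^ 2 := by
            simp only [ha]; field_simp
          rw [this]
          have := hb_pos s hs
          have : 0 < (g s)⁻¹ * b s := by positivity
          linarith
        rw [div_le_iff₀ (by positivity)]
        have j2 := mul_le_mul_of_nonneg_right e2 hap.le
        have j3 := mul_le_mul_of_nonneg_right j1 (mul_nonneg (hUp s).le hap.le)
        nlinarith
      have hE := Real.exp_pos (-Γ s)
      have hΓs : 0 ≤ Γ s := by
        simp only [hΓ]
        refine intervalIntegral.integral_nonneg hs ?_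
        intro x hx
        exact (inv_pos.2 (hg_pos _ (le_max_right _ _))).le
      have hE1 : Real.exp (-Γ s) ≤ 1 := Real.exp_le_one_iff.2 (by linarith)
      have k1 : 0 ≤ (g s)⁻¹ * (V s / a s) := by
        have := hVp s
        positivity
      have k2 : (inner ℝ (u s) (v s) / U s +
          ((inner ℝ (v s) (deriv v s) / V s) * a s -
            V s * (deriv b s + deriv g s * r ^ 2)) / a s ^ 2) - (U s + V s / a s) * (g s)⁻¹ ≤ ε := by
        nlinarith
      have k3 := mul_le_mul_of_nonneg_right k2 hE.le
      have k4 : ε * Real.exp (-Γ s) ≤ ε := by nlinarith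
      nlinarith
    have hanti : AntitoneOn F (Set.Ici 0) := by
      refine antitoneOn_of_deriv_nonpos (convex_Ici 0) ?_ ?_ ?_
      · intro s hs
        exact (hFd s hs).continuousAt.continuousWithinAt
      · intro s hs
        rw [interior_Ici] at hs
        exact (hFd s (le_of_lt hs)).differentiableAt.differentiableWithinAt
      · intro s hs
        rw [interior_Ici] at hs
        exact hneg s (le_of_lt hs)
    have hfin := hanti (Set.mem_Ici.2 le_rfl) (Set.mem_Ici.2 ht) ht
    simp only [hF, hΓ0, neg_zero, Real.exp_zero, mul_one, mul_zero, sub_zero] at hfin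
    have hle : (‖u t‖ + ‖v t‖ / a t) * Real.exp (-Γ t) ≤ (U t + V t / a t) * Real.exp (-Γ t) := by
      refine mul_le_mul_of_nonneg_right ?_ (Real.exp_pos _).le
      exact add_le_add (hUu t) (div_le_div_of_nonneg_right (hVv t) (ha_pos t ht).le)
    linarith
  have hlim : (‖u t‖ + ‖v t‖ / a t) * Real.exp (-Γ t) ≤ ‖u 0‖ + ‖v 0‖ / a 0 := by
    have hc : Continuous (fun ε : ℝ => (Real.sqrt (‖u 0‖ ^ 2 + ε ^ 2) +
        Real.sqrt (‖v 0‖ ^ 2 + ε ^ 2) / a 0) + ε * t) := by fun_prop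
    have ht0 := (hc.tendsto 0).mono_left (nhdsWithin_le_nhds (s := Set.Ioi 0))
    have := ge_of_tendsto ht0 (by
      filter_upwards [self_mem_nhdsWithin] with ε hε
      exact key ε hε)
    simpa [Real.sqrt_sq] using this
  have hW0 : 0 ≤ ‖u 0‖ + ‖v 0‖ / a 0 := by
    have := ha_pos 0 le_rfl
    positivity
  calc ‖u t‖ + ‖v t‖ / a t
      = Real.exp (Γ t) * ((‖u t‖ + ‖v t‖ / a t) * Real.exp (-Γ t)) := by
        rw [mul_comm (‖u t‖ + ‖v t‖ / a t), ← mul_assoc, ← Real.exp_add]; simp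
    _ ≤ Real.exp (Γ t) * (‖u 0‖ + ‖v 0‖ / a 0) :=
        mul_le_mul_of_nonneg_left hlim (Real.exp_pos _).le
    _ ≤ Real.exp K * (‖u 0‖ + ‖v 0‖ / a 0) :=
        mul_le_mul_of_nonneg_right (Real.exp_le_exp.2 hΓK) hW0

set_option maxHeartbeats 1000000 in
/-- Theorem 5.1 of the paper: over-damping producing friction together with an
increasing viscoelastic coefficient `g = g(t)`. -/
theorem overdamping_increasing_viscoelastic_estimates
    (n : ℕ) (hn : 1 ≤ n)
    (b g G : ℝ → ℝ)
    (hb_smooth : ContDiff ℝ 2 b)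
    (hb_pos : ∀ t : ℝ, 0 ≤ t → 0 < b t)
    (hb_deriv_pos : ∀ t : ℝ, 0 ≤ t → 0 < deriv b t)
    (Cb : ℝ) (hCb : 0 < Cb)
    (hb1 : ∀ t : ℝ, 0 ≤ t → |deriv b t| ≤ Cb * b t / (1 + t))
    (hb2 : ∀ t : ℝ, 0 ≤ t → |deriv (deriv b) t| ≤ Cb * b t / (1 + t) ^ 2)
    (hb_int : IntegrableOn (fun t => (b t)⁻¹) (Set.Ici (0 : ℝ)))
    (hb_small : ∀ ε : ℝ, 0 < ε → ∃ T : ℝ, ∀ t : ℝ, T ≤ t → |deriv b t| ≤ ε * (b t) ^ 2)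
    (hg_smooth : ContDiff ℝ 2 g)
    (hg_pos : ∀ t : ℝ, 0 ≤ t → 0 < g t)
    (hg_deriv_pos : ∀ t : ℝ, 0 ≤ t → 0 < deriv g t)
    (hg_int : IntegrableOn (fun t => (g t)⁻¹) (Set.Ici (0 : ℝ)))
    (hG : ∀ t : ℝ, G t = (1 / 2) * ∫ τ in (0 : ℝ)..t, g τ)
    (C₁ C₂ : ℝ) (hC₁ : 0 < C₁) (hC₂ : 0 < C₂)
    (hg1 : ∀ t : ℝ, 0 < t → |deriv g t| ≤ C₁ * (g t) ^ 2 / G t)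
    (hg2 : ∀ t : ℝ, 0 < t → |deriv (deriv g) t| ≤ C₂ * (g t) ^ 3 / (G t) ^ 2) :
    ∀ σ : ℝ, 0 ≤ σ →
      ∃ C' : ℝ, 0 < C' ∧
        ∀ (uh : ℝ → EuclideanSpace ℝ (Fin n) → ℂ) (u₀ u₁ : EuclideanSpace ℝ (Fin n) → ℂ),
          Measurable (fun p : ℝ × EuclideanSpace ℝ (Fin n) => uh p.1 p.2) →
          (∀ ξ : EuclideanSpace ℝ (Fin n), ContDiff ℝ 2 (fun s => uh s ξ)) →
          (∀ (ξ : EuclideanSpace ℝ (Fin n)) (t : ℝ), 0 ≤ t →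
            deriv (deriv (fun s => uh s ξ)) t + ((‖ξ‖ ^ 2 : ℝ) : ℂ) * uh t ξ +
              ((b t + g t * ‖ξ‖ ^ 2 : ℝ) : ℂ) * deriv (fun s => uh s ξ) t = 0) →
          (∀ ξ : EuclideanSpace ℝ (Fin n), uh 0 ξ = u₀ ξ) →
          (∀ ξ : EuclideanSpace ℝ (Fin n), deriv (fun s => uh s ξ) 0 = u₁ ξ) →
          ∀ t : ℝ, 0 ≤ t →
            Integrable (fun ξ : EuclideanSpace ℝ (Fin n) => ‖ξ‖ ^ (2 * σ) * ‖u₀ ξ‖ ^ 2) →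
            Integrable (fun ξ : EuclideanSpace ℝ (Fin n) => ‖ξ‖ ^ (2 * σ) * ((1 + ‖ξ‖ ^ 2) ^ 2)⁻¹ * ‖u₁ ξ‖ ^ 2) →
            Integrable (fun ξ : EuclideanSpace ℝ (Fin n) => ‖ξ‖ ^ (2 * (σ + 2)) * ‖u₀ ξ‖ ^ 2) →
            Integrable (fun ξ : EuclideanSpace ℝ (Fin n) => ‖ξ‖ ^ (2 * (σ + 2)) * ((1 + ‖ξ‖ ^ 2) ^ 2)⁻¹ * ‖u₁ ξ‖ ^ 2) →
            Real.sqrt (∫ ξ : EuclideanSpace ℝ (Fin n), ‖ξ‖ ^ (2 * σ) * ‖uh t ξ‖ ^ 2) ≤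
                C' * (Real.sqrt (∫ ξ : EuclideanSpace ℝ (Fin n), ‖ξ‖ ^ (2 * σ) * ‖u₀ ξ‖ ^ 2) + Real.sqrt (∫ ξ : EuclideanSpace ℝ (Fin n), ‖ξ‖ ^ (2 * σ) * ((1 + ‖ξ‖ ^ 2) ^ 2)⁻¹ * ‖u₁ ξ‖ ^ 2)) ∧
              Real.sqrt (∫ ξ : EuclideanSpace ℝ (Fin n), ‖ξ‖ ^ (2 * σ) * ‖deriv (fun s => uh s ξ) t‖ ^ 2) ≤
                C' * g t * (Real.sqrt (∫ ξ : EuclideanSpace ℝ (Fin n), ‖ξ‖ ^ (2 * (σ + 2)) * ‖u₀ ξ‖ ^ 2) + Real.sqrt (∫ ξ : EuclideanSpace ℝ (Fin n), ‖ξ‖ ^ (2 * (σ + 2)) * ((1 + ‖ξ‖ ^ 2) ^ 2)⁻¹ * ‖u₁ ξ‖ ^ 2)) +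
                  C' * b t * (Real.sqrt (∫ ξ : EuclideanSpace ℝ (Fin n), ‖ξ‖ ^ (2 * σ) * ‖u₀ ξ‖ ^ 2) + Real.sqrt (∫ ξ : EuclideanSpace ℝ (Fin n), ‖ξ‖ ^ (2 * σ) * ((1 + ‖ξ‖ ^ 2) ^ 2)⁻¹ * ‖u₁ ξ‖ ^ 2)) := by
  intro σ hσ
  have hb0 := hb_pos 0 le_rfl
  have hg0 := hg_pos 0 le_rfl
  set m := min 1 (min (b 0) (g 0)) with hm
  have hmp : 0 < m := by simp only [hm]; positivity
  set C₀ := Real.exp (∫ s in Set.Ici (0 : ℝ), (g s)⁻¹) * m⁻¹ with hC₀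
  have hC₀p : 0 < C₀ := by positivity
  refine ⟨2 * C₀, by positivity, ?_⟩
  intro uh u₀ u₁ _ hC2 hode hi0 hi1 t ht hI0 hI1 hJ0 hJ1
  have hbt := hb_pos t ht
  have hgt := hg_pos t ht
  have hpt : ∀ ξ, ‖uh t ξ‖ + ‖deriv (fun s => uh s ξ) t‖ / (b t + g t * ‖ξ‖ ^ 2) ≤
      C₀ * (‖u₀ ξ‖ + (1 + ‖ξ‖ ^ 2)⁻¹ * ‖u₁ ξ‖) := by
    intro ξ
    have h := pointwise_damped b g hb_smooth hb_pos hb_deriv_pos hg_smooth hg_pos hg_deriv_pos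
      hg_int ‖ξ‖ (fun s => uh s ξ) (hC2 ξ) (hode ξ) t ht
    simp only [hi0, hi1] at h
    refine h.trans ?_
    rw [hC₀, mul_assoc]
    refine mul_le_mul_of_nonneg_left ?_ (Real.exp_pos _).le
    have m1 : m ≤ 1 := min_le_left _ _
    have m2 : m ≤ b 0 := (min_le_right _ _).trans (min_le_left _ _)
    have m3 : m ≤ g 0 := (min_le_right _ _).trans (min_le_right _ _)
    have h1 : m * (1 + ‖ξ‖ ^ 2) ≤ b 0 + g 0 * ‖ξ‖ ^ 2 := by
      nlinarith [sq_nonneg ‖ξ‖]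
    have h2 : (b 0 + g 0 * ‖ξ‖ ^ 2)⁻¹ ≤ m⁻¹ * (1 + ‖ξ‖ ^ 2)⁻¹ := by
      rw [← mul_inv]
      exact inv_anti₀ (by positivity) h1
    have h3 : 1 ≤ m⁻¹ := (one_le_inv₀ hmp).2 m1
    have h4 := mul_le_mul_of_nonneg_right h2 (norm_nonneg (u₁ ξ))
    have h5 := mul_le_mul_of_nonneg_right h3 (norm_nonneg (u₀ ξ))
    rw [div_eq_inv_mul]
    linarith
  have hw : ∀ ξ : EuclideanSpace ℝ (Fin n),
      (‖ξ‖ : ℝ) ^ (2 * (σ + 2)) = ‖ξ‖ ^ (2 * σ) * ‖ξ‖ ^ 4 := by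
    intro ξ
    rw [mul_add, Real.rpow_add_of_nonneg (norm_nonneg _) (by positivity) (by norm_num)]
    norm_num
  set P0 := ∫ ξ : EuclideanSpace ℝ (Fin n), ‖ξ‖ ^ (2 * σ) * ‖u₀ ξ‖ ^ 2 with hP0
  set P1 := ∫ ξ : EuclideanSpace ℝ (Fin n),
    ‖ξ‖ ^ (2 * σ) * ((1 + ‖ξ‖ ^ 2) ^ 2)⁻¹ * ‖u₁ ξ‖ ^ 2 with hP1
  set Q0 := ∫ ξ : EuclideanSpace ℝ (Fin n), ‖ξ‖ ^ (2 * (σ + 2)) * ‖u₀ ξ‖ ^ 2 with hQ0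
  set Q1 := ∫ ξ : EuclideanSpace ℝ (Fin n),
    ‖ξ‖ ^ (2 * (σ + 2)) * ((1 + ‖ξ‖ ^ 2) ^ 2)⁻¹ * ‖u₁ ξ‖ ^ 2 with hQ1
  have hP0n : 0 ≤ P0 := integral_nonneg fun ξ => by positivity
  have hP1n : 0 ≤ P1 := integral_nonneg fun ξ => by positivity
  have hQ0n : 0 ≤ Q0 := integral_nonneg fun ξ => by positivity
  have hQ1n : 0 ≤ Q1 := integral_nonneg fun ξ => by positivity
  constructor
  · have hle : ∫ ξ : EuclideanSpace ℝ (Fin n), ‖ξ‖ ^ (2 * σ) * ‖uh t ξ‖ ^ 2 ≤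
        (2 * C₀) ^ 2 * (P0 + P1) := by
      rw [hP0, hP1, ← integral_add hI0 hI1, ← integral_const_mul]
      refine integral_mono_of_nonneg (Eventually.of_forall fun ξ => ?_)
        ((hI0.add hI1).const_mul _) (Eventually.of_forall fun ξ => ?_)
      · simp only [Pi.zero_apply]; positivity
      · have h := hpt ξ
        have hnn : 0 ≤ ‖deriv (fun s => uh s ξ) t‖ / (b t + g t * ‖ξ‖ ^ 2) := by positivity
        set x := ‖u₀ ξ‖
        set y := (1 + ‖ξ‖ ^ 2)⁻¹ * ‖u₁ ξ‖ with hy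
        have hyy : ((1 + ‖ξ‖ ^ 2) ^ 2)⁻¹ * ‖u₁ ξ‖ ^ 2 = y ^ 2 := by
          rw [hy, mul_pow, inv_pow]
        have h1 : ‖uh t ξ‖ ^ 2 ≤ (2 * C₀) ^ 2 * (x ^ 2 + y ^ 2) := by
          have h2 : ‖uh t ξ‖ ^ 2 ≤ (C₀ * (x + y)) ^ 2 :=
            pow_le_pow_left₀ (norm_nonneg _) (by linarith) 2
          nlinarith [mul_nonneg (sq_nonneg C₀) (sq_nonneg (x - y)),
            mul_nonneg (sq_nonneg C₀) (sq_nonneg x), mul_nonneg (sq_nonneg C₀) (sq_nonneg y)]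
        have h3 := mul_le_mul_of_nonneg_left h1
          (Real.rpow_nonneg (norm_nonneg ξ) (2 * σ))
        simp only [mul_assoc (‖ξ‖ ^ (2 * σ))]
        rw [hyy]
        linarith
    refine (Real.sqrt_le_sqrt hle).trans ?_
    rw [Real.sqrt_mul (by positivity), Real.sqrt_sq (by positivity)]
    refine mul_le_mul_of_nonneg_left (sqrt_add_le_aux hP0n hP1n) (by positivity)
  · have hle : ∫ ξ : EuclideanSpace ℝ (Fin n),
          ‖ξ‖ ^ (2 * σ) * ‖deriv (fun s => uh s ξ) t‖ ^ 2 ≤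
        (2 * C₀ * g t) ^ 2 * (Q0 + Q1) + (2 * C₀ * b t) ^ 2 * (P0 + P1) := by
      rw [hP0, hP1, hQ0, hQ1, ← integral_add hI0 hI1, ← integral_add hJ0 hJ1,
        ← integral_const_mul, ← integral_const_mul]
      refine le_trans ?_ (le_of_eq
        (integral_add ((hJ0.add hJ1).const_mul _) ((hI0.add hI1).const_mul _)))
      refine integral_mono_of_nonneg (Eventually.of_forall fun ξ => ?_)
        (((hJ0.add hJ1).const_mul _).add ((hI0.add hI1).const_mul _))
        (Eventually.of_forall fun ξ => ?_)
      · simp only [Pi.zero_apply]; positivity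
      · have h := hpt ξ
        have hap : 0 < b t + g t * ‖ξ‖ ^ 2 := by positivity
        have hd : ‖deriv (fun s => uh s ξ) t‖ / (b t + g t * ‖ξ‖ ^ 2) ≤
            C₀ * (‖u₀ ξ‖ + (1 + ‖ξ‖ ^ 2)⁻¹ * ‖u₁ ξ‖) := by
          linarith [norm_nonneg (uh t ξ)]
        rw [div_le_iff₀ hap] at hd
        set x := ‖u₀ ξ‖
        set y := (1 + ‖ξ‖ ^ 2)⁻¹ * ‖u₁ ξ‖ with hy
        have hyy : ((1 + ‖ξ‖ ^ 2) ^ 2)⁻¹ * ‖u₁ ξ‖ ^ 2 = y ^ 2 := by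
          rw [hy, mul_pow, inv_pow]
        have h1 : ‖deriv (fun s => uh s ξ) t‖ ^ 2 ≤
            C₀ ^ 2 * ((2 * (x ^ 2 + y ^ 2)) * (2 * (b t ^ 2 + g t ^ 2 * ‖ξ‖ ^ 4))) :=
          sq_bound_aux_s6 _ _ _ _ _ _ _ (norm_nonneg _) hd
        have h3 := mul_le_mul_of_nonneg_left h1
          (Real.rpow_nonneg (norm_nonneg ξ) (2 * σ))
        simp only [mul_assoc (‖ξ‖ ^ (2 * σ)), mul_assoc (‖ξ‖ ^ (2 * (σ + 2)))]
        rw [hyy, hw]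
        refine h3.trans (le_of_eq ?_)
        ring
    refine (Real.sqrt_le_sqrt hle).trans ?_
    refine (sqrt_add_le_aux (by positivity) (by positivity)).trans ?_
    rw [Real.sqrt_mul (by positivity), Real.sqrt_sq (by positivity),
      Real.sqrt_mul (by positivity), Real.sqrt_sq (by positivity)]
    refine add_le_add ?_ ?_
    · exact mul_le_mul_of_nonneg_left (sqrt_add_le_aux hQ0n hQ1n) (by positivity)
    · exact mul_le_mul_of_nonneg_left (sqrt_add_le_aux hP0n hP1n) (by positivity)
end

section
/- Let n ≥ 1 and take the explicit coefficients b(t) = e^t and g(t) = ½e^{−t} (so b(t)g(t) = ½ for all t). Then for every real σ there is a constant C > 0 such that every Fourier solution û with data û₀, û₁ satisfies for all t ≥ 0 (whenever the data integrals are finite): for σ ≥ 1, (∫_{ℝⁿ} |ξ|^{2σ}|û(t,ξ)|² dξ)^{1/2} ≤ C [ (∫ |ξ|^{2σ}|û₀|² dξ)^{1/2} + (∫ |ξ|^{2(σ+1)}|û₀|² dξ)^{1/2} + (∫ |ξ|^{2(σ−1)}|û₁|² dξ)^{1/2} + (∫ |ξ|^{2σ}|û₁|² dξ)^{1/2} ];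 and for σ ≥ 0, (∫ |ξ|^{2σ}|∂ₜû(t,ξ)|² dξ)^{1/2} ≤ C [ (∫ |ξ|^{2(σ+1)}|û₀|² dξ)^{1/2} + (∫ |ξ|^{2(σ+2)}|û₀|² dξ)^{1/2} + (∫ |ξ|^{2σ}|û₁|² dξ)^{1/2} + (∫ |ξ|^{2(σ+1)}|û₁|² dξ)^{1/2} ]. -/
open MeasureTheory Filter

lemma energy_bound (f : ℝ → ℂ) (hf : ContDiff ℝ 2 f) (r : ℝ)
    (hode : ∀ t : ℝ, 0 ≤ t → deriv (deriv f) t + ((r ^ 2 : ℝ) : ℂ) * f t +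
      ((Real.exp t + (1 / 2) * Real.exp (-t) * r ^ 2 : ℝ) : ℂ) * deriv f t = 0)
    (t : ℝ) (ht : 0 ≤ t) :
    ‖deriv f t‖ ^ 2 + r ^ 2 * ‖f t‖ ^ 2 ≤ ‖deriv f 0‖ ^ 2 + r ^ 2 * ‖f 0‖ ^ 2 := by
  have hd : Differentiable ℝ f := hf.differentiable (by norm_num)
  have hd2 : Differentiable ℝ (deriv f) :=
    ((contDiff_succ_iff_deriv (n := 1)).1 hf).2.2.differentiable (by norm_num)
  have hE : ∀ s, HasDerivAt (fun s => ‖deriv f s‖ ^ 2 + r ^ 2 * ‖f s‖ ^ 2)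
      (2 * inner ℝ (deriv f s) (deriv (deriv f) s) + r ^ 2 * (2 * inner ℝ (f s) (deriv f s))) s :=
    fun s => ((hd2 s).hasDerivAt.norm_sq).add (((hd s).hasDerivAt.norm_sq).const_mul _)
  have hanti : AntitoneOn (fun s => ‖deriv f s‖ ^ 2 + r ^ 2 * ‖f s‖ ^ 2) (Set.Ici 0) := by
    apply antitoneOn_of_deriv_nonpos (convex_Ici 0)
    · exact fun s _ => (hE s).continuousAt.continuousWithinAt
    · exact fun s _ => (hE s).differentiableAt.differentiableWithinAt
    · intro s hs
      rw [interior_Ici] at hs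
      rw [(hE s).deriv]
      have h := hode s (le_of_lt hs)
      set a := Real.exp s + (1 / 2) * Real.exp (-s) * r ^ 2 with ha
      have ha0 : 0 ≤ a := by positivity
      have h2 : deriv (deriv f) s = -((r ^ 2 : ℝ) : ℂ) * f s - (a : ℂ) * deriv f s := by
        linear_combination h
      rw [h2]
      generalize deriv f s = v
      generalize f s = w
      have key : 2 * inner ℝ v (-((r ^ 2 : ℝ) : ℂ) * w - (a : ℂ) * v) + r ^ 2 * (2 * inner ℝ w v)
          = -(2 * a * (v.re ^ 2 + v.im ^ 2)) := by
        simp only [Complex.inner, Complex.mul_re, Complex.sub_re, Complex.sub_im, Complex.mul_im,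
          Complex.neg_re, Complex.neg_im, Complex.ofReal_re, Complex.ofReal_im, Complex.conj_re,
          Complex.conj_im]
        ring
      rw [key]
      have : 0 ≤ 2 * a * (v.re ^ 2 + v.im ^ 2) := by positivity
      linarith
  exact hanti (Set.mem_Ici.2 le_rfl) (Set.mem_Ici.2 ht) ht

lemma sqrt_integral_bound {n : ℕ} (F G H : EuclideanSpace ℝ (Fin n) → ℝ)
    (hF : ∀ x, 0 ≤ F x) (hG0 : ∀ x, 0 ≤ G x) (hH0 : ∀ x, 0 ≤ H x)
    (hG : Integrable G) (hH : Integrable H) (h : ∀ x, F x ≤ G x + H x) :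
    Real.sqrt (∫ x, F x) ≤ Real.sqrt (∫ x, G x) + Real.sqrt (∫ x, H x) := by
  have h1 : ∫ x, F x ≤ ∫ x, G x + H x :=
    integral_mono_of_nonneg (Eventually.of_forall hF) (hG.add hH) (Eventually.of_forall h)
  rw [integral_add hG hH] at h1
  have hA : 0 ≤ ∫ x, G x := integral_nonneg hG0
  have hB : 0 ≤ ∫ x, H x := integral_nonneg hH0
  apply Real.sqrt_le_iff.2 ⟨by positivity, ?_⟩
  nlinarith [Real.sq_sqrt hA, Real.sq_sqrt hB,
    mul_nonneg (Real.sqrt_nonneg (∫ x, G x)) (Real.sqrt_nonneg (∫ x, H x))]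

lemma weight_shift (r σ : ℝ) (hr : 0 ≤ r) (hσ : 0 ≤ σ) :
    r ^ (2 * (σ + 1)) = r ^ (2 * σ) * r ^ 2 := by
  rw [mul_add, mul_one, Real.rpow_add_of_nonneg hr (by positivity) (by norm_num), Real.rpow_two]

/-- Theorem 5.3 of the paper: the over-damping model with `b(t) = eᵗ` and
`g(t) = ½e^(-t)`, for which `b(t)g(t) = ½`. -/
theorem overdamping_model_two_estimates (n : ℕ) (hn : 1 ≤ n) :
    ∀ σ : ℝ, ∃ C : ℝ, 0 < C ∧
        ∀ (uh : ℝ → EuclideanSpace ℝ (Fin n) → ℂ) (u₀ u₁ : EuclideanSpace ℝ (Fin n) → ℂ),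
          Measurable (fun p : ℝ × EuclideanSpace ℝ (Fin n) => uh p.1 p.2) →
          (∀ ξ : EuclideanSpace ℝ (Fin n), ContDiff ℝ 2 (fun s => uh s ξ)) →
          (∀ (ξ : EuclideanSpace ℝ (Fin n)) (t : ℝ), 0 ≤ t →
            deriv (deriv (fun s => uh s ξ)) t + ((‖ξ‖ ^ 2 : ℝ) : ℂ) * uh t ξ +
              ((Real.exp t + (1 / 2) * Real.exp (-t) * ‖ξ‖ ^ 2 : ℝ) : ℂ) * deriv (fun s => uh s ξ) t = 0) →
          (∀ ξ : EuclideanSpace ℝ (Fin n), uh 0 ξ = u₀ ξ) →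
          (∀ ξ : EuclideanSpace ℝ (Fin n), deriv (fun s => uh s ξ) 0 = u₁ ξ) →
          ∀ t : ℝ, 0 ≤ t →
            Integrable (fun ξ : EuclideanSpace ℝ (Fin n) => ‖ξ‖ ^ (2 * σ) * ‖u₀ ξ‖ ^ 2) →
            Integrable (fun ξ : EuclideanSpace ℝ (Fin n) => ‖ξ‖ ^ (2 * (σ + 1)) * ‖u₀ ξ‖ ^ 2) →
            Integrable (fun ξ : EuclideanSpace ℝ (Fin n) => ‖ξ‖ ^ (2 * (σ + 2)) * ‖u₀ ξ‖ ^ 2) →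
            Integrable (fun ξ : EuclideanSpace ℝ (Fin n) => ‖ξ‖ ^ (2 * (σ - 1)) * ‖u₁ ξ‖ ^ 2) →
            Integrable (fun ξ : EuclideanSpace ℝ (Fin n) => ‖ξ‖ ^ (2 * σ) * ‖u₁ ξ‖ ^ 2) →
            Integrable (fun ξ : EuclideanSpace ℝ (Fin n) => ‖ξ‖ ^ (2 * (σ + 1)) * ‖u₁ ξ‖ ^ 2) →
            ((1 ≤ σ →
              Real.sqrt (∫ ξ : EuclideanSpace ℝ (Fin n), ‖ξ‖ ^ (2 * σ) * ‖uh t ξ‖ ^ 2) ≤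
                C * (Real.sqrt (∫ ξ : EuclideanSpace ℝ (Fin n), ‖ξ‖ ^ (2 * σ) * ‖u₀ ξ‖ ^ 2) + Real.sqrt (∫ ξ : EuclideanSpace ℝ (Fin n), ‖ξ‖ ^ (2 * (σ + 1)) * ‖u₀ ξ‖ ^ 2) +
                  Real.sqrt (∫ ξ : EuclideanSpace ℝ (Fin n), ‖ξ‖ ^ (2 * (σ - 1)) * ‖u₁ ξ‖ ^ 2) + Real.sqrt (∫ ξ : EuclideanSpace ℝ (Fin n), ‖ξ‖ ^ (2 * σ) * ‖u₁ ξ‖ ^ 2))) ∧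
            (0 ≤ σ →
              Real.sqrt (∫ ξ : EuclideanSpace ℝ (Fin n), ‖ξ‖ ^ (2 * σ) * ‖deriv (fun s => uh s ξ) t‖ ^ 2) ≤
                C * (Real.sqrt (∫ ξ : EuclideanSpace ℝ (Fin n), ‖ξ‖ ^ (2 * (σ + 1)) * ‖u₀ ξ‖ ^ 2) + Real.sqrt (∫ ξ : EuclideanSpace ℝ (Fin n), ‖ξ‖ ^ (2 * (σ + 2)) * ‖u₀ ξ‖ ^ 2) +
                  Real.sqrt (∫ ξ : EuclideanSpace ℝ (Fin n), ‖ξ‖ ^ (2 * σ) * ‖u₁ ξ‖ ^ 2) + Real.sqrt (∫ ξ : EuclideanSpace ℝ (Fin n), ‖ξ‖ ^ (2 * (σ + 1)) * ‖u₁ ξ‖ ^ 2)))) := by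
  intro σ
  refine ⟨1, one_pos, ?_⟩
  intro uh u₀ u₁ _ hC hode h0 h1 t ht i1 i2 _ i4 i5 _
  have hE : ∀ ξ, ‖deriv (fun s => uh s ξ) t‖ ^ 2 + ‖ξ‖ ^ 2 * ‖uh t ξ‖ ^ 2 ≤
      ‖u₁ ξ‖ ^ 2 + ‖ξ‖ ^ 2 * ‖u₀ ξ‖ ^ 2 := by
    intro ξ
    have := energy_bound (fun s => uh s ξ) (hC ξ) ‖ξ‖ (hode ξ) t ht
    rw [← h0 ξ, ← h1 ξ]
    exact this
  constructor
  · intro hσ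
    have := sqrt_integral_bound (fun ξ => ‖ξ‖ ^ (2 * σ) * ‖uh t ξ‖ ^ 2)
      (fun ξ => ‖ξ‖ ^ (2 * σ) * ‖u₀ ξ‖ ^ 2) (fun ξ => ‖ξ‖ ^ (2 * (σ - 1)) * ‖u₁ ξ‖ ^ 2)
      (fun ξ => by positivity) (fun ξ => by positivity) (fun ξ => by positivity) i1 i4 (by
        intro ξ
        have hw := weight_shift ‖ξ‖ (σ - 1) (norm_nonneg _) (by linarith)
        rw [sub_add_cancel] at hw
        have hp : 0 ≤ ‖ξ‖ ^ (2 * (σ - 1)) := by positivity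
        simp only [hw]
        nlinarith [mul_le_mul_of_nonneg_left (hE ξ) hp,
          mul_nonneg hp (sq_nonneg ‖deriv (fun s => uh s ξ) t‖)])
    refine this.trans ?_
    rw [one_mul]
    have a1 := Real.sqrt_nonneg (∫ ξ : EuclideanSpace ℝ (Fin n), ‖ξ‖ ^ (2 * (σ + 1)) * ‖u₀ ξ‖ ^ 2)
    have a2 := Real.sqrt_nonneg (∫ ξ : EuclideanSpace ℝ (Fin n), ‖ξ‖ ^ (2 * σ) * ‖u₁ ξ‖ ^ 2)
    linarith
  · intro hσ
    have := sqrt_integral_bound (fun ξ => ‖ξ‖ ^ (2 * σ) * ‖deriv (fun s => uh s ξ) t‖ ^ 2)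
      (fun ξ => ‖ξ‖ ^ (2 * (σ + 1)) * ‖u₀ ξ‖ ^ 2) (fun ξ => ‖ξ‖ ^ (2 * σ) * ‖u₁ ξ‖ ^ 2)
      (fun ξ => by positivity) (fun ξ => by positivity) (fun ξ => by positivity) i2 i5 (by
        intro ξ
        have hw := weight_shift ‖ξ‖ σ (norm_nonneg _) hσ
        have hp : 0 ≤ ‖ξ‖ ^ (2 * σ) := by positivity
        simp only [hw]
        nlinarith [mul_le_mul_of_nonneg_left (hE ξ) hp,
          mul_nonneg hp (mul_nonneg (sq_nonneg ‖ξ‖) (sq_nonneg ‖uh t ξ‖))])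
    refine this.trans ?_
    rw [one_mul]
    have a1 := Real.sqrt_nonneg (∫ ξ : EuclideanSpace ℝ (Fin n), ‖ξ‖ ^ (2 * (σ + 2)) * ‖u₀ ξ‖ ^ 2)
    have a2 := Real.sqrt_nonneg (∫ ξ : EuclideanSpace ℝ (Fin n), ‖ξ‖ ^ (2 * (σ + 1)) * ‖u₁ ξ‖ ^ 2)
    linarith
end

section
/- Let n ≥ 1 and take the explicit coefficients b(t) = e^{e^t} and g(t) = 2e^{−t} (so b(t)g(t) ≥ 2 for all t ≥ 0). Then for every real σ ≥ 2 there is a constant C > 0 such that every Fourier solution û with data û₀, û₁ satisfies for all t ≥ 0 (whenever the data integrals are finite): (∫_{ℝⁿ} |ξ|^{2σ}|û(t,ξ)|² dξ)^{1/2} ≤ C [ (∫ |ξ|^{2σ}|û₀(ξ)|² dξ)^{1/2} + (∫ |ξ|^{2(σ−2)}|û₁(ξ)|² dξ)^{1/2} ] and (∫ |ξ|^{2σ}|∂ₜû(t,ξ)|² dξ)^{1/2} ≤ C b(t) [ (∫ |ξ|^{2σ}|û₀|² dξ)^{1/2} + (∫ |ξ|^{2(σ−2)}|û₁|² dξ)^{1/2}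 ] + C g(t) [ (∫ |ξ|^{2(σ+2)}|û₀|² dξ)^{1/2} + (∫ |ξ|^{2σ}|û₁|² dξ)^{1/2} ]. -/
open MeasureTheory Filter

/-- Regularised norm: differential inequality. -/
lemma od_reg (f : ℝ → ℂ) (h : ℂ) (p ε x : ℝ) (hp : 0 ≤ p) (hε : 0 < ε)
    (hf : HasDerivAt f (-(p : ℂ) * f x + h) x) :
    ∃ N' : ℝ, HasDerivAt (fun t => Real.sqrt (‖f t‖ ^ 2 + ε ^ 2)) N' x ∧
      N' ≤ -p * (Real.sqrt (‖f x‖ ^ 2 + ε ^ 2) - ε) + ‖h‖ := by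
  have h1 : HasDerivAt (fun t => ‖f t‖ ^ 2 + ε ^ 2) (2 * inner ℝ (f x) (-(p : ℂ) * f x + h)) x :=
    (hf.norm_sq).add_const _
  have hpos : 0 < ‖f x‖ ^ 2 + ε ^ 2 := by positivity
  refine ⟨_, h1.sqrt hpos.ne', ?_⟩
  have e1 : inner ℝ (f x) (-(p : ℂ) * f x + h) = -p * ‖f x‖ ^ 2 + inner ℝ (f x) h := by
    have : -(p : ℂ) * f x = (-p : ℝ) • f x := by simp
    rw [this, inner_add_right, inner_smul_right, real_inner_self_eq_norm_sq]
  rw [e1]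
  have e2 := real_inner_le_norm (f x) h
  set N := Real.sqrt (‖f x‖ ^ 2 + ε ^ 2) with hN
  have hNpos : 0 < N := Real.sqrt_pos.mpr hpos
  have hNsq : N ^ 2 = ‖f x‖ ^ 2 + ε ^ 2 := Real.sq_sqrt hpos.le
  have hNε : ε ≤ N := by
    apply Real.le_sqrt_of_sq_le; nlinarith [sq_nonneg ‖f x‖]
  have hNf : ‖f x‖ ≤ N := by
    apply Real.le_sqrt_of_sq_le; nlinarith [sq_nonneg ε]
  rw [div_le_iff₀ (by positivity)]
  have e3 : ‖f x‖ * ‖h‖ ≤ N * ‖h‖ := mul_le_mul_of_nonneg_right hNf (norm_nonneg _)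
  have e4 : 0 ≤ p * (ε * (N - ε)) := mul_nonneg hp (mul_nonneg hε.le (by linarith))
  have e5 : ‖f x‖ ^ 2 = N ^ 2 - ε ^ 2 := by linarith
  rw [e5]
  nlinarith

/-- Elementary coefficient bounds. -/
lemma od_coef (r t : ℝ) (ht : 0 ≤ t) :
    2 < Real.exp (Real.exp t) + 2 * Real.exp (-t) * r ^ 2 ∧
    r ^ 2 ≤ (1/20) * (Real.exp (Real.exp t) + 2 * Real.exp (-t) * r ^ 2) ^ 2 ∧
    (Real.exp (Real.exp t) * Real.exp t - 2 * Real.exp (-t) * r ^ 2)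
      ≤ (2/5) * (Real.exp (Real.exp t) + 2 * Real.exp (-t) * r ^ 2) ^ 2 ∧
    -(1/10) * (Real.exp (Real.exp t) + 2 * Real.exp (-t) * r ^ 2) ^ 2 ≤
      (Real.exp (Real.exp t) * Real.exp t - 2 * Real.exp (-t) * r ^ 2) := by
  have he : 2.7182818283 < Real.exp 1 := Real.exp_one_gt_d9
  have hE1 : 1 ≤ Real.exp t := Real.one_le_exp ht
  have hEt : t + 1 ≤ Real.exp t := Real.add_one_le_exp t
  set E := Real.exp t with hE
  set B := Real.exp E with hB
  have hBe : Real.exp 1 ≤ B := Real.exp_le_exp.mpr hE1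
  have hG : 0 < Real.exp (-t) := Real.exp_pos _
  have hBE : Real.exp 1 * E ≤ B := by
    have h1 : E ≤ Real.exp (E - 1) := by linarith [Real.add_one_le_exp (E - 1)]
    have h2 : B = Real.exp 1 * Real.exp (E - 1) := by rw [← Real.exp_add]; simp [hB]
    rw [h2]; exact mul_le_mul_of_nonneg_left h1 (Real.exp_pos _).le
  set g := Real.exp (-t) with hg
  have hEg : E * g = 1 := by rw [hE, hg, ← Real.exp_add]; simp
  have hBg : Real.exp 1 ≤ B * g := by nlinarith
  have hr : 0 ≤ r ^ 2 := sq_nonneg r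
  have hx : 0 ≤ 2 * g * r ^ 2 := by positivity
  have hBgr : 2.7 * r ^ 2 ≤ B * g * r ^ 2 := mul_le_mul_of_nonneg_right (by linarith) hr
  refine ⟨by linarith, ?_, ?_, ?_⟩
  · nlinarith [sq_nonneg (B - 2 * g * r ^ 2)]
  · have h1 : B * (2.7 * E) ≤ B * B := mul_le_mul_of_nonneg_left (by nlinarith) (by linarith)
    have h2 : 0 ≤ B * (2 * g * r ^ 2) := mul_nonneg (by linarith) hx
    nlinarith
  · have h1 : 2.7 * (2 * g * r ^ 2) ≤ B * (2 * g * r ^ 2) :=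
      mul_le_mul_of_nonneg_right (by linarith) hx
    have h2 : 0 ≤ B * E := mul_nonneg (by linarith) (by linarith)
    nlinarith [sq_nonneg (B - 2 * g * r ^ 2)]

/-- The algebraic heart of the differential inequality for `|y| + (2/a)|z|`. -/
lemma od_alg (r a a' ε Ny Nz ny nz dy dz : ℝ) (ha : 2 < a) (hr : r ^ 2 ≤ (1/20) * a ^ 2)
    (hu : a' ≤ (2/5) * a ^ 2) (hl : -(1/10) * a ^ 2 ≤ a') (hε : 0 < ε)
    (hNy : ny ≤ Ny) (hNz : nz ≤ Nz) (hny : 0 ≤ ny) (hnz : 0 ≤ nz)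
    (hdy : dy ≤ -(r ^ 2 / a) * (Ny - ε) + nz)
    (hdz : dz ≤ -(a - r ^ 2 / a) * (Nz - ε) + |-(r ^ 2 * a') / a ^ 2 - (r ^ 2 / a) ^ 2| * ny) :
    dy + (-(2 * a') / a ^ 2 * Nz + 2 / a * dz) ≤ ε * (r ^ 2 + 2) := by
  have ha0 : 0 < a := by linarith
  obtain ⟨m, hm⟩ : ∃ m, m = a' / a ^ 2 := ⟨_, rfl⟩
  obtain ⟨s, hs⟩ : ∃ s, s = r ^ 2 / a ^ 2 := ⟨_, rfl⟩
  have ha2 : 0 < a ^ 2 := by positivity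
  have hs0 : 0 ≤ s := by rw [hs]; positivity
  have hs1 : s ≤ 1/20 := by rw [hs, div_le_iff₀ ha2]; exact hr
  have hm1 : m ≤ 2/5 := by rw [hm, div_le_iff₀ ha2]; exact hu
  have hm2 : -(1/10) ≤ m := by rw [hm, le_div_iff₀ ha2]; exact hl
  have hrs : r ^ 2 = s * a ^ 2 := by rw [hs]; field_simp
  have has : a' = m * a ^ 2 := by rw [hm]; field_simp
  have e1 : r ^ 2 / a = s * a := by rw [hrs]; field_simp
  have e2 : -(r ^ 2 * a') / a ^ 2 - (r ^ 2 / a) ^ 2 = -(s * a ^ 2 * (m + s)) := by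
    rw [hrs, has]; field_simp; ring
  have e3 : -(2 * a') / a ^ 2 = - 2 * m := by rw [has]; field_simp
  rw [e2, abs_neg, e1] at hdz
  rw [e1] at hdy
  rw [e3]
  have habs : |s * a ^ 2 * (m + s)| ≤ s * a ^ 2 * (1/2) := by
    rw [abs_mul, abs_of_nonneg (by positivity : 0 ≤ s * a ^ 2)]
    exact mul_le_mul_of_nonneg_left (abs_le.mpr ⟨by linarith, by linarith⟩) (by positivity)
  have hdz2 : 2 / a * dz ≤ -2 * (1 - s) * (Nz - ε) + s * a * Ny := by
    have h1 : dz ≤ -(a - s * a) * (Nz - ε) + s * a ^ 2 * (1/2) * Ny := by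
      have := mul_le_mul habs hNy hny (by positivity : (0:ℝ) ≤ s * a ^ 2 * (1/2))
      linarith
    have h2 := mul_le_mul_of_nonneg_left h1 (by positivity : 0 ≤ 2 / a)
    refine h2.trans (le_of_eq ?_)
    field_simp
  have hNz0 : 0 ≤ Nz := hnz.trans hNz
  have h3 : 0 ≤ (1 - 2 * s + 2 * m) * Nz := mul_nonneg (by linarith) hNz0
  have h4 : s * a * ε ≤ r ^ 2 * ε := by
    rw [hrs]
    apply mul_le_mul_of_nonneg_right _ hε.le
    nlinarith [mul_nonneg hs0 ha0.le]
  have h5 : 0 ≤ s * ε := mul_nonneg hs0 hε.le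
  nlinarith

/-- Pointwise estimate for a single frequency. -/
lemma od_pointwise (y : ℝ → ℂ) (r : ℝ) (hy : ContDiff ℝ 2 y)
    (hode : ∀ t : ℝ, 0 ≤ t → deriv (deriv y) t + ((r ^ 2 : ℝ) : ℂ) * y t +
      ((Real.exp (Real.exp t) + 2 * Real.exp (-t) * r ^ 2 : ℝ) : ℂ) * deriv y t = 0)
    (t : ℝ) (ht : 0 ≤ t) :
    ∃ L : ℝ, 0 ≤ L ∧ ‖y t‖ ≤ L ∧
      ‖deriv y t‖ ≤ (Real.exp (Real.exp t) + 2 * Real.exp (-t) * r ^ 2) * L ∧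
      r ^ 2 * L ≤ 2 * (r ^ 2 * ‖y 0‖) + ‖deriv y 0‖ := by
  obtain ⟨a, ha⟩ : ∃ a : ℝ → ℝ, a = fun t =>
    Real.exp (Real.exp t) + 2 * Real.exp (-t) * r ^ 2 := ⟨_, rfl⟩
  obtain ⟨a', ha'⟩ : ∃ a' : ℝ → ℝ, a' = fun t =>
    Real.exp (Real.exp t) * Real.exp t - 2 * Real.exp (-t) * r ^ 2 := ⟨_, rfl⟩
  have had : ∀ x, HasDerivAt a (a' x) x := by
    intro x
    rw [ha, ha']
    have h1 := (Real.hasDerivAt_exp x).exp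
    have h2 := (((hasDerivAt_neg x).exp).const_mul 2).mul_const (r ^ 2)
    exact (h1.add h2).congr_deriv (by ring)
  have hc : ∀ x, 0 ≤ x → 2 < a x ∧ r ^ 2 ≤ (1/20) * a x ^ 2 ∧ a' x ≤ (2/5) * a x ^ 2 ∧
      -(1/10) * a x ^ 2 ≤ a' x := by
    intro x hx; rw [ha, ha']; exact od_coef r x hx
  have hode' : ∀ x, 0 ≤ x → deriv (deriv y) x = -((r ^ 2 : ℝ) : ℂ) * y x - (a x : ℂ) * deriv y x := by
    intro x hx
    have := hode x hx
    rw [ha]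
    linear_combination this
  have hy1 : ∀ x, HasDerivAt y (deriv y x) x := fun x =>
    (hy.differentiable (by norm_num) x).hasDerivAt
  have hy2 : ∀ x, HasDerivAt (deriv y) (deriv (deriv y) x) x := by
    have h : ContDiff ℝ 1 (deriv y) := by
      have : ContDiff ℝ (1 + 1) y := by simpa [one_add_one_eq_two] using hy
      exact (contDiff_succ_iff_deriv.mp this).2.2
    exact fun x => (h.differentiable (by norm_num) x).hasDerivAt
  obtain ⟨z, hz⟩ : ∃ z : ℝ → ℂ, z = fun x => deriv y x + ((r ^ 2 / a x : ℝ) : ℂ) * y x := ⟨_, rfl⟩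
  have hL : ∀ x, 0 ≤ x → ‖y x‖ + 2 / a x * ‖z x‖ ≤ ‖y 0‖ + 2 / a 0 * ‖z 0‖ := by
    intro T hT
    have key : ∀ ε : ℝ, 0 < ε → ‖y T‖ + 2 / a T * ‖z T‖ ≤
        (Real.sqrt (‖y 0‖ ^ 2 + ε ^ 2) + 2 / a 0 * Real.sqrt (‖z 0‖ ^ 2 + ε ^ 2))
          + ε * (r ^ 2 + 2) * T := by
      intro ε hε
      set F : ℝ → ℝ := fun x => Real.sqrt (‖y x‖ ^ 2 + ε ^ 2) +
        2 / a x * Real.sqrt (‖z x‖ ^ 2 + ε ^ 2) with hF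
      have hle : ∀ w : ℂ, ‖w‖ ≤ Real.sqrt (‖w‖ ^ 2 + ε ^ 2) := fun w => by
        apply Real.le_sqrt_of_sq_le; nlinarith [sq_nonneg ε]
      have hFd : ∀ x, 0 ≤ x → ∃ d, HasDerivAt F d x ∧ d ≤ ε * (r ^ 2 + 2) := by
        intro x hx
        obtain ⟨c1, c2, c3, c4⟩ := hc x hx
        have hax : a x ≠ 0 := by linarith
        have haxc : (a x : ℂ) ≠ 0 := by exact_mod_cast hax
        obtain ⟨dy, hdy, hdy'⟩ := od_reg y (z x) (r ^ 2 / a x) ε x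
          (div_nonneg (sq_nonneg r) (by linarith)) hε (by
            convert hy1 x using 1
            rw [hz]; ring)
        have hφ : HasDerivAt (fun x => r ^ 2 / a x) (-(r ^ 2 * a' x) / a x ^ 2) x := by
          exact ((hasDerivAt_const x (r ^ 2)).div (had x) hax).congr_deriv (by ring)
        have hψ : HasDerivAt (fun x => 2 / a x) (-(2 * a' x) / a x ^ 2) x := by
          exact ((hasDerivAt_const x (2:ℝ)).div (had x) hax).congr_deriv (by ring)
        have hp : 0 ≤ a x - r ^ 2 / a x := by
          rw [sub_nonneg, div_le_iff₀ (by linarith)]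
          nlinarith
        obtain ⟨dz, hdz, hdz'⟩ := od_reg z
          (((-(r ^ 2 * a' x) / a x ^ 2 - (r ^ 2 / a x) ^ 2 : ℝ) : ℂ) * y x)
          (a x - r ^ 2 / a x) ε x hp hε (by
            have h1 := (hy2 x).add ((hφ.ofReal_comp).mul (hy1 x))
            rw [hode' x hx] at h1
            rw [hz]
            refine h1.congr_deriv ?_
            push_cast
            field_simp
            ring)
        rw [norm_mul, Complex.norm_real, Real.norm_eq_abs] at hdz'
        exact ⟨_, hdy.add (hψ.mul hdz),
          od_alg r (a x) (a' x) ε _ _ _ _ dy dz c1 c2 c3 c4 hε (hle _) (hle _)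
            (norm_nonneg _) (norm_nonneg _) hdy' hdz'⟩
      have hmono := Convex.image_sub_le_mul_sub_of_deriv_le (convex_Ici (0:ℝ)) (f := F)
        (C := ε * (r ^ 2 + 2))
        (fun x hx => by
          obtain ⟨d, hd, _⟩ := hFd x hx
          exact hd.continuousAt.continuousWithinAt)
        (fun x hx => by
          obtain ⟨d, hd, _⟩ := hFd x (interior_subset hx)
          exact hd.differentiableAt.differentiableWithinAt)
        (fun x hx => by
          obtain ⟨d, hd, hd2⟩ := hFd x (interior_subset hx)
          rw [hd.deriv]; exact hd2) 0 Set.self_mem_Ici T hT hT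
      have hlow : ‖y T‖ + 2 / a T * ‖z T‖ ≤ F T := by
        have : 0 ≤ 2 / a T := div_nonneg (by norm_num) (by linarith [(hc T hT).1])
        exact add_le_add (hle _) (mul_le_mul_of_nonneg_left (hle _) this)
      have hF0 : F 0 = Real.sqrt (‖y 0‖ ^ 2 + ε ^ 2) + 2 / a 0 * Real.sqrt (‖z 0‖ ^ 2 + ε ^ 2) := rfl
      rw [← hF0]
      linarith
    have hlim : Tendsto (fun ε : ℝ =>
        (Real.sqrt (‖y 0‖ ^ 2 + ε ^ 2) + 2 / a 0 * Real.sqrt (‖z 0‖ ^ 2 + ε ^ 2))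
          + ε * (r ^ 2 + 2) * T) (nhdsWithin 0 (Set.Ioi 0)) (nhds (‖y 0‖ + 2 / a 0 * ‖z 0‖)) := by
      have hcont : Continuous (fun ε : ℝ =>
        (Real.sqrt (‖y 0‖ ^ 2 + ε ^ 2) + 2 / a 0 * Real.sqrt (‖z 0‖ ^ 2 + ε ^ 2))
          + ε * (r ^ 2 + 2) * T) := by fun_prop
      have := hcont.tendsto 0
      simp only [ne_eq, OfNat.ofNat_ne_zero, not_false_eq_true, zero_pow, add_zero, zero_mul,
        Real.sqrt_sq (norm_nonneg _)] at this
      exact this.mono_left nhdsWithin_le_nhds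
    exact ge_of_tendsto hlim (by
      filter_upwards [self_mem_nhdsWithin] with ε hε using key ε hε)
  obtain ⟨c1, c2, c3, c4⟩ := hc t ht
  obtain ⟨d1, d2, d3, d4⟩ := hc 0 le_rfl
  have hψt : 0 < 2 / a t := div_pos (by norm_num) (by linarith)
  have hψ0 : 0 < 2 / a 0 := div_pos (by norm_num) (by linarith)
  have hLt := hL t ht
  set L := ‖y 0‖ + 2 / a 0 * ‖z 0‖ with hLdef
  have hyL : ‖y t‖ ≤ L := by
    have := mul_nonneg hψt.le (norm_nonneg (z t))
    linarith
  have hzL : ‖z t‖ ≤ a t / 2 * L := by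
    have h1 : 2 / a t * ‖z t‖ ≤ L := by linarith [norm_nonneg (y t)]
    have h2 := mul_le_mul_of_nonneg_left h1 (by linarith : 0 ≤ a t / 2)
    have h3 : a t / 2 * (2 / a t * ‖z t‖) = ‖z t‖ := by
      have : a t ≠ 0 := by linarith
      field_simp
    linarith
  refine ⟨L, by positivity, hyL, ?_, ?_⟩
  · have hat : Real.exp (Real.exp t) + 2 * Real.exp (-t) * r ^ 2 = a t := by rw [ha]
    rw [hat]
    have h1 : deriv y t = z t - ((r ^ 2 / a t : ℝ) : ℂ) * y t := by rw [hz]; ring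
    have h2 : ‖deriv y t‖ ≤ ‖z t‖ + r ^ 2 / a t * ‖y t‖ := by
      rw [h1]
      refine (norm_sub_le _ _).trans (le_of_eq ?_)
      rw [norm_mul, Complex.norm_real, Real.norm_eq_abs,
        abs_of_nonneg (div_nonneg (sq_nonneg r) (by linarith))]
    have h3 : r ^ 2 / a t ≤ a t / 2 := by
      rw [div_le_iff₀ (by linarith)]; nlinarith
    have h4 : r ^ 2 / a t * ‖y t‖ ≤ a t / 2 * L :=
      mul_le_mul h3 hyL (norm_nonneg _) (by linarith)
    linarith
  · have h2 : ‖z 0‖ ≤ ‖deriv y 0‖ + r ^ 2 / a 0 * ‖y 0‖ := by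
      rw [hz]
      refine (norm_add_le _ _).trans (le_of_eq ?_)
      rw [norm_mul, Complex.norm_real, Real.norm_eq_abs,
        abs_of_nonneg (div_nonneg (sq_nonneg r) (by linarith))]
    have ha0 : 2 * r ^ 2 ≤ a 0 := by
      rw [ha]; simp; positivity
    have h3 : r ^ 2 * (2 / a 0) ≤ 1 := by
      rw [← mul_div_assoc, div_le_one (by linarith)]; linarith
    have h5 : 2 / a 0 * (r ^ 2 / a 0) ≤ 1 := by
      rw [div_mul_div_comm, div_le_one (by nlinarith)]; nlinarith
    have h6 : 2 / a 0 * ‖z 0‖ ≤ 2 / a 0 * ‖deriv y 0‖ + ‖y 0‖ := by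
      have := mul_le_mul_of_nonneg_left h2 hψ0.le
      have := mul_le_mul_of_nonneg_right h5 (norm_nonneg (y 0))
      nlinarith
    have h7 : r ^ 2 * L ≤ r ^ 2 * (2 * ‖y 0‖ + 2 / a 0 * ‖deriv y 0‖) :=
      mul_le_mul_of_nonneg_left (by linarith) (sq_nonneg r)
    have h8 := mul_le_mul_of_nonneg_right h3 (norm_nonneg (deriv y 0))
    nlinarith

/-- Weighted square of the bound `L`. -/
lemma od_weight (σ r L p q : ℝ) (hσ : 2 ≤ σ) (hr : 0 ≤ r) (hL : 0 ≤ L)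
    (h : r ^ 2 * L ≤ 2 * (r ^ 2 * p) + q) :
    r ^ (2 * σ) * L ^ 2 ≤ 8 * (r ^ (2 * σ) * p ^ 2 + r ^ (2 * (σ - 2)) * q ^ 2) ∧
    r ^ (2 * σ) * (r ^ 2 * L) ^ 2 ≤
      8 * (r ^ (2 * (σ + 2)) * p ^ 2 + r ^ (2 * σ) * q ^ 2) := by
  have hsq : (r ^ 2 * L) ^ 2 ≤ 8 * (r ^ 2 * p) ^ 2 + 8 * q ^ 2 := by
    have h0 : 0 ≤ r ^ 2 * L := by positivity
    have := pow_le_pow_left₀ h0 h 2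
    nlinarith [sq_nonneg (2 * (r ^ 2 * p) - q), sq_nonneg q]
  rcases hr.eq_or_lt with h0 | h0
  · subst h0
    have e1 : (0:ℝ) ^ (2 * σ) = 0 := Real.zero_rpow (by linarith)
    rw [e1]
    constructor
    · have : (0:ℝ) ≤ (0:ℝ) ^ (2 * (σ - 2)) := Real.rpow_nonneg le_rfl _
      simp; positivity
    · have : (0:ℝ) ≤ (0:ℝ) ^ (2 * (σ + 2)) := Real.rpow_nonneg le_rfl _
      simp; positivity
  · have e1 : r ^ (2 * σ) = r ^ (2 * (σ - 2)) * r ^ 4 := by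
      rw [← Real.rpow_natCast r 4, ← Real.rpow_add h0]; congr 1; push_cast; ring
    have e2 : r ^ (2 * (σ + 2)) = r ^ (2 * σ) * r ^ 4 := by
      rw [← Real.rpow_natCast r 4, ← Real.rpow_add h0]; congr 1; push_cast; ring
    constructor
    · have := mul_le_mul_of_nonneg_left hsq (Real.rpow_nonneg hr (2 * (σ - 2)))
      rw [e1]
      nlinarith
    · have := mul_le_mul_of_nonneg_left hsq (Real.rpow_nonneg hr (2 * σ))
      rw [e2]
      nlinarith

lemma od_sqrt_add (a b : ℝ) : Real.sqrt (a + b) ≤ Real.sqrt a + Real.sqrt b := by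
  have ha := Real.sqrt_nonneg a
  have hb := Real.sqrt_nonneg b
  apply Real.sqrt_le_iff.mpr
  refine ⟨by positivity, ?_⟩
  have h1 : a ≤ Real.sqrt a ^ 2 := by
    rcases le_total 0 a with h | h
    · rw [Real.sq_sqrt h]
    · exact h.trans (sq_nonneg _)
  have h2 : b ≤ Real.sqrt b ^ 2 := by
    rcases le_total 0 b with h | h
    · rw [Real.sq_sqrt h]
    · exact h.trans (sq_nonneg _)
  nlinarith [mul_nonneg ha hb]

/-- Theorem 5.4 of the paper: the uniformly elliptic over-damping model with
`b(t) = e^(eᵗ)` and `g(t) = 2e^(-t)`, for which `b(t)g(t) ≥ 2`. -/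
theorem overdamping_model_three_estimates (n : ℕ) (hn : 1 ≤ n) :
    ∀ σ : ℝ, 2 ≤ σ →
      ∃ C : ℝ, 0 < C ∧
        ∀ (uh : ℝ → EuclideanSpace ℝ (Fin n) → ℂ) (u₀ u₁ : EuclideanSpace ℝ (Fin n) → ℂ),
          Measurable (fun p : ℝ × EuclideanSpace ℝ (Fin n) => uh p.1 p.2) →
          (∀ ξ : EuclideanSpace ℝ (Fin n), ContDiff ℝ 2 (fun s => uh s ξ)) →
          (∀ (ξ : EuclideanSpace ℝ (Fin n)) (t : ℝ), 0 ≤ t →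
            deriv (deriv (fun s => uh s ξ)) t + ((‖ξ‖ ^ 2 : ℝ) : ℂ) * uh t ξ +
              ((Real.exp (Real.exp t) + 2 * Real.exp (-t) * ‖ξ‖ ^ 2 : ℝ) : ℂ) * deriv (fun s => uh s ξ) t = 0) →
          (∀ ξ : EuclideanSpace ℝ (Fin n), uh 0 ξ = u₀ ξ) →
          (∀ ξ : EuclideanSpace ℝ (Fin n), deriv (fun s => uh s ξ) 0 = u₁ ξ) →
          ∀ t : ℝ, 0 ≤ t →
            Integrable (fun ξ : EuclideanSpace ℝ (Fin n) => ‖ξ‖ ^ (2 * σ) * ‖u₀ ξ‖ ^ 2) →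
            Integrable (fun ξ : EuclideanSpace ℝ (Fin n) => ‖ξ‖ ^ (2 * (σ - 2)) * ‖u₁ ξ‖ ^ 2) →
            Integrable (fun ξ : EuclideanSpace ℝ (Fin n) => ‖ξ‖ ^ (2 * (σ + 2)) * ‖u₀ ξ‖ ^ 2) →
            Integrable (fun ξ : EuclideanSpace ℝ (Fin n) => ‖ξ‖ ^ (2 * σ) * ‖u₁ ξ‖ ^ 2) →
            Real.sqrt (∫ ξ : EuclideanSpace ℝ (Fin n), ‖ξ‖ ^ (2 * σ) * ‖uh t ξ‖ ^ 2) ≤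
                C * (Real.sqrt (∫ ξ : EuclideanSpace ℝ (Fin n), ‖ξ‖ ^ (2 * σ) * ‖u₀ ξ‖ ^ 2) + Real.sqrt (∫ ξ : EuclideanSpace ℝ (Fin n), ‖ξ‖ ^ (2 * (σ - 2)) * ‖u₁ ξ‖ ^ 2)) ∧
              Real.sqrt (∫ ξ : EuclideanSpace ℝ (Fin n), ‖ξ‖ ^ (2 * σ) * ‖deriv (fun s => uh s ξ) t‖ ^ 2) ≤
                C * Real.exp (Real.exp t) *
                    (Real.sqrt (∫ ξ : EuclideanSpace ℝ (Fin n), ‖ξ‖ ^ (2 * σ) * ‖u₀ ξ‖ ^ 2) + Real.sqrt (∫ ξ : EuclideanSpace ℝ (Fin n), ‖ξ‖ ^ (2 * (σ - 2)) * ‖u₁ ξ‖ ^ 2)) +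
                  C * (2 * Real.exp (-t)) *
                    (Real.sqrt (∫ ξ : EuclideanSpace ℝ (Fin n), ‖ξ‖ ^ (2 * (σ + 2)) * ‖u₀ ξ‖ ^ 2) + Real.sqrt (∫ ξ : EuclideanSpace ℝ (Fin n), ‖ξ‖ ^ (2 * σ) * ‖u₁ ξ‖ ^ 2)) := by
  intro σ hσ
  refine ⟨4, by norm_num, ?_⟩
  intro uh u₀ u₁ _ hC hode h0 h1 t ht I1 I2 I3 I4
  have hpt : ∀ ξ : EuclideanSpace ℝ (Fin n),
      ‖ξ‖ ^ (2 * σ) * ‖uh t ξ‖ ^ 2 ≤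
        8 * (‖ξ‖ ^ (2 * σ) * ‖u₀ ξ‖ ^ 2 + ‖ξ‖ ^ (2 * (σ - 2)) * ‖u₁ ξ‖ ^ 2) ∧
      ‖ξ‖ ^ (2 * σ) * ‖deriv (fun s => uh s ξ) t‖ ^ 2 ≤
        16 * Real.exp (Real.exp t) ^ 2 *
          (‖ξ‖ ^ (2 * σ) * ‖u₀ ξ‖ ^ 2 + ‖ξ‖ ^ (2 * (σ - 2)) * ‖u₁ ξ‖ ^ 2) +
        16 * (2 * Real.exp (-t)) ^ 2 *
          (‖ξ‖ ^ (2 * (σ + 2)) * ‖u₀ ξ‖ ^ 2 + ‖ξ‖ ^ (2 * σ) * ‖u₁ ξ‖ ^ 2) := by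
    intro ξ
    obtain ⟨L, hL0, hL1, hL2, hL3⟩ := od_pointwise (fun s => uh s ξ) ‖ξ‖ (hC ξ) (hode ξ) t ht
    rw [h1 ξ] at hL3
    simp only [h0 ξ] at hL1 hL3
    obtain ⟨w1, w2⟩ := od_weight σ ‖ξ‖ L _ _ hσ (norm_nonneg _) hL0 hL3
    have hw : 0 ≤ ‖ξ‖ ^ (2 * σ) := Real.rpow_nonneg (norm_nonneg _) _
    constructor
    · exact (mul_le_mul_of_nonneg_left (pow_le_pow_left₀ (norm_nonneg _) hL1 2) hw).trans w1
    · set B := Real.exp (Real.exp t)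
      set G := 2 * Real.exp (-t)
      have s1 := mul_le_mul_of_nonneg_left (pow_le_pow_left₀ (norm_nonneg _) hL2 2) hw
      have s2 : ((B + G * ‖ξ‖ ^ 2) * L) ^ 2 ≤ 2 * B ^ 2 * L ^ 2 + 2 * G ^ 2 * (‖ξ‖ ^ 2 * L) ^ 2 := by
        nlinarith [sq_nonneg (B * L - G * ‖ξ‖ ^ 2 * L)]
      have s3 := mul_le_mul_of_nonneg_left s2 hw
      have s4 := mul_le_mul_of_nonneg_left w1 (by positivity : 0 ≤ 2 * B ^ 2)
      have s5 := mul_le_mul_of_nonneg_left w2 (by positivity : 0 ≤ 2 * G ^ 2)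
      refine s1.trans (s3.trans ?_)
      linarith
  have hnn : ∀ (s : ℝ) (f : EuclideanSpace ℝ (Fin n) → ℂ) (ξ : EuclideanSpace ℝ (Fin n)),
      0 ≤ ‖ξ‖ ^ s * ‖f ξ‖ ^ 2 := fun s f ξ =>
    mul_nonneg (Real.rpow_nonneg (norm_nonneg _) _) (sq_nonneg _)
  have A1 := integral_mono_of_nonneg (Eventually.of_forall (hnn (2 * σ) (uh t)))
    ((I1.add I2).const_mul 8) (Eventually.of_forall fun ξ => (hpt ξ).1)
  have A2 := integral_mono_of_nonneg
    (Eventually.of_forall (hnn (2 * σ) (fun ξ => deriv (fun s => uh s ξ) t)))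
    (((I1.add I2).const_mul (16 * Real.exp (Real.exp t) ^ 2)).add
      ((I3.add I4).const_mul (16 * (2 * Real.exp (-t)) ^ 2)))
    (Eventually.of_forall fun ξ => (hpt ξ).2)
  rw [integral_const_mul, integral_add' I1 I2] at A1
  rw [integral_add' ((I1.add I2).const_mul _) ((I3.add I4).const_mul _), integral_const_mul,
    integral_const_mul, integral_add' I1 I2, integral_add' I3 I4] at A2
  constructor
  · refine (Real.sqrt_le_sqrt A1).trans ?_
    rw [Real.sqrt_mul (by norm_num)]
    refine mul_le_mul ?_ (od_sqrt_add _ _) (Real.sqrt_nonneg _) (by norm_num)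
    rw [Real.sqrt_le_left (by norm_num)]; norm_num
  · refine (Real.sqrt_le_sqrt A2).trans ((od_sqrt_add _ _).trans ?_)
    have q1 : 16 * Real.exp (Real.exp t) ^ 2 = (4 * Real.exp (Real.exp t)) ^ 2 := by ring
    have q2 : 16 * (2 * Real.exp (-t)) ^ 2 = (4 * (2 * Real.exp (-t))) ^ 2 := by ring
    rw [q1, q2, Real.sqrt_mul (sq_nonneg _), Real.sqrt_mul (sq_nonneg _),
      Real.sqrt_sq (by positivity), Real.sqrt_sq (by positivity)]
    exact add_le_add (mul_le_mul_of_nonneg_left (od_sqrt_add _ _) (by positivity))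
      (mul_le_mul_of_nonneg_left (od_sqrt_add _ _) (by positivity))
end
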